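/- For every integer u with -18 ≤ u ≤ -2 and every integer n ≥ 1, the generalised Laguerre polynomial L_n^{(u+1/2)}(x) is irreducible over ℚ. -/

import Mathlib

open Polynomial Finset

/-- The generalised Laguerre polynomial `L_n^{(α)}(x)` with `α = u + 1/2`, as a polynomial
over `ℚ`:  `L_n^{(α)}(x) = (-1)^n ∑_{j=0}^n C(n+α, n-j) (-x)^j / j!`, where
`C(n+α, n-j) = (∏_{i=j+1}^n (α+i))/(n-j)!`. -/
noncomputable def laguerre (n : ℕ) (u : ℤ) : Polynomial ℚ :=
  (-1 : ℚ) ^ n •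
    ∑ j ∈ Finset.range (n + 1),
      Polynomial.C ((∏ i ∈ Finset.Icc (j + 1) n, ((u : ℚ) + 1 / 2 + (i : ℚ))) /
          ((Nat.factorial (n - j) : ℚ) * (Nat.factorial j : ℚ))) * (-Polynomial.X) ^ j

/-!
Up to a constant and the substitution of `-x / 2` for `x`, the polynomial `L_n^{(u + 1/2)}` is the
monic integral polynomial with coefficients `C(n, j) ∏_{j < i ≤ n} (2 i + 2 u + 1)`. Suppose that it
has a factor of degree `k ≤ n / 2` with constant coefficient `z`, and write `U = -u`. By Newton
polygons (Dumas, Coleman, Filaseta), every odd prime dividing one of the numbers `n - l` or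
`2 (n - l) + 2 u + 1` with `l < k` divides `z`; on the other hand, the primes dividing `z` are small
in terms of `U` and `k`, and so are their exponents.

For `k ≥ 17` this is contradictory, since by arguments of Erdős and Chebyshev a product of `k`
consecutive large odd numbers has a large prime factor. For `3 ≤ k ≤ 16`, if few primes divide `z`,
then all of these numbers are composed of few primes, which bounds `n`, and the finitely many
remaining `n` are excluded one by one. If many primes divide `z`, then only finitely many values of
`z` remain. They are excluded modulo small primes `q` not dividing `z`: by the three-term
recurrence, the reduction of the polynomial modulo `q` is a power of `X` times a polynomial that
depends only on `n` modulo `q`.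

For `k = 1` this leaves only the root `2 U - 3`, where the recurrence shows the polynomial to be
positive. For `k = 2` it leaves a few `z = 3 s t` for which `n` is congruent to `2` modulo suitable
primes; as the primes dividing `n (n - 1)` are known, `n` is then an odd power of `2` or
`n - 1` is a square, or both, which is impossible modulo `3` or `4`.
-/

/-! ### Newton polygons -/

section NewtonPolygon

/-- The value at the point `(j, v_p(f_j))` of the linear form of slope `-a / b` whose minima
cut out the edges of the `p`-adic Newton polygon of `f`. It is junk where `f_j = 0`. -/
def newtonWeight (p a b : ℕ) (f : ℤ[X]) (j : ℕ) : ℕ :=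
  b * padicValInt p (f.coeff j) + a * j

/-- The edge (or vertex, if `i = l`) of slope `-a / b` of the `p`-adic Newton polygon of `f`:
the least weight is `w`, and it is first attained at `i` and last attained at `l`. -/
structure NewtonEdge (p a b : ℕ) (f : ℤ[X]) (w i l : ℕ) : Prop where
  le_weight : ∀ j, f.coeff j ≠ 0 → w ≤ newtonWeight p a b f j
  coeff_left : f.coeff i ≠ 0
  weight_left : newtonWeight p a b f i = w
  coeff_right : f.coeff l ≠ 0
  weight_right : newtonWeight p a b f l = w
  lt_of_lt_left : ∀ j, f.coeff j ≠ 0 → j < i → w < newtonWeight p a b f j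
  lt_of_right_lt : ∀ j, f.coeff j ≠ 0 → l < j → w < newtonWeight p a b f j

variable {p a b : ℕ} {f g h : ℤ[X]}

theorem NewtonEdge.exists (p a b : ℕ) (hf : f ≠ 0) : ∃ w i l, NewtonEdge p a b f w i l := by
  obtain ⟨j₀, hj₀, hmin⟩ := f.support.exists_min_image (newtonWeight p a b f) (by simpa using hf)
  set w := newtonWeight p a b f j₀ with hw
  have hne : {j ∈ f.support | newtonWeight p a b f j = w}.Nonempty :=
    ⟨j₀, mem_filter.2 ⟨hj₀, hw.symm⟩⟩
  have hleft := mem_filter.1 (min'_mem _ hne)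
  have hright := mem_filter.1 (max'_mem _ hne)
  have hmin' : ∀ j, f.coeff j ≠ 0 → w ≤ newtonWeight p a b f j := fun j hj =>
    hmin j (mem_support_iff.2 hj)
  refine ⟨w, _, _, hmin', mem_support_iff.1 hleft.1, hleft.2, mem_support_iff.1 hright.1,
    hright.2, fun j hj hlt => (hmin' j hj).lt_of_ne fun he => ?_,
    fun j hj hlt => (hmin' j hj).lt_of_ne fun he => ?_⟩
  · exact (min'_le _ j (mem_filter.2 ⟨mem_support_iff.2 hj, he.symm⟩)).not_gt hlt
  · exact (le_max' _ j (mem_filter.2 ⟨mem_support_iff.2 hj, he.symm⟩)).not_gt hlt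

namespace NewtonEdge

theorem left_le_right {w i l : ℕ} (E : NewtonEdge p a b f w i l) : i ≤ l := by
  by_contra! hlt
  exact (E.lt_of_right_lt i E.coeff_left hlt).ne' E.weight_left

theorem unique {w i l w' i' l' : ℕ} (E : NewtonEdge p a b f w i l)
    (E' : NewtonEdge p a b f w' i' l') : w = w' ∧ i = i' ∧ l = l' := by
  obtain rfl : w = w' := le_antisymm (E'.weight_left ▸ E.le_weight i' E'.coeff_left)
    (E.weight_left ▸ E'.le_weight i E.coeff_left)
  refine ⟨rfl, le_antisymm ?_ ?_, le_antisymm ?_ ?_⟩ <;> by_contra! hlt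
  · exact (E.lt_of_lt_left i' E'.coeff_left hlt).ne' E'.weight_left
  · exact (E'.lt_of_lt_left i E.coeff_left hlt).ne' E.weight_left
  · exact (E'.lt_of_right_lt l E.coeff_right hlt).ne' E.weight_right
  · exact (E.lt_of_right_lt l' E'.coeff_right hlt).ne' E'.weight_right

theorem right_le_natDegree {w i l : ℕ} (E : NewtonEdge p a b f w i l) : l ≤ f.natDegree :=
  le_natDegree_of_ne_zero E.coeff_right

theorem dvd_sub {w i l : ℕ} (E : NewtonEdge p a b f w i l) (hab : a.Coprime b) : b ∣ l - i := by
  refine hab.symm.dvd_of_dvd_mul_left (?_ : b ∣ a * (l - i))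
  have hw : b * padicValInt p (f.coeff i) + a * i = b * padicValInt p (f.coeff l) + a * l :=
    E.weight_left.trans E.weight_right.symm
  have hle : a * i ≤ a * l := Nat.mul_le_mul_left a E.left_le_right
  have hsub : a * (l - i) = b * padicValInt p (f.coeff i) - b * padicValInt p (f.coeff l) := by
    rw [Nat.mul_sub]; omega
  rw [hsub, ← Nat.mul_sub]
  exact dvd_mul_right _ _

end NewtonEdge

variable [hp : Fact p.Prime]

theorem le_mul_padicValInt_sum {ι : Type*} {s : Finset ι} {x : ι → ℤ} {b c t : ℕ}
    (hx : ∀ i ∈ s, x i ≠ 0 → t ≤ b * padicValInt p (x i) + c) (h0 : ∑ i ∈ s, x i ≠ 0) :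
    t ≤ b * padicValInt p (∑ i ∈ s, x i) + c := by
  by_contra! hlt
  have hdvd : (p : ℤ) ^ (padicValInt p (∑ i ∈ s, x i) + 1) ∣ ∑ i ∈ s, x i := by
    refine dvd_sum fun i hi => (padicValInt_dvd_iff _ _).2 (or_iff_not_imp_left.2 fun hxi => ?_)
    have hlt' := hlt.trans_le (hx i hi hxi)
    exact Nat.lt_of_mul_lt_mul_left (a := b) (by omega)
  rcases (padicValInt_dvd_iff _ _).1 hdvd with h | h
  · exact h0 h
  · omega

theorem padicValInt_add_of_lt {x y : ℤ} (hx : x ≠ 0)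
    (hy : y ≠ 0 → padicValInt p x < padicValInt p y) :
    x + y ≠ 0 ∧ padicValInt p (x + y) = padicValInt p x := by
  have hdvd_y : (p : ℤ) ^ (padicValInt p x + 1) ∣ y :=
    (padicValInt_dvd_iff _ _).2 (or_iff_not_imp_left.2 hy)
  have hndvd : ¬ (p : ℤ) ^ (padicValInt p x + 1) ∣ x + y := by
    rw [dvd_add_left hdvd_y, padicValInt_dvd_iff]
    simpa using hx
  have hdvd : (p : ℤ) ^ padicValInt p x ∣ x + y :=
    dvd_add (padicValInt_dvd x) ((pow_dvd_pow _ (Nat.le_succ _)).trans hdvd_y)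
  rw [padicValInt_dvd_iff] at hndvd hdvd
  push Not at hndvd
  exact ⟨hndvd.1, le_antisymm (Nat.lt_succ_iff.1 hndvd.2) (hdvd.resolve_left hndvd.1)⟩

theorem mul_padicValInt_mul_coeff {x y m : ℕ} (hxy : x + y = m) (hg : g.coeff x ≠ 0)
    (hh : h.coeff y ≠ 0) :
    b * padicValInt p (g.coeff x * h.coeff y) + a * m =
      newtonWeight p a b g x + newtonWeight p a b h y := by
  rw [padicValInt.mul hg hh, ← hxy, newtonWeight, newtonWeight]
  ring

theorem le_newtonWeight_mul {m t : ℕ}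
    (H : ∀ x y, x + y = m → g.coeff x ≠ 0 → h.coeff y ≠ 0 →
      t ≤ newtonWeight p a b g x + newtonWeight p a b h y)
    (hm : (g * h).coeff m ≠ 0) : t ≤ newtonWeight p a b (g * h) m := by
  rw [newtonWeight, coeff_mul]
  rw [coeff_mul] at hm
  refine le_mul_padicValInt_sum (fun x hx hne => ?_) hm
  have hsum := HasAntidiagonal.mem_antidiagonal.1 hx
  rw [mul_padicValInt_mul_coeff hsum (left_ne_zero_of_mul hne) (right_ne_zero_of_mul hne)]
  exact H _ _ hsum (left_ne_zero_of_mul hne) (right_ne_zero_of_mul hne)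

theorem newtonWeight_mul_eq {x₀ y₀ : ℕ} (hg : g.coeff x₀ ≠ 0) (hh : h.coeff y₀ ≠ 0)
    (H : ∀ x y, x + y = x₀ + y₀ → x ≠ x₀ → g.coeff x ≠ 0 → h.coeff y ≠ 0 →
      newtonWeight p a b g x₀ + newtonWeight p a b h y₀ <
        newtonWeight p a b g x + newtonWeight p a b h y) :
    (g * h).coeff (x₀ + y₀) ≠ 0 ∧
      newtonWeight p a b (g * h) (x₀ + y₀) =
        newtonWeight p a b g x₀ + newtonWeight p a b h y₀ := by
  have hmem : (x₀, y₀) ∈ antidiagonal (x₀ + y₀) := by simp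
  set rest := ∑ x ∈ (antidiagonal (x₀ + y₀)).erase (x₀, y₀), g.coeff x.1 * h.coeff x.2 with hrest
  have hcoeff : (g * h).coeff (x₀ + y₀) = g.coeff x₀ * h.coeff y₀ + rest := by
    rw [coeff_mul, ← add_sum_erase _ _ hmem]
  have hmain := mul_padicValInt_mul_coeff (p := p) (a := a) (b := b) rfl hg hh
  have hlt : rest ≠ 0 → padicValInt p (g.coeff x₀ * h.coeff y₀) < padicValInt p rest := by
    intro hne
    have hle := le_mul_padicValInt_sum (p := p) (b := b) (c := a * (x₀ + y₀))
      (t := newtonWeight p a b g x₀ + newtonWeight p a b h y₀ + 1) (fun x hx hx0 => ?_) hne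
    · rw [← hrest] at hle
      exact Nat.lt_of_mul_lt_mul_left (a := b) (by omega)
    obtain ⟨hxne, hx⟩ := mem_erase.1 hx
    rw [HasAntidiagonal.mem_antidiagonal] at hx
    rw [mul_padicValInt_mul_coeff hx (left_ne_zero_of_mul hx0) (right_ne_zero_of_mul hx0)]
    exact H _ _ hx (fun he => hxne (Prod.ext he (by simp only; omega)))
      (left_ne_zero_of_mul hx0) (right_ne_zero_of_mul hx0)
  have hadd := padicValInt_add_of_lt (mul_ne_zero hg hh) hlt
  rw [← hcoeff] at hadd
  exact ⟨hadd.1, by rw [← hmain, newtonWeight, hadd.2]⟩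

theorem NewtonEdge.mul {w₁ i₁ l₁ w₂ i₂ l₂ : ℕ} (Eg : NewtonEdge p a b g w₁ i₁ l₁)
    (Eh : NewtonEdge p a b h w₂ i₂ l₂) :
    NewtonEdge p a b (g * h) (w₁ + w₂) (i₁ + i₂) (l₁ + l₂) := by
  have lt_left : ∀ x y, x < i₁ ∨ y < i₂ → g.coeff x ≠ 0 → h.coeff y ≠ 0 →
      w₁ + w₂ < newtonWeight p a b g x + newtonWeight p a b h y := by
    rintro x y (hx | hy) hgx hhy
    · exact add_lt_add_of_lt_of_le (Eg.lt_of_lt_left x hgx hx) (Eh.le_weight y hhy)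
    · exact add_lt_add_of_le_of_lt (Eg.le_weight x hgx) (Eh.lt_of_lt_left y hhy hy)
  have lt_right : ∀ x y, l₁ < x ∨ l₂ < y → g.coeff x ≠ 0 → h.coeff y ≠ 0 →
      w₁ + w₂ < newtonWeight p a b g x + newtonWeight p a b h y := by
    rintro x y (hx | hy) hgx hhy
    · exact add_lt_add_of_lt_of_le (Eg.lt_of_right_lt x hgx hx) (Eh.le_weight y hhy)
    · exact add_lt_add_of_le_of_lt (Eg.le_weight x hgx) (Eh.lt_of_right_lt y hhy hy)
  have hleft := newtonWeight_mul_eq (p := p) (a := a) (b := b) Eg.coeff_left Eh.coeff_left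
    fun x y hxy hx hgx hhy => by
      rw [Eg.weight_left, Eh.weight_left]
      exact lt_left x y (by omega) hgx hhy
  have hright := newtonWeight_mul_eq (p := p) (a := a) (b := b) Eg.coeff_right Eh.coeff_right
    fun x y hxy hx hgx hhy => by
      rw [Eg.weight_right, Eh.weight_right]
      exact lt_right x y (by omega) hgx hhy
  rw [Eg.weight_left, Eh.weight_left] at hleft
  rw [Eg.weight_right, Eh.weight_right] at hright
  refine ⟨fun j hj => ?_, hleft.1, hleft.2, hright.1, hright.2, fun j hj hlt => ?_,
    fun j hj hlt => ?_⟩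
  · exact le_newtonWeight_mul (fun x y _ hx hy => add_le_add (Eg.le_weight x hx)
      (Eh.le_weight y hy)) hj
  · exact le_newtonWeight_mul (t := w₁ + w₂ + 1)
      (fun x y hxy hx hy => lt_left x y (by omega) hx hy) hj
  · exact le_newtonWeight_mul (t := w₁ + w₂ + 1)
      (fun x y hxy hx hy => lt_right x y (by omega) hx hy) hj

theorem mul_padicValInt_coeff_zero_le (hg : g.Monic) (hg0 : g.coeff 0 ≠ 0) (hh0 : h.coeff 0 ≠ 0)
    {A : ℕ} (H : ∀ j, (g * h).coeff j ≠ 0 →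
      b * padicValInt p ((g * h).coeff 0) ≤ A + newtonWeight p a b (g * h) j) :
    b * padicValInt p (g.coeff 0) ≤ A + a * g.natDegree := by
  obtain ⟨w₁, i₁, l₁, Eg⟩ := NewtonEdge.exists p a b hg.ne_zero
  obtain ⟨w₂, i₂, l₂, Eh⟩ := NewtonEdge.exists p a b (f := h) (by rintro rfl; simp at hh0)
  have E := Eg.mul Eh
  have htop := Eg.le_weight g.natDegree (by simp [hg.coeff_natDegree])
  have hbot := Eh.le_weight 0 hh0
  have hprod := H _ E.coeff_left
  rw [E.weight_left, mul_coeff_zero, padicValInt.mul hg0 hh0, mul_add] at hprod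
  simp only [newtonWeight, hg.coeff_natDegree, padicValInt.one, mul_zero] at htop hbot
  omega

theorem not_dvd_coeff_zero_of_lt (hg : g.Monic) (hh : h.Monic) (hh0 : h.coeff 0 ≠ 0)
    (hg0 : g.coeff 0 ≠ 0) (hdeg : 1 ≤ g.natDegree)
    (H : ∀ j, 1 ≤ j → (g * h).coeff j ≠ 0 →
      g.natDegree * padicValInt p ((g * h).coeff 0) <
        j + g.natDegree * padicValInt p ((g * h).coeff j)) :
    ¬ (p : ℤ) ∣ g.coeff 0 := by
  set k := g.natDegree with hk
  obtain ⟨m, hm⟩ : ∃ m, (g * h).natDegree = m + 1 :=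
    ⟨_, (Nat.succ_pred (by rw [hg.natDegree_mul hh]; omega)).symm⟩
  -- slope `-m / (k (m + 1))`, slightly flatter than `-1 / k`
  have hle := mul_padicValInt_coeff_zero_le (p := p) (a := m) (b := k * (m + 1)) (A := 0) hg hg0 hh0
    (fun j hj => by
      rcases Nat.eq_zero_or_pos j with rfl | hj0
      · simp [newtonWeight]
      · have hjm : j ≤ m + 1 := hm ▸ le_natDegree_of_ne_zero hj
        have hlt := Nat.mul_le_mul_left (m + 1) (Nat.succ_le_of_lt (H j hj0 hj))
        rw [newtonWeight]
        nlinarith)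
  intro hdvd
  have hval : 1 ≤ padicValInt p (g.coeff 0) :=
    ((padicValInt_dvd_iff 1 _).1 (by simpa using hdvd)).resolve_left hg0
  have hmul := Nat.mul_le_mul_left (k * (m + 1)) hval
  rw [← hk] at hle
  nlinarith

theorem dvd_coeff_zero_of_dvd_coeff_mul (hh : h.Monic)
    (H : ∀ j ≤ h.natDegree, (p : ℤ) ∣ (g * h).coeff j) : (p : ℤ) ∣ g.coeff 0 := by
  by_contra hndvd
  let φ := Int.castRingHom (ZMod p)
  have hX : ¬ X ∣ g.map φ := by
    rwa [X_dvd_iff, coeff_map, eq_intCast, ZMod.intCast_zmod_eq_zero_iff_dvd]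
  have hpow : X ^ (h.natDegree + 1) ∣ g.map φ * h.map φ := by
    refine X_pow_dvd_iff.2 fun j hj => ?_
    rw [← Polynomial.map_mul, coeff_map, eq_intCast, ZMod.intCast_zmod_eq_zero_iff_dvd]
    exact H j (by omega)
  have hdeg := natDegree_le_of_dvd (prime_X.pow_dvd_of_dvd_mul_left _ hX hpow)
    (hh.map φ).ne_zero
  rw [natDegree_X_pow, hh.natDegree_map] at hdeg
  omega

theorem exists_natDegree_eq_of_newtonEdge {w i l : ℕ} (hg : g ≠ 0) (hh : h ≠ 0)
    (hab : a.Coprime b) (E : NewtonEdge p a b (g * h) w i l) :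
    ∃ x t z, x ≤ i ∧ b * t ≤ l - i ∧ z ≤ (g * h).natDegree - l ∧
      g.natDegree = x + b * t + z := by
  obtain ⟨w₁, i₁, l₁, Eg⟩ := NewtonEdge.exists p a b hg
  obtain ⟨w₂, i₂, l₂, Eh⟩ := NewtonEdge.exists p a b hh
  obtain ⟨-, rfl, rfl⟩ := E.unique (Eg.mul Eh)
  obtain ⟨t, ht⟩ := Eg.dvd_sub hab
  have hg_le := Eg.left_le_right
  have hh_le := Eh.left_le_right
  have hl₁ := Eg.right_le_natDegree
  have hl₂ := Eh.right_le_natDegree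
  rw [natDegree_mul hg hh]
  exact ⟨i₁, t, g.natDegree - l₁, by omega, by omega, by omega, by omega⟩

end NewtonPolygon

/-! ### The monic integral model -/

/-- The odd integer `2 (u + 1/2 + i)`. -/
def oddTerm (u : ℤ) (i : ℕ) : ℤ := 2 * (i : ℤ) + 2 * u + 1

/-- The coefficient of `x ^ j` in `model u n`. -/
def modelCoeff (u : ℤ) (n j : ℕ) : ℤ := (n.choose j : ℤ) * ∏ i ∈ Ioc j n, oddTerm u i

/-- The monic integral polynomial `n! 2 ^ n (-1) ^ n L_n^{(u + 1/2)}(-x / 2)`. -/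
noncomputable def model (u : ℤ) (n : ℕ) : ℤ[X] :=
  ∑ j ∈ range (n + 1), C (modelCoeff u n j) * X ^ j

section Model

variable {u : ℤ} {n j : ℕ}

theorem oddTerm_ne_zero (u : ℤ) (i : ℕ) : oddTerm u i ≠ 0 := by unfold oddTerm; omega

theorem not_two_dvd_oddTerm (u : ℤ) (i : ℕ) : ¬ (2 : ℤ) ∣ oddTerm u i := by unfold oddTerm; omega

theorem prod_oddTerm_ne_zero (u : ℤ) (s : Finset ℕ) : ∏ i ∈ s, oddTerm u i ≠ 0 :=
  prod_ne_zero_iff.2 fun i _ => oddTerm_ne_zero u i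

theorem modelCoeff_eq_zero_of_lt (h : n < j) : modelCoeff u n j = 0 := by
  simp [modelCoeff, Nat.choose_eq_zero_of_lt h]

theorem le_of_modelCoeff_ne_zero (h : modelCoeff u n j ≠ 0) : j ≤ n :=
  not_lt.1 fun hlt => h (modelCoeff_eq_zero_of_lt hlt)

theorem modelCoeff_self (u : ℤ) (n : ℕ) : modelCoeff u n n = 1 := by simp [modelCoeff]

theorem modelCoeff_ne_zero (h : j ≤ n) : modelCoeff u n j ≠ 0 :=
  mul_ne_zero (mod_cast (Nat.choose_pos h).ne') (prod_oddTerm_ne_zero u _)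

theorem coeff_model (u : ℤ) (n j : ℕ) : (model u n).coeff j = modelCoeff u n j := by
  simp only [model, finsetSum_coeff, coeff_C_mul, coeff_X_pow, mul_ite, mul_one, mul_zero,
    sum_ite_eq, mem_range, Nat.lt_succ_iff]
  split_ifs with h
  · rfl
  · rw [modelCoeff_eq_zero_of_lt (not_le.1 h)]

theorem natDegree_model (u : ℤ) (n : ℕ) : (model u n).natDegree = n := by
  refine natDegree_eq_of_le_of_coeff_ne_zero
    (natDegree_le_iff_coeff_eq_zero.2 fun j hj => ?_) ?_
  · rw [coeff_model, modelCoeff_eq_zero_of_lt hj]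
  · rw [coeff_model, modelCoeff_self]; exact one_ne_zero

theorem monic_model (u : ℤ) (n : ℕ) : (model u n).Monic := by
  rw [Monic, leadingCoeff, natDegree_model, coeff_model, modelCoeff_self]

theorem model_zero (u : ℤ) : model u 0 = 1 := by simp [model, modelCoeff]

theorem model_one (u : ℤ) : model u 1 = C (oddTerm u 1) + X := by
  simp [model, modelCoeff, sum_range_succ]

theorem prod_Ioc_oddTerm_eq_mul (u : ℤ) (h : j < n) :
    ∏ i ∈ Ioc j n, oddTerm u i = oddTerm u (j + 1) * ∏ i ∈ Ioc (j + 1) n, oddTerm u i := by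
  rw [mul_prod_Ioc_eq_prod_Icc (show j + 1 ≤ n from h), Icc_add_one_left_eq_Ioc]

theorem modelCoeff_recurrence_of_lt (u : ℤ) (h : j < n) :
    modelCoeff u (n + 2) (j + 1) =
      (4 * (n + 2) - 1 + 2 * u) * modelCoeff u (n + 1) (j + 1) + modelCoeff u (n + 1) j
        - 2 * (n + 1) * oddTerm u (n + 1) * modelCoeff u n (j + 1) := by
  unfold modelCoeff
  rw [prod_Ioc_succ_top (b := n + 1) (by omega), prod_Ioc_succ_top (b := n) (by omega),
    prod_Ioc_oddTerm_eq_mul u (n := n + 1) (j := j) (by omega), prod_Ioc_succ_top (by omega)]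
  generalize ∏ i ∈ Ioc (j + 1) n, oddTerm u i = P
  have pascal₂ : ((n + 2).choose (j + 1) : ℤ) = (n + 1).choose j + (n + 1).choose (j + 1) :=
    mod_cast Nat.choose_succ_succ (n + 1) j
  have pascal₁ : ((n + 1).choose (j + 1) : ℤ) = n.choose j + n.choose (j + 1) :=
    mod_cast Nat.choose_succ_succ n j
  have absorb : ((n : ℤ) + 1) * n.choose j = (n + 1).choose j * ((n : ℤ) + 1 - j) := by
    have := (Nat.add_one_mul_choose_eq n j).trans (Nat.choose_succ_right_eq (n + 1) j)
    zify [show j ≤ n + 1 by omega] at this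
    linarith
  rw [pascal₂]
  simp only [oddTerm, Nat.cast_add, Nat.cast_one]
  linear_combination
    (2 * (2 * ((n : ℤ) + 1) + 2 * u + 1) * P) * (-absorb - ((n : ℤ) + 1) * pascal₁)

theorem modelCoeff_succ_recurrence (u : ℤ) (n j : ℕ) :
    modelCoeff u (n + 2) (j + 1) =
      (4 * (n + 2) - 1 + 2 * u) * modelCoeff u (n + 1) (j + 1) + modelCoeff u (n + 1) j
        - 2 * (n + 1) * oddTerm u (n + 1) * modelCoeff u n (j + 1) := by
  rcases lt_or_ge j n with h | h
  · exact modelCoeff_recurrence_of_lt u h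
  rw [modelCoeff_eq_zero_of_lt (show n < j + 1 by omega)]
  obtain rfl | rfl | h : j = n ∨ j = n + 1 ∨ n + 1 < j := by omega
  · simp [modelCoeff, oddTerm]
    ring
  · simp [modelCoeff_self, modelCoeff_eq_zero_of_lt]
  · rw [modelCoeff_eq_zero_of_lt, modelCoeff_eq_zero_of_lt, modelCoeff_eq_zero_of_lt] <;> omega

theorem modelCoeff_zero_recurrence (u : ℤ) (n : ℕ) :
    modelCoeff u (n + 2) 0 =
      (4 * (n + 2) - 1 + 2 * u) * modelCoeff u (n + 1) 0
        - 2 * (n + 1) * oddTerm u (n + 1) * modelCoeff u n 0 := by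
  simp only [modelCoeff, Nat.choose_zero_right, prod_Ioc_succ_top (Nat.zero_le _), oddTerm]
  push_cast
  ring

theorem model_recurrence (u : ℤ) (n : ℕ) :
    model u (n + 2) = (C (4 * (n + 2) - 1 + 2 * u) + X) * model u (n + 1)
      - C (2 * (n + 1) * oddTerm u (n + 1)) * model u n := by
  ext j
  rw [coeff_sub, add_mul, coeff_add, coeff_C_mul, coeff_C_mul]
  rcases j with _ | j
  · simp only [coeff_X_mul_zero, coeff_model, modelCoeff_zero_recurrence, add_zero]
  · simp only [coeff_X_mul, coeff_model, modelCoeff_succ_recurrence]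

theorem cast_modelCoeff (u : ℤ) (n j : ℕ) :
    (modelCoeff u n j : ℚ) =
      n.choose j * (2 ^ (n - j) * ∏ i ∈ Ioc j n, ((u : ℚ) + 1 / 2 + i)) := by
  rw [← Nat.card_Ioc, ← prod_const, ← prod_mul_distrib, modelCoeff]
  push_cast
  congr 1
  refine prod_congr rfl fun i _ => ?_
  rw [oddTerm]
  push_cast
  ring

theorem laguerre_eq_model_comp (n : ℕ) (u : ℤ) :
    laguerre n u = C ((-1 : ℚ) ^ n / (n.factorial * 2 ^ n)) *
      ((model u n).map (algebraMap ℤ ℚ)).comp (C (-2) * X + C 0) := by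
  rw [laguerre, model, Polynomial.map_sum, Polynomial.sum_comp, smul_eq_C_mul, mul_sum, mul_sum]
  refine sum_congr rfl fun j hj => ?_
  have hjn : j ≤ n := Nat.lt_succ_iff.1 (mem_range.1 hj)
  have hscalar : (-1 : ℚ) ^ n * ((∏ i ∈ Icc (j + 1) n, ((u : ℚ) + 1 / 2 + i)) /
        ((n - j).factorial * j.factorial) * (-1) ^ j) =
      (-1 : ℚ) ^ n / (n.factorial * 2 ^ n) * (modelCoeff u n j * (-2) ^ j) := by
    have hpow : (2 : ℚ) ^ n = 2 ^ (n - j) * 2 ^ j := by rw [← pow_add, Nat.sub_add_cancel hjn]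
    have hneg : (-2 : ℚ) ^ j = (-1) ^ j * 2 ^ j := by rw [← mul_pow]; norm_num
    have := n.factorial_ne_zero
    have := j.factorial_ne_zero
    have := (n - j).factorial_ne_zero
    rw [cast_modelCoeff, Icc_add_one_left_eq_Ioc, Nat.cast_choose ℚ hjn, hpow, hneg]
    field_simp
  have hX : (-X : ℚ[X]) ^ j = C ((-1) ^ j) * X ^ j := by
    rw [show (-X : ℚ[X]) = C (-1) * X by simp, mul_pow, ← C_pow]
  simp only [Polynomial.map_mul, Polynomial.map_pow, map_X, map_C, mul_comp, C_comp, pow_comp,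
    X_comp, C_0, add_zero]
  rw [hX, mul_pow, ← C_pow]
  have hC := congrArg C hscalar
  simp only [C_mul, eq_intCast] at hC ⊢
  linear_combination X ^ j * hC

theorem laguerre_irreducible_of_model (h : Irreducible (model u n)) :
    Irreducible (laguerre n u) := by
  have hmap : Irreducible ((model u n).map (algebraMap ℤ ℚ)) :=
    ((monic_model u n).irreducible_iff_irreducible_map_fraction_map (K := ℚ)).1 h
  have hunit : IsUnit (C ((-1 : ℚ) ^ n / (n.factorial * 2 ^ n))) := by
    rw [isUnit_C, isUnit_iff_ne_zero]
    have := n.factorial_ne_zero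
    positivity
  have : Invertible (-2 : ℚ) := invertibleOfNonzero (by norm_num)
  have hcomp := (MulEquiv.irreducible_iff (algEquivCMulXAddC (-2 : ℚ) 0).toMulEquiv
    (x := (model u n).map (algebraMap ℤ ℚ))).2 hmap
  rw [laguerre_eq_model_comp, irreducible_isUnit_mul hunit]
  simpa [algEquivCMulXAddC, comp, aeval_def, eval₂_eq_eval_map] using hcomp

end Model

/-- A factorisation of `model u n` into monic integral polynomials, the first of degree `k`. -/
structure ModelFactorization (u : ℤ) (n k : ℕ) (g h : ℤ[X]) : Prop where
  monic_left : g.Monic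
  monic_right : h.Monic
  mul_eq : g * h = model u n
  natDegree_left : g.natDegree = k

theorem irreducible_model_of_forall_not_factorization {u : ℤ} {n : ℕ} (hn : 1 ≤ n)
    (H : ∀ k g h, 1 ≤ k → 2 * k ≤ n → ¬ ModelFactorization u n k g h) :
    Irreducible (model u n) := by
  refine ((monic_model u n).irreducible_iff_natDegree').2
    ⟨fun h => ?_, fun f g hf hg hfg hmem => ?_⟩
  · have := natDegree_model u n
    rw [h, natDegree_one] at this
    omega
  · rw [mem_Ioc, natDegree_model] at hmem
    exact H g.natDegree g f (by omega) (by omega) ⟨hg, hf, by rw [mul_comm, hfg], rfl⟩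

namespace ModelFactorization

variable {u : ℤ} {n k : ℕ} {g h : ℤ[X]}

theorem natDegree_right_add (F : ModelFactorization u n k g h) : h.natDegree + k = n := by
  rw [← natDegree_model u n, ← F.mul_eq, F.monic_left.natDegree_mul F.monic_right,
    F.natDegree_left, add_comm]

theorem coeff_mul (F : ModelFactorization u n k g h) (j : ℕ) :
    (g * h).coeff j = modelCoeff u n j := by
  rw [F.mul_eq, coeff_model]

theorem coeff_zero_mul (F : ModelFactorization u n k g h) :
    g.coeff 0 * h.coeff 0 = modelCoeff u n 0 := by
  rw [← mul_coeff_zero, F.coeff_mul]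

theorem coeff_zero_left_ne_zero (F : ModelFactorization u n k g h) : g.coeff 0 ≠ 0 :=
  left_ne_zero_of_mul (F.coeff_zero_mul ▸ modelCoeff_ne_zero (Nat.zero_le n))

theorem coeff_zero_right_ne_zero (F : ModelFactorization u n k g h) : h.coeff 0 ≠ 0 :=
  right_ne_zero_of_mul (F.coeff_zero_mul ▸ modelCoeff_ne_zero (Nat.zero_le n))

theorem not_two_dvd (F : ModelFactorization u n k g h) : ¬ (2 : ℤ) ∣ g.coeff 0 := by
  intro hdvd
  have hprod : (2 : ℤ) ∣ ∏ i ∈ Ioc 0 n, oddTerm u i := by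
    simpa [modelCoeff, F.coeff_zero_mul] using hdvd.mul_right (h.coeff 0)
  obtain ⟨i, -, hi⟩ := (Int.prime_two.dvd_finsetProd_iff _).1 hprod
  exact not_two_dvd_oddTerm u i hi

end ModelFactorization

/-! ### Valuations of products of odd numbers -/

/-- The `p`-adic valuation of the product `1 · 3 ⋯ (2 m - 1)` of the first `m` odd numbers. -/
def oddVal (p m : ℕ) : ℕ := ∑ i ∈ range m, padicValNat p (2 * i + 1)

/-- The `p`-adic valuation of `oddTerm u 1 * ⋯ * oddTerm u j`. -/
def termVal (u : ℤ) (p j : ℕ) : ℕ := ∑ i ∈ range j, padicValInt p (oddTerm u (i + 1))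

theorem oddVal_succ (p m : ℕ) : oddVal p (m + 1) = oddVal p m + padicValNat p (2 * m + 1) :=
  sum_range_succ _ _

theorem termVal_succ (u : ℤ) (p j : ℕ) :
    termVal u p (j + 1) = termVal u p j + padicValInt p (oddTerm u (j + 1)) :=
  sum_range_succ _ _

theorem termVal_add_oddVal (p : ℕ) {U : ℕ} (hU : 1 ≤ U) {j : ℕ} (hj : j ≤ U - 1) :
    termVal (-U) p j + oddVal p (U - 1 - j) = oddVal p (U - 1) := by
  induction j with
  | zero => simp [termVal]
  | succ j ih =>
    have hval : padicValInt p (oddTerm (-U) (j + 1)) =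
        padicValNat p (2 * (U - 1 - (j + 1)) + 1) := by
      unfold padicValInt oddTerm
      congr 1
      omega
    rw [← ih (by omega), termVal_succ, hval, show U - 1 - j = U - 1 - (j + 1) + 1 by omega,
      oddVal_succ]
    ring

theorem termVal_add_eq (p : ℕ) {U : ℕ} (hU : 1 ≤ U) (m : ℕ) :
    termVal (-U) p (U - 1 + m) = oddVal p (U - 1) + oddVal p m := by
  induction m with
  | zero => simpa [oddVal] using termVal_add_oddVal p hU le_rfl
  | succ m ih =>
    have hval : padicValInt p (oddTerm (-U) (U - 1 + m + 1)) = padicValNat p (2 * m + 1) := by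
      unfold padicValInt oddTerm
      congr 1
      omega
    rw [← add_assoc, termVal_succ, hval, ih, oddVal_succ, add_assoc]

theorem dvd_modelCoeff_of_dvd_oddTerm {p n k l j : ℕ} {u : ℤ} (hl : l < k)
    (hdvd : (p : ℤ) ∣ oddTerm u (n - l)) (hj : j + k ≤ n) : (p : ℤ) ∣ modelCoeff u n j :=
  (hdvd.trans (dvd_prod_of_mem _ (mem_Ioc.2 ⟨by omega, by omega⟩))).mul_left _

section Valuations

variable {p : ℕ} [hp : Fact p.Prime]

theorem oddVal_add_padicValNat_factorial (hodd : Odd p) (m : ℕ) :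
    oddVal p m + padicValNat p m.factorial = padicValNat p (2 * m).factorial := by
  induction m with
  | zero => simp [oddVal]
  | succ m ih =>
    have htwo : padicValNat p 2 = 0 := padicValNat.eq_zero_of_not_dvd fun hdvd => by
      rw [(Nat.prime_dvd_prime_iff_eq hp.out Nat.prime_two).1 hdvd] at hodd
      exact absurd hodd (by decide)
    rw [show 2 * (m + 1) = 2 * m + 1 + 1 by ring, Nat.factorial_succ, Nat.factorial_succ,
      Nat.factorial_succ, show 2 * m + 1 + 1 = 2 * (m + 1) by ring]
    rw [padicValNat.mul (by positivity) (by positivity),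
      padicValNat.mul (by positivity) (by positivity),
      padicValNat.mul (by positivity) (by positivity),
      padicValNat.mul (by positivity) (by positivity), htwo, oddVal_succ, ← ih]
    ring

theorem sub_one_mul_oddVal_lt (hodd : Odd p) {m : ℕ} (hm : m ≠ 0) :
    (p - 1) * oddVal p m < 2 * m :=
  (Nat.mul_le_mul_left _ ((Nat.le_add_right _ _).trans
    (oddVal_add_padicValNat_factorial hodd m).le)).trans_lt
    (sub_one_mul_padicValNat_factorial_lt_of_ne_zero p (by omega))

theorem div_add_div_sq_le_padicValNat_factorial (p m : ℕ) [Fact p.Prime] :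
    m / p + m / p ^ 2 ≤ padicValNat p m.factorial := by
  rw [padicValNat_factorial (b := max 3 (Nat.log p m + 1)) (by omega)]
  have hsub : ({1, 2} : Finset ℕ) ⊆ Ico 1 (max 3 (Nat.log p m + 1)) := by
    intro i hi
    simp only [mem_insert, mem_singleton] at hi
    rw [mem_Ico]
    omega
  simpa using sum_le_sum_of_subset (f := fun i => m / p ^ i) hsub

theorem sq_mul_sub_one_mul_oddVal_le (hodd : Odd p) (m : ℕ) :
    p ^ 2 * (p - 1) * oddVal p m ≤ (p ^ 2 + 1) * m + 2 * p ^ 3 := by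
  obtain ⟨r, rfl⟩ : ∃ r, p = r + 1 := ⟨p - 1, (Nat.succ_pred hp.out.ne_zero).symm⟩
  have hsum := oddVal_add_padicValNat_factorial hodd m
  have hupper : r * padicValNat (r + 1) (2 * m).factorial ≤ 2 * m := by
    have := sub_one_mul_padicValNat_factorial (p := r + 1) (2 * m)
    simp only [Nat.add_sub_cancel] at this
    omega
  have hlower := div_add_div_sq_le_padicValNat_factorial (r + 1) m
  have h₁ : m ≤ (r + 1) * (m / (r + 1)) + r := by
    have := Nat.div_add_mod m (r + 1)
    have := Nat.mod_lt m (show 0 < r + 1 by omega)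
    omega
  have h₂ : m + 1 ≤ (r + 1) ^ 2 * (m / (r + 1) ^ 2) + (r + 1) ^ 2 := by
    have := Nat.div_add_mod m ((r + 1) ^ 2)
    have := Nat.mod_lt m (show 0 < (r + 1) ^ 2 by positivity)
    omega
  rw [← hsum] at hupper
  simp only [Nat.add_sub_cancel]
  generalize m / (r + 1) = q₁ at *
  generalize m / (r + 1) ^ 2 = q₂ at *
  generalize oddVal (r + 1) m = v at *
  generalize padicValNat (r + 1) m.factorial = w at *
  have hlow := Nat.mul_le_mul_left ((r + 1) ^ 2 * r) hlower
  have hup := Nat.mul_le_mul_left ((r + 1) ^ 2) hupper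
  have hq₁ := Nat.mul_le_mul_left ((r + 1) * r) h₁
  have hq₂ := Nat.mul_le_mul_left r h₂
  nlinarith

theorem padicValInt_prod_oddTerm (u : ℤ) (p j : ℕ) [Fact p.Prime] :
    padicValInt p (∏ i ∈ Ioc 0 j, oddTerm u i) = termVal u p j := by
  induction j with
  | zero => simp [termVal]
  | succ j ih =>
    rw [prod_Ioc_succ_top (Nat.zero_le j), padicValInt.mul (prod_oddTerm_ne_zero u _)
      (oddTerm_ne_zero u _), ih, termVal_succ]

theorem padicValInt_modelCoeff_zero (u : ℤ) {n j : ℕ} (hj : j ≤ n) :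
    padicValInt p (modelCoeff u n 0) + padicValNat p (n.choose j) =
      termVal u p j + padicValInt p (modelCoeff u n j) := by
  have hsplit : modelCoeff u n 0 =
      (∏ i ∈ Ioc 0 j, oddTerm u i) * ∏ i ∈ Ioc j n, oddTerm u i := by
    rw [prod_Ioc_consecutive _ (Nat.zero_le j) hj]
    simp [modelCoeff]
  have hchoose : (n.choose j : ℤ) ≠ 0 := mod_cast (Nat.choose_pos hj).ne'
  rw [hsplit, padicValInt.mul (prod_oddTerm_ne_zero u _) (prod_oddTerm_ne_zero u _),
    padicValInt_prod_oddTerm, modelCoeff, padicValInt.mul hchoose (prod_oddTerm_ne_zero u _),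
    padicValInt.of_nat]
  ring

theorem exists_dvd_oddTerm (hodd : Odd p) (u : ℤ) (j : ℕ) :
    ∃ i ∈ Ioc j (j + p), (p : ℤ) ∣ oddTerm u i := by
  have htwo : (2 : ZMod p) ≠ 0 := by
    have : NeZero p := ⟨hp.out.ne_zero⟩
    exact Ring.two_ne_zero (by rw [ZMod.ringChar_zmod_n]; rintro rfl; exact absurd hodd (by decide))
  let t : ZMod p := -(2 * u + 1) / 2 - (j + 1)
  refine ⟨j + 1 + t.val, mem_Ioc.2 ⟨by omega, by have := t.val_lt; omega⟩, ?_⟩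
  rw [← ZMod.intCast_zmod_eq_zero_iff_dvd, oddTerm]
  push_cast
  rw [ZMod.natCast_zmod_val]
  simp only [t]
  field_simp
  ring

theorem dvd_modelCoeff_of_dvd_sub (hodd : Odd p) {u : ℤ} {n k l j : ℕ} (hl : l < k)
    (hdvd : p ∣ n - l) (hj : j + k ≤ n) : (p : ℤ) ∣ modelCoeff u n j := by
  rcases lt_or_ge n (j + p) with hlt | hge
  · refine Dvd.dvd.mul_right (Int.natCast_dvd_natCast.2 ?_) _
    have hdesc : p ∣ n.descFactorial (n - j) := by
      rw [Nat.descFactorial_eq_prod_range]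
      exact hdvd.trans (dvd_prod_of_mem _ (mem_range.2 (by omega)))
    rw [Nat.descFactorial_eq_factorial_mul_choose, Nat.choose_symm (by omega)] at hdesc
    refine (hp.out.dvd_mul.1 hdesc).resolve_left fun hfact => ?_
    have := hp.out.dvd_factorial.1 hfact
    omega
  · obtain ⟨i, hi, hdvd⟩ := exists_dvd_oddTerm hodd u j
    exact (hdvd.trans (dvd_prod_of_mem _ (Ioc_subset_Ioc_right hge hi))).mul_left _

namespace ModelFactorization

variable {u : ℤ} {n k : ℕ} {g h : ℤ[X]}

theorem mul_padicValInt_le (F : ModelFactorization u n k g h) {a b A : ℕ}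
    (H : ∀ j, 1 ≤ j → b * termVal u p j ≤ A + a * j) :
    b * padicValInt p (g.coeff 0) ≤ A + a * k := by
  rw [← F.natDegree_left]
  refine mul_padicValInt_coeff_zero_le F.monic_left F.coeff_zero_left_ne_zero
    F.coeff_zero_right_ne_zero fun j hj => ?_
  rw [F.coeff_mul] at hj ⊢
  rw [newtonWeight, F.coeff_mul]
  rcases Nat.eq_zero_or_pos j with rfl | hj0
  · omega
  · have hval := padicValInt_modelCoeff_zero (p := p) u (le_of_modelCoeff_ne_zero hj)
    have hle : b * padicValInt p (modelCoeff u n 0) ≤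
        b * (termVal u p j + padicValInt p (modelCoeff u n j)) := Nat.mul_le_mul_left b (by omega)
    have := H j hj0
    rw [mul_add] at hle
    omega

theorem not_dvd_of_mul_termVal_lt_add (F : ModelFactorization u n k g h) (hk : 1 ≤ k)
    (H : ∀ j, 1 ≤ j → j ≤ n → k * termVal u p j < j + k * padicValNat p (n.choose j)) :
    ¬ (p : ℤ) ∣ g.coeff 0 := by
  refine not_dvd_coeff_zero_of_lt F.monic_left F.monic_right F.coeff_zero_right_ne_zero
    F.coeff_zero_left_ne_zero (F.natDegree_left.symm ▸ hk) fun j hj0 hj => ?_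
  rw [F.coeff_mul] at hj
  rw [F.coeff_mul, F.coeff_mul, F.natDegree_left]
  have hjn := le_of_modelCoeff_ne_zero hj
  have hval := congrArg (k * ·) (padicValInt_modelCoeff_zero (p := p) u hjn)
  simp only [mul_add] at hval
  have := H j hj0 hjn
  omega

theorem not_dvd_of_mul_termVal_lt (F : ModelFactorization u n k g h) (hk : 1 ≤ k)
    (H : ∀ j, 1 ≤ j → k * termVal u p j < j) : ¬ (p : ℤ) ∣ g.coeff 0 :=
  F.not_dvd_of_mul_termVal_lt_add hk fun j hj _ => (H j hj).trans_le (Nat.le_add_right _ _)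

theorem dvd_of_dvd_term (F : ModelFactorization u n k g h) (hodd : Odd p) {l : ℕ} (hl : l < k)
    (hdvd : p ∣ n - l ∨ (p : ℤ) ∣ oddTerm u (n - l)) : (p : ℤ) ∣ g.coeff 0 := by
  refine dvd_coeff_zero_of_dvd_coeff_mul F.monic_right fun j hj => ?_
  have := F.natDegree_right_add
  rw [F.coeff_mul]
  rcases hdvd with hdvd | hdvd
  · exact dvd_modelCoeff_of_dvd_sub hodd hl hdvd (by omega)
  · exact dvd_modelCoeff_of_dvd_oddTerm hl hdvd (by omega)

theorem odd_of_dvd (F : ModelFactorization u n k g h) (hdvd : (p : ℤ) ∣ g.coeff 0) : Odd p :=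
  hp.out.odd_of_ne_two fun h2 => F.not_two_dvd (by simpa [h2] using hdvd)

theorem not_dvd_of_large {U : ℕ} (F : ModelFactorization (-U) n k g h) (hodd : Odd p)
    (hU : 1 ≤ U) (hk : 1 ≤ k) (hUp : 2 * U ≤ p + 2) (hkp : 2 * k + 1 ≤ p) :
    ¬ (p : ℤ) ∣ g.coeff 0 := by
  have hzero : oddVal p (U - 1) = 0 := sum_eq_zero fun i hi =>
    padicValNat.eq_zero_of_not_dvd fun hdvd => by
      have := Nat.le_of_dvd (by omega) hdvd
      have := mem_range.1 hi
      omega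
  refine F.not_dvd_of_mul_termVal_lt hk fun j hj => ?_
  rcases le_or_gt j (U - 1) with hle | hgt
  · have := termVal_add_oddVal p hU hle
    rw [show termVal (-U) p j = 0 by omega]
    omega
  · obtain ⟨m, rfl⟩ : ∃ m, j = U - 1 + m := ⟨j - (U - 1), by omega⟩
    rw [termVal_add_eq p hU m, hzero, zero_add]
    have hlt := sub_one_mul_oddVal_lt hodd (m := m) (by omega)
    have hle : (2 * k) * oddVal p m ≤ (p - 1) * oddVal p m :=
      Nat.mul_le_mul_right _ (by omega)
    rw [mul_assoc] at hle
    omega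

end ModelFactorization

end Valuations

/-! ### Computable bounds on the constant coefficient -/

/-- The `p`-adic valuation of `x` for `x < 2 ^ fuel`, in a form the kernel evaluates quickly. -/
def fuelVal : ℕ → ℕ → ℕ → ℕ
  | 0, _, _ => 0
  | fuel + 1, p, x => bif Nat.beq (x % p) 0 then fuelVal fuel p (x / p) + 1 else 0

theorem fuelVal_eq_padicValNat {p : ℕ} [hp : Fact p.Prime] {fuel x : ℕ} (hx : x ≠ 0)
    (hlt : x < 2 ^ fuel) : fuelVal fuel p x = padicValNat p x := by
  induction fuel generalizing x with
  | zero => exact absurd hlt (by simpa [Nat.one_le_iff_ne_zero] using hx)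
  | succ fuel ih =>
    unfold fuelVal
    by_cases hdvd : p ∣ x
    · obtain ⟨y, rfl⟩ := hdvd
      have hy : y ≠ 0 := right_ne_zero_of_mul hx
      have hmul : 2 * y ≤ p * y := Nat.mul_le_mul_right _ hp.out.two_le
      have hlt' : y < 2 ^ fuel := by rw [pow_succ] at hlt; omega
      rw [Nat.mul_mod_right, Nat.beq_refl, cond_true, Nat.mul_div_cancel_left _ hp.out.pos,
        ih hy hlt', padicValNat.mul hp.out.ne_zero hy, padicValNat_self, add_comm]
    · rw [show Nat.beq (x % p) 0 = false by
        rw [← Bool.not_eq_true, Nat.beq_eq]; exact fun h => hdvd (Nat.dvd_of_mod_eq_zero h),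
        cond_false, padicValNat.eq_zero_of_not_dvd hdvd]

/-- The absolute value of `oddTerm (-U) i`: one of the two truncated differences vanishes. -/
def absOddTerm (U i : ℕ) : ℕ := (2 * i + 1 - 2 * U) + (2 * U - (2 * i + 1))

theorem natAbs_oddTerm (U i : ℕ) : (oddTerm (-U) i).natAbs = absOddTerm U i := by
  unfold oddTerm absOddTerm
  omega

theorem fuelVal_absOddTerm (p : ℕ) [Fact p.Prime] {U i : ℕ} (hU : U ≤ 50) (hi : i ≤ 1000) :
    fuelVal 12 p (absOddTerm U i) = padicValInt p (oddTerm (-U) i) := by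
  rw [padicValInt, natAbs_oddTerm, fuelVal_eq_padicValNat] <;> unfold absOddTerm <;> omega

/-- `termVal (-U) p`, computed by `fuelVal`. -/
def evalTermVal (U p : ℕ) : ℕ → ℕ
  | 0 => 0
  | j + 1 => evalTermVal U p j + fuelVal 12 p (absOddTerm U (j + 1))

theorem evalTermVal_eq (p : ℕ) [Fact p.Prime] {U j : ℕ} (hU : U ≤ 50) (hj : j ≤ 1000) :
    evalTermVal U p j = termVal (-U) p j := by
  induction j with
  | zero => simp [evalTermVal, termVal]
  | succ j ih => rw [termVal_succ, evalTermVal, ih (by omega), fuelVal_absOddTerm p hU hj]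

/-- Checks `b * termVal (-U) p i + D < X + a * i` for `j < i ≤ j + fuel`, where
`v = termVal (-U) p j`. -/
def linearBoundLoop (U p a b X D : ℕ) : ℕ → ℕ → ℕ → Bool
  | 0, _, _ => true
  | fuel + 1, j, v =>
    (fun v' => Nat.blt (b * v' + D) (X + a * (j + 1)) &&
      linearBoundLoop U p a b X D fuel (j + 1) v') (v + fuelVal 12 p (absOddTerm U (j + 1)))

theorem linearBoundLoop_sound (p : ℕ) [Fact p.Prime] {U a b X D : ℕ} (hU : U ≤ 50) {fuel j : ℕ}
    (h : linearBoundLoop U p a b X D fuel j (termVal (-U) p j) = true) (hj : j + fuel ≤ 1000)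
    {i : ℕ} (hji : j < i) (hi : i ≤ j + fuel) : b * termVal (-U) p i + D < X + a * i := by
  induction fuel generalizing j with
  | zero => omega
  | succ fuel ih =>
    simp only [linearBoundLoop, Bool.and_eq_true, Nat.blt_eq] at h
    rw [fuelVal_absOddTerm p hU (by omega), ← termVal_succ] at h
    rcases Nat.lt_or_ge (j + 1) i with hlt | hge
    · exact ih h.2 (by omega) hlt (by omega)
    · obtain rfl : i = j + 1 := by omega
      exact h.1

/-- Checks `b * termVal (-U) p j + D < X + a * j` for all `j ≥ 1`: directly for `j ≤ 300`, and
beyond by comparing the linear bound `sq_mul_sub_one_mul_oddVal_le` with the right-hand side at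
`j = 301` and in slope. -/
def linearBound (U p a b X D : ℕ) : Bool :=
  linearBoundLoop U p a b X D 300 0 0 &&
  Nat.ble (b * (p ^ 2 + 1)) (p ^ 2 * (p - 1) * a) &&
  Nat.blt (b * (p ^ 2 * (p - 1) * evalTermVal U p (U - 1) + (p ^ 2 + 1) * (301 - (U - 1)) +
      2 * p ^ 3) + p ^ 2 * (p - 1) * D)
    (p ^ 2 * (p - 1) * (X + a * 301))

theorem mul_termVal_add_lt_of_linearBound {p : ℕ} [Fact p.Prime] (hodd : Odd p)
    {U a b X D : ℕ} (hU₁ : 1 ≤ U) (hU : U ≤ 50) (h : linearBound U p a b X D = true) {j : ℕ}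
    (hj : 1 ≤ j) : b * termVal (-U) p j + D < X + a * j := by
  simp only [linearBound, Bool.and_eq_true, Nat.blt_eq, Nat.ble_eq] at h
  obtain ⟨⟨hloop, hslope⟩, htail⟩ := h
  rcases Nat.lt_or_ge 300 j with hgt | hle
  · obtain ⟨m₀, hm₀⟩ : ∃ m₀, 301 = U - 1 + m₀ := ⟨301 - (U - 1), by omega⟩
    obtain ⟨d, rfl⟩ : ∃ d, j = U - 1 + (m₀ + d) := ⟨j - 301, by omega⟩
    have hleft : termVal (-U) p (U - 1) = oddVal p (U - 1) := by
      simpa [oddVal] using termVal_add_eq p hU₁ 0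
    rw [evalTermVal_eq p hU (by omega), hleft, hm₀, Nat.add_sub_cancel_left] at htail
    rw [termVal_add_eq p hU₁]
    have hright := Nat.mul_le_mul_left b (sq_mul_sub_one_mul_oddVal_le hodd (m₀ + d))
    have hstep := Nat.mul_le_mul_right d hslope
    generalize p ^ 2 * (p - 1) = Q at *
    refine Nat.lt_of_mul_lt_mul_left (a := Q) ?_
    nlinarith
  · exact linearBoundLoop_sound p hU (j := 0) (by simpa [termVal] using hloop) (by omega)
      (by omega) (by omega)

namespace ModelFactorization

variable {U n k : ℕ} {g h : ℤ[X]} {p : ℕ} [hp : Fact p.Prime]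

theorem padicValInt_le_of_linearBound (F : ModelFactorization (-U) n k g h) (hodd : Odd p)
    (hU₁ : 1 ≤ U) (hU : U ≤ 50) {a b e : ℕ} (hb : a * k < b * (e + 1))
    (H : linearBound U p a b (b * (e + 1)) (a * k) = true) : padicValInt p (g.coeff 0) ≤ e := by
  have hle := F.mul_padicValInt_le (p := p) (a := a) (b := b) (A := b * (e + 1) - a * k - 1)
    fun j hj => by
      have := mul_termVal_add_lt_of_linearBound hodd hU₁ hU H hj
      omega
  have hlt : b * padicValInt p (g.coeff 0) < b * (e + 1) := by omega
  exact Nat.lt_succ_iff.1 (Nat.lt_of_mul_lt_mul_left hlt)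

theorem not_dvd_of_linearBound (F : ModelFactorization (-U) n k g h) (hodd : Odd p)
    (hU₁ : 1 ≤ U) (hU : U ≤ 50) (hk : 1 ≤ k) {K : ℕ} (hK : k ≤ K)
    (H : linearBound U p 1 K 0 0 = true) : ¬ (p : ℤ) ∣ g.coeff 0 := by
  refine F.not_dvd_of_mul_termVal_lt hk fun j hj => ?_
  have := mul_termVal_add_lt_of_linearBound hodd hU₁ hU H hj
  have := Nat.mul_le_mul_right (termVal (-U) p j) hK
  omega

end ModelFactorization

/-! ### The primes that may divide the constant coefficient -/

/-- The odd primes below `34`. -/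
def smallPrimes : List ℕ := [3, 5, 7, 11, 13, 17, 19, 23, 29, 31]

theorem prime_of_mem_smallPrimes {p : ℕ} (hp : p ∈ smallPrimes) : p.Prime := by
  simp only [smallPrimes, List.mem_cons, List.not_mem_nil, or_false] at hp
  rcases hp with rfl | rfl | rfl | rfl | rfl | rfl | rfl | rfl | rfl | rfl <;> norm_num

theorem mem_smallPrimes {p : ℕ} (hp : p.Prime) (hodd : Odd p) (hlt : p < 37) :
    p ∈ smallPrimes := by
  have hall : ∀ q < 37, q.Prime → Odd q → q ∈ smallPrimes := by decide +kernel
  exact hall p hlt hp hodd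

/-- Row `U - 2`, column `i` holds the largest `k ≤ 16` for which `linearBound` shows that the `i`-th
small prime divides no constant coefficient of a factor of degree at most `k` of
`model (-U) n`. -/
def goodDegreeTable : List (List ℕ) := [
  [1, 3, 4, 6, 7, 9, 10, 12, 15, 16],
  [0, 3, 5, 7, 8, 10, 11, 13, 16, 16],
  [1, 0, 5, 8, 9, 11, 12, 14, 16, 16],
  [1, 1, 0, 9, 10, 12, 13, 15, 16, 16],
  [0, 2, 1, 9, 11, 13, 14, 16, 16, 16],
  [0, 3, 2, 0, 11, 14, 15, 16, 16, 16],
  [1, 3, 3, 1, 0, 14, 16, 16, 16, 16],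
  [0, 0, 4, 2, 1, 14, 16, 16, 16, 16],
  [1, 1, 5, 3, 2, 0, 16, 16, 16, 16],
  [1, 2, 5, 4, 3, 1, 0, 16, 16, 16],
  [0, 3, 0, 5, 4, 2, 1, 16, 16, 16],
  [1, 3, 1, 6, 5, 3, 2, 0, 16, 16],
  [1, 0, 2, 7, 6, 4, 3, 1, 16, 16],
  [0, 0, 3, 8, 7, 5, 4, 2, 16, 16],
  [0, 1, 4, 9, 8, 6, 5, 3, 0, 16],
  [0, 1, 5, 9, 9, 7, 6, 4, 1, 0],
  [0, 2, 5, 0, 10, 8, 7, 5, 2, 1]]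

/-- The entry of `goodDegreeTable` for `U` and the `i`-th small prime. -/
def goodDegree (U i : ℕ) : ℕ := (goodDegreeTable.getD (U - 2) []).getD i 0

theorem goodDegree_spec : ((List.range 17).all fun u => (List.range 10).all fun i =>
    Nat.beq (goodDegree (u + 2) i) 0 ||
      linearBound (u + 2) (smallPrimes.getD i 0) 1 (goodDegree (u + 2) i) 0 0) = true := by
  decide +kernel

/-- The primes that may divide the constant coefficient of a factor of degree `k` of
`model (-U) n`. -/
def badPrimes (U k : ℕ) : List ℕ :=
  ((List.range 10).filter fun i => Nat.blt (goodDegree U i) k).map fun i => smallPrimes.getD i 0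

theorem ModelFactorization.mem_badPrimes {U n k : ℕ} {g h : ℤ[X]} {p : ℕ} [hp : Fact p.Prime]
    (F : ModelFactorization (-U) n k g h) (hU₁ : 2 ≤ U) (hU : U ≤ 18) (hk : 1 ≤ k)
    (hk₂ : k ≤ 16) (hdvd : (p : ℤ) ∣ g.coeff 0) : p ∈ badPrimes U k := by
  have hodd : Odd p := F.odd_of_dvd hdvd
  have hlt : p < 37 := by
    by_contra! hge
    exact F.not_dvd_of_large hodd (by omega) hk (by omega) (by omega) hdvd
  obtain ⟨i, hi, rfl⟩ := List.mem_iff_getElem.1 (mem_smallPrimes hp.out hodd hlt)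
  have hget : smallPrimes.getD i 0 = smallPrimes[i] := (List.getElem_eq_getD (h := hi) 0).symm
  replace hi : i < 10 := hi
  refine List.mem_map.2 ⟨i, List.mem_filter.2 ⟨List.mem_range.2 hi, ?_⟩, hget⟩
  rw [Nat.blt_eq]
  by_contra! hle
  have hspec := List.all_eq_true.1 (List.all_eq_true.1 goodDegree_spec (U - 2)
    (List.mem_range.2 (by omega))) i (List.mem_range.2 hi)
  rw [show U - 2 + 2 = U by omega, Bool.or_eq_true, Nat.beq_eq, hget] at hspec
  rcases hspec with hzero | hbound
  · omega
  · exact F.not_dvd_of_linearBound hodd (by omega) (by omega) hk hle hbound hdvd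

/-! ### Newton polygon certificates -/

/-- The `p`-adic valuation of `modelCoeff (-U) n j`, computed by `fuelVal`. -/
def evalCoeffVal (U n p j : ℕ) : ℕ :=
  evalTermVal U p n + fuelVal 40 p (n.factorial / (j.factorial * (n - j).factorial)) -
    evalTermVal U p j

theorem evalCoeffVal_eq (p : ℕ) [Fact p.Prime] {U n j : ℕ} (hU : U ≤ 50) (hn : n ≤ 39)
    (hj : j ≤ n) : evalCoeffVal U n p j = padicValInt p (modelCoeff (-U) n j) := by
  have hleft := padicValInt_modelCoeff_zero (p := p) (-U) hj
  have hright := padicValInt_modelCoeff_zero (p := p) (-U) (le_refl n)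
  rw [modelCoeff_self, Nat.choose_self, padicValNat_one_right, padicValInt.one] at hright
  have hlt : n.choose j < 2 ^ 40 :=
    (Nat.choose_le_two_pow n j).trans_lt (Nat.pow_lt_pow_right (by norm_num) (by omega))
  rw [evalCoeffVal, ← Nat.choose_eq_factorial_div_factorial hj,
    fuelVal_eq_padicValNat (Nat.choose_pos hj).ne' hlt, evalTermVal_eq p hU (by omega),
    evalTermVal_eq p hU (by omega)]
  omega

/-- A certificate that the `p`-adic Newton polygon of `model (-U) n` has an edge from abscissa `i`
to abscissa `l`. -/
structure EdgeCert where
  /-- Minus the parameter of the model. -/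
  U : ℕ
  /-- The degree of the model. -/
  n : ℕ
  /-- The prime. -/
  p : ℕ
  /-- The left end of the edge. -/
  i : ℕ
  /-- The right end of the edge. -/
  l : ℕ

namespace EdgeCert

/-- The `p`-adic valuation of the `j`-th coefficient of the model. -/
def val (c : EdgeCert) (j : ℕ) : ℕ := evalCoeffVal c.U c.n c.p j

/-- The numerator of the slope of the edge in lowest terms. -/
def num (c : EdgeCert) : ℕ := (c.val c.i - c.val c.l) / Nat.gcd (c.val c.i - c.val c.l) (c.l - c.i)

/-- The denominator of the slope of the edge in lowest terms. -/
def den (c : EdgeCert) : ℕ := (c.l - c.i) / Nat.gcd (c.val c.i - c.val c.l) (c.l - c.i)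

/-- Checks the points of the Newton polygon against the line through the edge, whose weight is
`w` when the slope is `a / b`. -/
def supports (c : EdgeCert) (a b w : ℕ) : Bool :=
  Nat.beq (b * c.val c.i + a * c.i) w && Nat.beq (b * c.val c.l + a * c.l) w &&
  (List.range (c.n + 1)).all fun j =>
    bif Nat.blt j c.i || Nat.blt c.l j then Nat.blt w (b * c.val j + a * j)
    else Nat.ble w (b * c.val j + a * j)

/-- Checks that the certificate describes an edge. -/
def isValid (c : EdgeCert) : Bool :=
  smallPrimes.any (Nat.beq c.p) && Nat.ble c.U 50 && Nat.ble c.n 39 && Nat.blt c.i c.l &&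
  Nat.ble c.l c.n && c.supports c.num c.den (c.den * c.val c.i + c.num * c.i)

/-- Checks that the edge is incompatible with a factor of degree `k`. -/
def excludes (c : EdgeCert) (k : ℕ) : Bool :=
  (fun b => (List.range (c.l - c.i + 1)).all fun t =>
    Nat.blt (c.l - c.i) (b * t) || Nat.blt k (b * t) ||
      Nat.blt (c.i + (c.n - c.l) + b * t) k) c.den

theorem newtonEdge_of_supports {c : EdgeCert} [Fact c.p.Prime] {a b w : ℕ} (hU : c.U ≤ 50)
    (hn : c.n ≤ 39) (hil : c.i < c.l) (hln : c.l ≤ c.n) (h : c.supports a b w = true) :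
    NewtonEdge c.p a b (model (-c.U) c.n) w c.i c.l := by
  simp only [supports, Bool.and_eq_true, Nat.beq_eq, List.all_eq_true, List.mem_range] at h
  obtain ⟨⟨hi, hl⟩, hall⟩ := h
  have hweight : ∀ j ≤ c.n, newtonWeight c.p a b (model (-c.U) c.n) j = b * c.val j + a * j :=
    fun j hj => by rw [newtonWeight, coeff_model, val, evalCoeffVal_eq c.p hU hn hj]
  have hle : ∀ j, (model (-c.U) c.n).coeff j ≠ 0 → j ≤ c.n := fun j hj =>
    le_of_modelCoeff_ne_zero (by rwa [coeff_model] at hj)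
  have hstrict : ∀ j ≤ c.n, j < c.i ∨ c.l < j → w < b * c.val j + a * j := fun j hj hout => by
    have hout' : (Nat.blt j c.i || Nat.blt c.l j) = true := by simpa [Nat.blt_eq] using hout
    simpa [hout', Nat.blt_eq] using hall j (by omega)
  refine ⟨fun j hj => ?_, ?_, ?_, ?_, ?_, fun j hj hlt => ?_, fun j hj hlt => ?_⟩
  · rw [hweight j (hle j hj)]
    by_cases hout : j < c.i ∨ c.l < j
    · exact (hstrict j (hle j hj) hout).le
    · have hout' : (Nat.blt j c.i || Nat.blt c.l j) = false := by
        rw [← Bool.not_eq_true]; simpa [Nat.blt_eq] using hout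
      simpa [hout', Nat.ble_eq] using hall j (by have := hle j hj; omega)
  · rw [coeff_model]; exact modelCoeff_ne_zero (by omega)
  · rw [hweight _ (by omega), hi]
  · rw [coeff_model]; exact modelCoeff_ne_zero hln
  · rw [hweight _ hln, hl]
  · rw [hweight j (hle j hj)]; exact hstrict j (hle j hj) (Or.inl hlt)
  · rw [hweight j (hle j hj)]; exact hstrict j (hle j hj) (Or.inr hlt)

end EdgeCert

theorem ModelFactorization.false_of_edgeCert {c : EdgeCert} {k : ℕ} {g h : ℤ[X]}
    (F : ModelFactorization (-c.U) c.n k g h) (hvalid : c.isValid = true)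
    (hexcl : c.excludes k = true) : False := by
  simp only [EdgeCert.isValid, Bool.and_eq_true, Nat.ble_eq, Nat.blt_eq, List.any_eq_true,
    Nat.beq_eq] at hvalid
  obtain ⟨⟨⟨⟨⟨⟨q, hq, hqp⟩, hU⟩, hn⟩, hil⟩, hln⟩, hsupp⟩ := hvalid
  have hp : Fact c.p.Prime := ⟨hqp ▸ prime_of_mem_smallPrimes hq⟩
  have hgcd : 0 < Nat.gcd (c.val c.i - c.val c.l) (c.l - c.i) :=
    Nat.gcd_pos_of_pos_right _ (by omega)
  have hcoprime : c.num.Coprime c.den := Nat.coprime_div_gcd_div_gcd hgcd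
  have hden : 1 ≤ c.den :=
    Nat.div_pos (Nat.le_of_dvd (by omega) (Nat.gcd_dvd_right _ _)) hgcd
  have E := EdgeCert.newtonEdge_of_supports hU hn hil hln hsupp
  rw [← F.mul_eq] at E
  obtain ⟨x, t, z, hx, ht, hz, hdeg⟩ := exists_natDegree_eq_of_newtonEdge F.monic_left.ne_zero
    F.monic_right.ne_zero hcoprime E
  rw [F.mul_eq, natDegree_model] at hz
  rw [F.natDegree_left] at hdeg
  have htle : 1 * t ≤ c.den * t := Nat.mul_le_mul_right _ hden
  have hcheck := List.all_eq_true.1 hexcl t (List.mem_range.2 (by omega))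
  simp only [Bool.or_eq_true, Nat.blt_eq] at hcheck
  omega

/-- Edges `⟨U, n, p, i, l⟩` that dispose of the factorizations escaping the size arguments. -/
def edgeCerts : List EdgeCert := [
  ⟨3, 4, 3, 1, 4⟩, ⟨4, 4, 3, 0, 3⟩, ⟨4, 5, 5, 0, 5⟩, ⟨4, 6, 5, 1, 6⟩, ⟨5, 4, 3, 0, 3⟩,
  ⟨5, 5, 5, 0, 5⟩, ⟨5, 6, 5, 0, 5⟩, ⟨5, 7, 5, 2, 7⟩, ⟨5, 8, 7, 1, 8⟩, ⟨5, 9, 3, 0, 9⟩,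
  ⟨6, 6, 5, 0, 5⟩, ⟨6, 7, 7, 0, 7⟩, ⟨6, 8, 7, 0, 7⟩, ⟨6, 9, 3, 0, 9⟩, ⟨6, 10, 3, 1, 10⟩,
  ⟨7, 8, 7, 0, 7⟩, ⟨7, 9, 3, 0, 9⟩, ⟨7, 10, 3, 0, 9⟩, ⟨7, 11, 3, 2, 11⟩, ⟨7, 12, 11, 1, 12⟩,
  ⟨8, 8, 5, 0, 5⟩, ⟨8, 9, 3, 0, 9⟩, ⟨8, 10, 3, 0, 9⟩, ⟨8, 11, 3, 0, 9⟩, ⟨8, 12, 3, 3, 12⟩,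
  ⟨8, 13, 11, 2, 13⟩, ⟨8, 14, 11, 2, 13⟩, ⟨8, 15, 13, 1, 14⟩, ⟨9, 9, 3, 0, 9⟩, ⟨9, 10, 3, 1, 10⟩,
  ⟨9, 11, 3, 1, 10⟩, ⟨9, 12, 3, 0, 9⟩, ⟨9, 13, 3, 4, 13⟩, ⟨9, 14, 11, 3, 14⟩, ⟨9, 15, 11, 3, 14⟩,
  ⟨9, 16, 13, 2, 15⟩, ⟨10, 9, 3, 0, 9⟩, ⟨10, 10, 3, 0, 9⟩, ⟨10, 11, 3, 2, 11⟩, ⟨10, 12, 3, 0, 9⟩,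
  ⟨10, 13, 3, 0, 9⟩, ⟨10, 14, 3, 5, 14⟩, ⟨10, 15, 5, 0, 15⟩, ⟨10, 16, 11, 4, 15⟩,
  ⟨10, 17, 13, 3, 16⟩, ⟨10, 18, 17, 1, 18⟩, ⟨11, 10, 3, 0, 9⟩, ⟨11, 12, 3, 0, 9⟩,
  ⟨11, 13, 3, 0, 9⟩, ⟨11, 14, 3, 0, 9⟩, ⟨11, 15, 5, 0, 15⟩, ⟨11, 16, 11, 5, 16⟩,
  ⟨11, 17, 13, 4, 17⟩, ⟨11, 18, 13, 4, 17⟩, ⟨11, 19, 17, 2, 19⟩, ⟨11, 20, 19, 1, 20⟩,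
  ⟨11, 21, 17, 2, 19⟩, ⟨12, 8, 7, 1, 8⟩, ⟨12, 10, 3, 1, 10⟩, ⟨12, 12, 3, 0, 9⟩,
  ⟨12, 13, 3, 1, 10⟩, ⟨12, 14, 3, 1, 10⟩, ⟨12, 15, 5, 0, 15⟩, ⟨12, 16, 13, 0, 13⟩,
  ⟨12, 17, 13, 0, 13⟩, ⟨12, 18, 13, 5, 18⟩, ⟨12, 19, 17, 0, 17⟩, ⟨12, 20, 17, 3, 20⟩,
  ⟨12, 21, 17, 3, 20⟩, ⟨12, 22, 17, 3, 20⟩, ⟨13, 9, 3, 0, 9⟩, ⟨13, 14, 3, 2, 11⟩,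
  ⟨13, 15, 3, 0, 9⟩, ⟨13, 16, 5, 0, 15⟩, ⟨13, 17, 17, 0, 17⟩, ⟨13, 18, 13, 0, 13⟩,
  ⟨13, 19, 13, 6, 19⟩, ⟨13, 20, 17, 0, 17⟩, ⟨13, 21, 17, 4, 21⟩, ⟨13, 22, 17, 4, 21⟩,
  ⟨13, 23, 17, 4, 21⟩, ⟨13, 24, 19, 3, 22⟩, ⟨13, 25, 5, 0, 25⟩, ⟨13, 26, 5, 0, 25⟩,
  ⟨14, 16, 5, 1, 16⟩, ⟨14, 17, 5, 1, 16⟩, ⟨14, 18, 17, 0, 17⟩, ⟨14, 19, 13, 0, 13⟩,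
  ⟨14, 20, 13, 7, 20⟩, ⟨14, 21, 7, 0, 21⟩, ⟨14, 22, 17, 5, 22⟩, ⟨14, 23, 17, 5, 22⟩,
  ⟨14, 24, 17, 5, 22⟩, ⟨14, 25, 5, 0, 25⟩, ⟨14, 26, 5, 1, 26⟩, ⟨14, 27, 3, 0, 27⟩,
  ⟨15, 18, 5, 2, 17⟩, ⟨15, 19, 17, 0, 17⟩, ⟨15, 20, 13, 0, 13⟩, ⟨15, 21, 7, 0, 21⟩,
  ⟨15, 22, 7, 0, 21⟩, ⟨15, 23, 17, 6, 23⟩, ⟨15, 24, 17, 6, 23⟩, ⟨15, 25, 5, 0, 25⟩,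
  ⟨15, 26, 5, 0, 25⟩, ⟨15, 27, 3, 0, 27⟩, ⟨15, 28, 3, 1, 28⟩, ⟨16, 20, 17, 0, 17⟩,
  ⟨16, 21, 7, 0, 21⟩, ⟨16, 22, 7, 0, 21⟩, ⟨16, 23, 7, 0, 21⟩, ⟨16, 24, 17, 7, 24⟩,
  ⟨16, 25, 5, 0, 25⟩, ⟨16, 26, 5, 0, 25⟩, ⟨16, 27, 3, 0, 27⟩, ⟨16, 28, 3, 0, 27⟩,
  ⟨16, 29, 3, 2, 29⟩, ⟨16, 30, 3, 3, 30⟩, ⟨17, 20, 11, 0, 11⟩, ⟨17, 21, 7, 0, 21⟩,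
  ⟨17, 22, 7, 0, 21⟩, ⟨17, 23, 7, 0, 21⟩, ⟨17, 24, 17, 0, 17⟩, ⟨17, 25, 5, 0, 25⟩,
  ⟨17, 26, 5, 0, 25⟩, ⟨17, 27, 3, 0, 27⟩, ⟨17, 28, 3, 0, 27⟩, ⟨17, 29, 3, 0, 27⟩,
  ⟨17, 30, 3, 3, 30⟩, ⟨17, 31, 29, 2, 31⟩, ⟨17, 32, 31, 1, 32⟩, ⟨17, 33, 3, 3, 30⟩,
  ⟨17, 34, 3, 3, 30⟩, ⟨18, 22, 7, 0, 21⟩, ⟨18, 23, 17, 0, 17⟩, ⟨18, 24, 7, 0, 21⟩,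
  ⟨18, 25, 5, 0, 25⟩, ⟨18, 26, 5, 0, 25⟩, ⟨18, 27, 3, 0, 27⟩, ⟨18, 28, 3, 1, 28⟩,
  ⟨18, 29, 3, 1, 28⟩, ⟨18, 30, 3, 0, 27⟩, ⟨18, 31, 3, 4, 31⟩, ⟨18, 32, 31, 0, 31⟩,
  ⟨18, 33, 31, 2, 33⟩, ⟨18, 34, 3, 4, 31⟩, ⟨18, 35, 3, 4, 31⟩]

theorem edgeCerts_valid : edgeCerts.all EdgeCert.isValid = true := by decide +kernel

/-- Checks that some edge certificate excludes a factor of degree `k` of `model (-U) n`. -/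
def edgeExcluded (U n k : ℕ) : Bool :=
  edgeCerts.any fun c => Nat.beq c.U U && Nat.beq c.n n && c.excludes k

theorem ModelFactorization.not_edgeExcluded {U n k : ℕ} {g h : ℤ[X]}
    (F : ModelFactorization (-U) n k g h) : edgeExcluded U n k = false := by
  rw [← Bool.not_eq_true]
  intro hexcl
  obtain ⟨c, hc, hck⟩ := List.any_eq_true.1 hexcl
  simp only [Bool.and_eq_true, Nat.beq_eq] at hck
  obtain ⟨⟨rfl, rfl⟩, hck⟩ := hck
  exact F.false_of_edgeCert (List.all_eq_true.1 edgeCerts_valid _ hc) hck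

/-! ### Products of consecutive odd numbers -/

theorem exists_forall_ordProj_dvd_sub {ι : Type*} (p : ℕ) {I : Finset ι} (hI : I.Nonempty)
    (x : ι → ℕ) :
    ∃ i₀ ∈ I, ∀ i ∈ I, ((p ^ (x i).factorization p : ℕ) : ℤ) ∣ (x i : ℤ) - x i₀ := by
  obtain ⟨i₀, hi₀, hmax⟩ := I.exists_max_image (fun i => (x i).factorization p) hI
  refine ⟨i₀, hi₀, fun i hi => dvd_sub ?_ ?_⟩
  · exact Int.natCast_dvd_natCast.2 (Nat.ordProj_dvd _ _)
  · exact Int.natCast_dvd_natCast.2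
      ((pow_dvd_pow p (hmax i hi)).trans (Nat.ordProj_dvd _ _))

theorem prod_erase_natAbs_sub_dvd_factorial {m j : ℕ} (hj : j ≤ m) :
    ∏ i ∈ (range (m + 1)).erase j, ((i : ℤ) - j).natAbs ∣ m.factorial := by
  have hsplit : (range (m + 1)).erase j = range j ∪ Ico (j + 1) (m + 1) := by
    ext i
    simp only [mem_erase, mem_range, mem_union, mem_Ico]
    omega
  have hdisj : Disjoint (range j) (Ico (j + 1) (m + 1)) := by
    rw [disjoint_left]
    intro i hi hi'
    rw [mem_range] at hi
    rw [mem_Ico] at hi'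
    omega
  have hleft : ∏ i ∈ range j, ((i : ℤ) - j).natAbs = j.factorial := by
    rw [← prod_range_add_one_eq_factorial, ← prod_range_reflect]
    exact prod_congr rfl fun i hi => by rw [mem_range] at hi; omega
  have hright : ∏ i ∈ Ico (j + 1) (m + 1), ((i : ℤ) - j).natAbs = (m - j).factorial := by
    rw [← prod_range_add_one_eq_factorial, prod_Ico_eq_prod_range, Nat.add_sub_add_right]
    exact prod_congr rfl fun i _ => by omega
  rw [hsplit, prod_union hdisj, hleft, hright]
  exact Nat.factorial_mul_factorial_dvd_factorial hj

theorem exists_sum_erase_factorization_le {p : ℕ} (hp : p.Prime) (hodd : Odd p) (m c : ℕ) :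
    ∃ j ∈ range (m + 1), ∑ i ∈ (range (m + 1)).erase j, (c + 2 * i).factorization p ≤
      m.factorial.factorization p := by
  obtain ⟨j, hj, hdvd⟩ := exists_forall_ordProj_dvd_sub p
    (nonempty_range_iff.2 m.succ_ne_zero) (fun i => c + 2 * i)
  refine ⟨j, hj, ?_⟩
  have hne : ∀ i ∈ (range (m + 1)).erase j, ((i : ℤ) - j).natAbs ≠ 0 := fun i hi => by
    have := ne_of_mem_erase hi
    omega
  have hle : ∀ i ∈ (range (m + 1)).erase j,
      (c + 2 * i).factorization p ≤ (((i : ℤ) - j).natAbs).factorization p := fun i hi => by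
    rw [← hp.pow_dvd_iff_le_factorization (hne i hi), ← Int.natCast_dvd]
    have hcop : IsCoprime ((p ^ (c + 2 * i).factorization p : ℕ) : ℤ) 2 := by
      exact_mod_cast Nat.isCoprime_iff_coprime.2
        (Nat.Coprime.pow_left _ (Nat.coprime_two_right.2 hodd))
    have hsub : ((c + 2 * i : ℕ) : ℤ) - (c + 2 * j : ℕ) = 2 * (i - j) := by push_cast; ring
    exact hcop.dvd_of_dvd_mul_left (hsub ▸ hdvd i (mem_of_mem_erase hi))
  calc _ ≤ ∑ i ∈ (range (m + 1)).erase j, (((i : ℤ) - j).natAbs).factorization p :=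
        sum_le_sum hle
    _ = (∏ i ∈ (range (m + 1)).erase j, ((i : ℤ) - j).natAbs).factorization p := by
      rw [Nat.factorization_prod hne, Finsupp.finsetSum_apply]
    _ ≤ _ := (Nat.factorization_le_iff_dvd (prod_ne_zero_iff.2 hne) m.factorial_ne_zero).2
      (prod_erase_natAbs_sub_dvd_factorial (Nat.lt_succ_iff.1 (mem_range.1 hj))) p

theorem two_pow_sum_digits_two_le (n : ℕ) : 2 ^ (Nat.digits 2 n).sum ≤ n + 1 := by
  induction n using Nat.strong_induction_on with
  | _ n ih =>
    rcases Nat.eq_zero_or_pos n with rfl | hn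
    · simp
    rw [Nat.digits_of_two_le_of_pos le_rfl hn, List.sum_cons, pow_add]
    have hhalf := ih (n / 2) (by omega)
    rcases Nat.mod_two_eq_zero_or_one n with hmod | hmod <;> rw [hmod] <;> omega

theorem two_pow_le_ordProj_factorial (n : ℕ) :
    2 ^ n ≤ (n + 1) * 2 ^ n.factorial.factorization 2 := by
  have hlegendre := sub_one_mul_padicValNat_factorial (p := 2) n
  have hdigits := Nat.digit_sum_le 2 n
  rw [← Nat.factorization_def _ Nat.prime_two, Nat.add_one_sub_one, one_mul] at hlegendre
  calc 2 ^ n = 2 ^ (Nat.digits 2 n).sum * 2 ^ n.factorial.factorization 2 := by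
        rw [← pow_add, hlegendre]
        congr 1
        omega
    _ ≤ _ := Nat.mul_le_mul_right _ (two_pow_sum_digits_two_le n)

theorem mul_two_pow_le_of_factorization_le {A B m : ℕ} (hA : Odd A) (hB : B ≠ 0)
    (H : ∀ p, p.Prime → Odd p →
      A.factorization p ≤ B.factorization p + m.factorial.factorization p) :
    A * 2 ^ m ≤ B * (m + 1).factorial := by
  have hBm : B * m.factorial ≠ 0 := mul_ne_zero hB m.factorial_ne_zero
  have hdvd : A ∣ B * m.factorial := by
    refine (Nat.factorization_prime_le_iff_dvd hA.pos.ne' hBm).1 fun p hp => ?_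
    rcases hp.eq_two_or_odd' with rfl | hodd
    · rw [Nat.factorization_eq_zero_of_not_dvd hA.not_two_dvd_nat]
      exact Nat.zero_le _
    · rw [Nat.factorization_mul hB m.factorial_ne_zero]
      exact H p hp hodd
  have hdvd₂ : A * 2 ^ m.factorial.factorization 2 ∣ B * m.factorial :=
    (Nat.Coprime.pow_right _ (Nat.coprime_two_right.2 hA)).mul_dvd_of_dvd_of_dvd hdvd
      ((Nat.ordProj_dvd _ _).mul_left _)
  calc A * 2 ^ m ≤ A * ((m + 1) * 2 ^ m.factorial.factorization 2) :=
        Nat.mul_le_mul_left _ (two_pow_le_ordProj_factorial m)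
    _ = (m + 1) * (A * 2 ^ m.factorial.factorization 2) := by ring
    _ ≤ (m + 1) * (B * m.factorial) :=
        Nat.mul_le_mul_left _ (Nat.le_of_dvd (Nat.pos_of_ne_zero hBm) hdvd₂)
    _ = B * (m + 1).factorial := by rw [Nat.factorial_succ]; ring

theorem prod_mul_two_pow_le_of_sum_factorization_le {ι : Type*} {I : Finset ι} {x : ι → ℕ}
    {B m : ℕ} {Q : Finset ℕ} (hx : ∀ i ∈ I, Odd (x i)) (hB : B ≠ 0)
    (hQ : ∀ i ∈ I, ∀ p, p.Prime → p ∣ x i → p ∈ Q)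
    (H : ∀ p ∈ Q, p.Prime → Odd p →
      ∑ i ∈ I, (x i).factorization p ≤ B.factorization p + m.factorial.factorization p) :
    (∏ i ∈ I, x i) * 2 ^ m ≤ B * (m + 1).factorial := by
  refine mul_two_pow_le_of_factorization_le (prod_induction _ Odd (fun _ _ => Odd.mul) odd_one hx)
    hB fun p hp hodd => ?_
  rw [Nat.factorization_prod fun i hi => (hx i hi).pos.ne', Finsupp.finsetSum_apply]
  by_cases hpQ : p ∈ Q
  · exact H p hpQ hp hodd
  · have hzero : ∀ i ∈ I, (x i).factorization p = 0 := fun i hi =>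
      Nat.factorization_eq_zero_of_not_dvd fun hdvd => hpQ (hQ i hi p hp hdvd)
    exact (sum_eq_zero hzero).trans_le (Nat.zero_le _)

section OddWindow

variable {m c t : ℕ} {Q : Finset ℕ}

/-- Erdős's argument: for each `p ∈ Q` discard the term with the largest `p`-adic valuation; the
product of the remaining terms then divides `m!`. -/
theorem pow_sub_card_mul_two_pow_le (hc : Odd c)
    (hQ : ∀ i ∈ range (m + 1), ∀ p, p.Prime → p ∣ c + 2 * i → p ∈ Q) :
    c ^ (m + 1 - #Q) * 2 ^ m ≤ (m + 1).factorial := by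
  have hindex : ∀ p, ∃ j, p.Prime → Odd p →
      ∑ i ∈ (range (m + 1)).erase j, (c + 2 * i).factorization p ≤
        m.factorial.factorization p := fun p => by
    by_cases h : p.Prime ∧ Odd p
    · obtain ⟨j, -, hle⟩ := exists_sum_erase_factorization_le h.1 h.2 m c
      exact ⟨j, fun _ _ => hle⟩
    · exact ⟨0, fun hp hodd => absurd ⟨hp, hodd⟩ h⟩
  choose j hle using hindex
  set I := range (m + 1) \ Q.image j with hI
  have hcard : m + 1 - #Q ≤ #I :=
    (Nat.sub_le_sub_left card_image_le _).trans
      (card_range (m + 1) ▸ le_card_sdiff (Q.image j) (range (m + 1)))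
  have hprod : (∏ i ∈ I, (c + 2 * i)) * 2 ^ m ≤ 1 * (m + 1).factorial := by
    refine prod_mul_two_pow_le_of_sum_factorization_le
      (fun i _ => hc.add_even (even_two_mul i)) one_ne_zero
      (fun i hi => hQ i (mem_sdiff.1 hi).1) fun p hpQ hp hodd => ?_
    rw [Nat.factorization_one, Finsupp.zero_apply, zero_add]
    refine (sum_le_sum_of_subset fun i hi => ?_).trans (hle p hp hodd)
    rw [hI, mem_sdiff] at hi
    exact mem_erase.2 ⟨fun h => hi.2 (h ▸ mem_image_of_mem j hpQ), hi.1⟩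
  rw [one_mul] at hprod
  refine (Nat.mul_le_mul_right _ ?_).trans hprod
  calc c ^ (m + 1 - #Q) ≤ c ^ #I := Nat.pow_le_pow_right hc.pos hcard
    _ = ∏ _i ∈ I, c := (prod_const c).symm
    _ ≤ _ := prod_le_prod' fun i _ => Nat.le_add_right _ _

theorem prod_window_mul_two_pow_le_prod_pow_log (hQp : ∀ p ∈ Q, p.Prime)
    (hQ : ∀ i ∈ range (m + 1), ∀ p, p.Prime → p ∣ 2 * t + 1 + 2 * i → p ∈ Q) :
    (∏ i ∈ range (m + 1), (2 * t + 1 + 2 * i)) * 2 ^ m ≤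
      (∏ p ∈ Q, p ^ Nat.log p (2 * (t + m) + 1)) * (m + 1).factorial := by
  have hne : ∏ p ∈ Q, p ^ Nat.log p (2 * (t + m) + 1) ≠ 0 :=
    prod_ne_zero_iff.2 fun p hp => pow_ne_zero _ (hQp p hp).ne_zero
  refine prod_mul_two_pow_le_of_sum_factorization_le
    (fun i _ => (odd_two_mul_add_one t).add_even (even_two_mul i)) hne hQ fun p hpQ hp hodd => ?_
  obtain ⟨j, hj, hle⟩ := exists_sum_erase_factorization_le hp hodd m (2 * t + 1)
  rw [← add_sum_erase _ _ hj]
  refine Nat.add_le_add ?_ hle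
  rw [mem_range] at hj
  have hlog : (2 * t + 1 + 2 * j).factorization p ≤ Nat.log p (2 * (t + m) + 1) :=
    Nat.le_log_of_pow_le hp.one_lt
      ((Nat.le_of_dvd (by omega) (Nat.ordProj_dvd _ _)).trans (by omega))
  refine hlog.trans ?_
  rw [← hp.pow_dvd_iff_le_factorization hne]
  exact dvd_prod_of_mem (fun p => p ^ Nat.log p (2 * (t + m) + 1)) hpQ

end OddWindow

/-! ### Large primes in long windows -/

theorem prod_primes_le_four_pow {Q : Finset ℕ} {s : ℕ} (hQp : ∀ p ∈ Q, p.Prime)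
    (hs : ∀ p ∈ Q, p ≤ s) : ∏ p ∈ Q, p ≤ 4 ^ s := by
  refine le_trans (prod_le_prod_of_subset_of_one_le' (fun p hp => ?_) fun p hp _ => ?_)
    (primorial_le_four_pow s)
  · exact mem_filter.2 ⟨mem_range.2 (Nat.lt_succ_of_le (hs p hp)), hQp p hp⟩
  · exact (mem_filter.1 hp).2.one_le

theorem card_le_primeCounting' {Q : Finset ℕ} {s : ℕ} (hQp : ∀ p ∈ Q, p.Prime)
    (hs : ∀ p ∈ Q, p < s) : #Q ≤ Nat.primeCounting' s := by
  rw [Nat.primeCounting', Nat.count_eq_card_filter_range]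
  exact card_le_card fun p hp => mem_filter.2 ⟨mem_range.2 (hs p hp), hQp p hp⟩

theorem three_mul_primeCounting'_le (s : ℕ) : 3 * Nat.primeCounting' (s + 1) ≤ s + 9 := by
  have hseven : Nat.primeCounting' 7 = 3 := by decide +kernel
  rcases Nat.lt_or_ge s 6 with hs | hs
  · have hmono := Nat.monotone_primeCounting' (show s + 1 ≤ 7 by omega)
    omega
  · have hle := Nat.primeCounting'_add_le (a := 6) (k := 7) (by norm_num) (by norm_num) (s - 6)
    rw [hseven, show Nat.totient 6 = 2 by decide +kernel,
      show 7 + (s - 6) = s + 1 by omega] at hle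
    omega

theorem two_mul_primeCounting'_le {K : ℕ} (hK : 2500 ≤ K) :
    2 * Nat.primeCounting' (2 * K + 34) ≤ K := by
  have hbase := three_mul_primeCounting'_le 210
  norm_num1 at hbase
  have hle := Nat.primeCounting'_add_le (a := 210) (k := 211) (by norm_num) (by norm_num)
    (2 * K + 34 - 211)
  rw [show Nat.totient 210 = 48 by decide +kernel,
    show 211 + (2 * K + 34 - 211) = 2 * K + 34 by omega] at hle
  omega

theorem prod_pow_log_le_pow_card {N : ℕ} (hN : N ≠ 0) (Q : Finset ℕ) :
    ∏ p ∈ Q, p ^ Nat.log p N ≤ N ^ #Q :=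
  (prod_le_prod' fun p _ => Nat.pow_log_le_self p hN).trans_eq (prod_const N)

theorem prod_pow_log_le_prod_mul_pow_card {N : ℕ} {Q : Finset ℕ} (hN : N ≠ 0)
    (hQp : ∀ p ∈ Q, p.Prime) :
    ∏ p ∈ Q, p ^ Nat.log p N ≤ (∏ p ∈ Q, p) * N ^ #{p ∈ Q | p ≤ Nat.sqrt N} := by
  rw [← prod_const, prod_filter, ← prod_mul_distrib]
  refine prod_le_prod' fun p hp => ?_
  split_ifs with hsmall
  · exact (Nat.pow_log_le_self p hN).trans (Nat.le_mul_of_pos_left _ (hQp p hp).pos)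
  · have hlog : Nat.log p N < 2 :=
      Nat.log_lt_of_lt_pow hN (by rw [pow_two]; exact Nat.sqrt_lt.1 (by omega))
    calc p ^ Nat.log p N ≤ p ^ 1 := Nat.pow_le_pow_right (hQp p hp).pos (by omega)
      _ = p * 1 := by ring

theorem four_mul_pow_le_of_prod_le {K N B : ℕ} (hK : 0 < K) (hN : 4 * K ≤ N)
    (H : (∏ i ∈ range K, (N - 2 * i)) * 2 ^ (K - 1) ≤ B * K.factorial) :
    (4 * N) ^ K ≤ 4 * K ^ (K + 1) * B := by
  have hfour : ∏ i ∈ range K, (4 * K - 2 * i) = 2 ^ K * (K.factorial * K.centralBinom) := by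
    rw [prod_congr rfl fun i _ => show 4 * K - 2 * i = 2 * (2 * K - i) by omega, prod_mul_distrib,
      prod_const, card_range, ← Nat.descFactorial_eq_prod_range,
      Nat.descFactorial_eq_factorial_mul_choose, Nat.centralBinom_eq_two_mul_choose]
  have hterm : ∏ i ∈ range K, N * (4 * K - 2 * i) ≤ ∏ i ∈ range K, 4 * K * (N - 2 * i) :=
    prod_le_prod' fun i hi => by
      rw [mem_range] at hi
      zify [show 2 * i ≤ 4 * K by omega, show 2 * i ≤ N by omega]
      nlinarith
  rw [prod_mul_distrib, prod_mul_distrib, prod_const, prod_const, card_range, hfour] at hterm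
  have hbinom := Nat.four_pow_le_two_mul_self_mul_centralBinom K hK
  have htwo : 2 * 2 ^ (K - 1) = 2 ^ K := mul_pow_sub_one hK.ne' 2
  have hpos : 0 < 4 ^ K * K.factorial := Nat.mul_pos (Nat.pow_pos four_pos) K.factorial_pos
  refine Nat.le_of_mul_le_mul_left ?_ hpos
  calc 4 ^ K * K.factorial * (4 * N) ^ K
      ≤ 2 * K * K.centralBinom * K.factorial * (4 * N) ^ K := by gcongr
    _ = 2 * K * 2 ^ K * (N ^ K * (2 ^ K * (K.factorial * K.centralBinom))) := by
      rw [mul_pow, show 4 ^ K = 2 ^ K * 2 ^ K from mul_pow 2 2 K]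
      ring
    _ ≤ 2 * K * 2 ^ K * ((4 * K) ^ K * ∏ i ∈ range K, (N - 2 * i)) := by gcongr
    _ = 4 * K * (4 * K) ^ K * ((∏ i ∈ range K, (N - 2 * i)) * 2 ^ (K - 1)) := by
      rw [← htwo]
      ring
    _ ≤ 4 * K * (4 * K) ^ K * (B * K.factorial) := by gcongr
    _ = 4 ^ K * K.factorial * (4 * K ^ (K + 1) * B) := by
      rw [mul_pow, pow_succ]
      ring

theorem not_four_mul_pow_le_of_sq_le {K N B : ℕ} (hK : 2 ≤ K) (hN : K ^ 2 ≤ N)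
    (hB : B ^ 2 ≤ N ^ K) : ¬ (4 * N) ^ K ≤ 4 * K ^ (K + 1) * B := fun h => by
  have hNpos : 0 < N ^ (2 * K) := Nat.pow_pos ((Nat.pow_pos (by omega)).trans_le hN)
  have hle : 16 ^ K * N ^ (2 * K) ≤ 16 * K ^ 2 * N ^ (2 * K) :=
    calc 16 ^ K * N ^ (2 * K) = ((4 * N) ^ K) ^ 2 := by
          rw [← pow_mul, mul_pow, mul_comm K 2, pow_mul 4 2 K, show 4 ^ 2 = 16 from rfl]
      _ ≤ (4 * K ^ (K + 1) * B) ^ 2 := Nat.pow_le_pow_left h 2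
      _ = 16 * K ^ 2 * ((K ^ 2) ^ K * B ^ 2) := by rw [← pow_mul]; ring
      _ ≤ 16 * K ^ 2 * (N ^ K * N ^ K) := by gcongr
      _ = 16 * K ^ 2 * N ^ (2 * K) := by rw [← pow_add, ← two_mul]
  have hlt : 16 * K ^ 2 < 16 ^ K :=
    calc 16 * K ^ 2 < 16 * (2 ^ K) ^ 2 := by gcongr; exact Nat.lt_two_pow_self
      _ = 4 ^ 2 * 4 ^ K := by rw [← pow_mul, mul_comm K 2, pow_mul]; norm_num
      _ ≤ 4 ^ K * 4 ^ K := by gcongr; norm_num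
      _ = 16 ^ K := (mul_pow 4 4 K).symm
  exact absurd (Nat.le_of_mul_le_mul_right hle hNpos) hlt.not_ge

section Logarithms

open Real

theorem log_three_bounds : 1.0974 ≤ log 3 ∧ log 3 ≤ 1.1091 := by
  have hlower : log ((2 : ℝ) ^ 19) ≤ log ((3 : ℝ) ^ 12) :=
    log_le_log (by norm_num) (by norm_num)
  have hupper : log ((3 : ℝ) ^ 5) ≤ log ((2 : ℝ) ^ 8) := log_le_log (by norm_num) (by norm_num)
  rw [log_pow, log_pow] at hlower hupper
  push_cast at hlower hupper
  constructor <;> linarith [log_two_gt_d9, log_two_lt_d9]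

theorem log_bounds_of_fifty_le {r : ℝ} (hr : 50 ≤ r) : 3.8 ≤ log r ∧ log r ≤ r / 50 + 2.928 := by
  have hlower : log ((2 : ℝ) ^ 11) ≤ log (r ^ 2) := log_le_log (by norm_num) (by nlinarith)
  have htangent : log (r / 50) ≤ r / 50 - 1 := log_le_sub_one_of_pos (by positivity)
  have hfifty : log ((50 : ℝ) ^ 3) ≤ log ((2 : ℝ) ^ 17) :=
    log_le_log (by norm_num) (by norm_num)
  rw [log_div (by positivity) (by norm_num)] at htangent
  rw [log_pow, log_pow] at hlower hfifty
  push_cast at hlower hfifty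
  constructor <;> linarith [log_two_gt_d9, log_two_lt_d9]

theorem concaveOn_sub_mul_mul_log {a b : ℝ} (ha : 0 ≤ a) (hb : 0 ≤ b) :
    ConcaveOn ℝ (Set.Ioi 0) fun s => (a - b * s) * log s := by
  have hsum := (strictConcaveOn_log_Ioi.concaveOn.smul ha).add
    ((concaveOn_negMulLog.subset Set.Ioi_subset_Ici_self (convex_Ioi 0)).smul hb)
  refine hsum.congr fun s _ => ?_
  simp only [Pi.add_apply, smul_eq_mul, negMulLog]
  ring

theorem log_inequality_of_le {r s : ℝ} (hr : 50 ≤ r) (hs : 2 * r ≤ s) (hs' : s ≤ 9 / 4 * r) :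
    (r ^ 2 + 1) * log r + (11 / 16 * r ^ 2 + 1) * log 2 < (r ^ 2 - 3 - s / 3) * log s := by
  obtain ⟨hlower, hupper⟩ := log_bounds_of_fifty_le hr
  have hlog : log 2 + log r ≤ log s := by
    rw [← log_mul (by norm_num) (by positivity)]
    exact log_le_log (by positivity) hs
  have hprod : (r ^ 2 - 3 - 3 / 4 * r) * (log 2 + log r) ≤ (r ^ 2 - 3 - s / 3) * log s :=
    mul_le_mul (by linarith) hlog (by linarith [log_two_gt_d9]) (by nlinarith)
  have hmain : (3 / 4 * r + 4) * log r ≤ (3 / 4 * r + 4) * (r / 50 + 2.928) :=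
    mul_le_mul_of_nonneg_left hupper (by positivity)
  have htwo : (5 / 16 * r ^ 2 - 3 / 4 * r - 4) * 0.693 ≤
      (5 / 16 * r ^ 2 - 3 / 4 * r - 4) * log 2 :=
    mul_le_mul_of_nonneg_left (by linarith [log_two_gt_d9]) (by nlinarith)
  nlinarith

theorem log_inequality_of_ge {r s : ℝ} (hr : 50 ≤ r) (hs : 9 / 4 * r ≤ s) (hs' : s ≤ r ^ 2) :
    (r ^ 2 + 1) * log r + (r ^ 2 + 34) * log 2 < (r ^ 2 - 3 - s / 3) * log s := by
  obtain ⟨hlower, hupper⟩ := log_bounds_of_fifty_le hr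
  obtain ⟨hthree, hthree'⟩ := log_three_bounds
  have hleft : (r ^ 2 + 1) * log r + (r ^ 2 + 34) * log 2 <
      (r ^ 2 - 3 - 1 / 3 * (9 / 4 * r)) * log (9 / 4 * r) := by
    have hlog : log (9 / 4 * r) = 2 * log 3 - 2 * log 2 + log r := by
      rw [log_mul (by norm_num) (by positivity), log_div (by norm_num) (by norm_num),
        show (9 : ℝ) = 3 ^ 2 by norm_num, show (4 : ℝ) = 2 ^ 2 by norm_num, log_pow, log_pow]
      norm_num
    have hmain : (3 / 4 * r + 4) * log r ≤ (3 / 4 * r + 4) * (r / 50 + 2.928) :=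
      mul_le_mul_of_nonneg_left hupper (by positivity)
    have hlin : (3 / 4 * r + 3) * (2 * log 3 - 2 * log 2) ≤ (3 / 4 * r + 3) * 0.832 :=
      mul_le_mul_of_nonneg_left (by linarith [log_two_gt_d9]) (by positivity)
    rw [hlog]
    nlinarith [log_two_lt_d9]
  have hright : (r ^ 2 + 1) * log r + (r ^ 2 + 34) * log 2 <
      (r ^ 2 - 3 - 1 / 3 * r ^ 2) * log (r ^ 2) := by
    have hmain : (1 / 3 * r ^ 2 - 7) * 3.8 ≤ (1 / 3 * r ^ 2 - 7) * log r :=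
      mul_le_mul_of_nonneg_left hlower (by nlinarith)
    have htwo : (r ^ 2 + 34) * log 2 ≤ (r ^ 2 + 34) * 0.694 :=
      mul_le_mul_of_nonneg_left (by linarith [log_two_lt_d9]) (by positivity)
    rw [log_pow]
    push_cast
    nlinarith
  have hmin := (concaveOn_sub_mul_mul_log (a := r ^ 2 - 3) (b := 1 / 3) (by nlinarith)
    (by norm_num)).min_le_of_mem_Icc (x := 9 / 4 * r) (y := r ^ 2) (z := s)
    (Set.mem_Ioi.2 (by positivity)) (Set.mem_Ioi.2 (by positivity)) ⟨hs, hs'⟩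
  rw [div_eq_inv_mul, ← one_div]
  exact (lt_min hleft hright).trans_le hmin

theorem log_inequality_of_four_mul_pow_le {K N M c : ℕ} (hK : 0 < K) (hN : 0 < N)
    (hc : 3 * c ≤ Nat.sqrt N + 9) (H : (4 * N) ^ K ≤ 4 * K ^ (K + 1) * (4 ^ M * N ^ c)) :
    (√K ^ 2 - 3 - √N / 3) * log √N ≤ (√K ^ 2 + 1) * log √K + (M - K + 1) * log 2 := by
  have hN' : (1 : ℝ) ≤ N := Nat.one_le_cast.2 hN
  have hlog : log ((4 * N : ℝ) ^ K) ≤ log (4 * K ^ (K + 1) * (4 ^ M * N ^ c) : ℝ) :=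
    log_le_log (by positivity) (by exact_mod_cast H)
  rw [log_pow, log_mul (by norm_num) (by positivity), log_mul (by positivity) (by positivity),
    log_mul (by norm_num) (by positivity), log_mul (by positivity) (by positivity), log_pow,
    log_pow, log_pow, show (4 : ℝ) = 2 ^ 2 by norm_num, log_pow] at hlog
  have hcard : (c : ℝ) ≤ √N / 3 + 3 := by
    have hcast : (3 * c : ℝ) ≤ Nat.sqrt N + 9 := by exact_mod_cast hc
    linarith [nat_sqrt_le_real_sqrt (a := N)]
  have hmul : c * log √N ≤ (√N / 3 + 3) * log √N :=
    mul_le_mul_of_nonneg_right hcard (log_nonneg (one_le_sqrt.2 hN'))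
  rw [log_sqrt N.cast_nonneg] at hmul ⊢
  rw [log_sqrt K.cast_nonneg, sq_sqrt K.cast_nonneg]
  push_cast at hlog
  linarith

theorem not_four_mul_pow_le_of_le_sq {K N M c : ℕ} (hK : 2500 ≤ K) (hN : 4 * K ≤ N)
    (hN' : N ≤ K ^ 2) (hM : M ≤ 2 * K + 33) (hM' : 3 * M ≤ N) (hc : 3 * c ≤ Nat.sqrt N + 9) :
    ¬ (4 * N) ^ K ≤ 4 * K ^ (K + 1) * (4 ^ M * N ^ c) := fun H => by
  have hle := log_inequality_of_four_mul_pow_le (by omega) (by omega) hc H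
  have hK' : (2500 : ℝ) ≤ K := by exact_mod_cast hK
  have hr : 50 ≤ √(K : ℝ) := le_sqrt_of_sq_le (by linarith)
  have hsq := sq_sqrt (K.cast_nonneg (α := ℝ))
  have hsqN := sq_sqrt (N.cast_nonneg (α := ℝ))
  rcases le_total (√N) (9 / 4 * √K) with hs | hs
  · have hs' : 2 * √(K : ℝ) ≤ √N := le_sqrt_of_sq_le (by
      rw [mul_pow, hsq]
      exact_mod_cast (show 2 ^ 2 * K ≤ N by omega))
    have hM'' : (M : ℝ) - K + 1 ≤ 11 / 16 * √(K : ℝ) ^ 2 + 1 := by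
      have hcast : (3 * M : ℝ) ≤ N := by exact_mod_cast hM'
      nlinarith [sqrt_nonneg (N : ℝ)]
    exact (log_inequality_of_le hr hs' hs).not_ge
      (hle.trans (by gcongr))
  · have hs' : √(N : ℝ) ≤ √(K : ℝ) ^ 2 := by
      rw [hsq]
      exact sqrt_le_left (by positivity) |>.2 (by exact_mod_cast hN')
    have hM'' : (M : ℝ) - K + 1 ≤ √(K : ℝ) ^ 2 + 34 := by
      have hcast : (M : ℝ) ≤ 2 * K + 33 := by exact_mod_cast hM
      linarith
    exact (log_inequality_of_ge hr hs hs').not_ge (hle.trans (by gcongr))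

end Logarithms

theorem not_four_mul_pow_le_prod_pow_log {K N M : ℕ} {Q : Finset ℕ} (hK : 2500 ≤ K)
    (hN : 4 * K ≤ N) (hM : M ≤ 2 * K + 33) (hM' : 3 * M ≤ N) (hQp : ∀ p ∈ Q, p.Prime)
    (hQM : ∀ p ∈ Q, p ≤ M) : ¬ (4 * N) ^ K ≤ 4 * K ^ (K + 1) * ∏ p ∈ Q, p ^ Nat.log p N := by
  intro hbound
  rcases le_total N (K ^ 2) with hNK | hNK
  · refine not_four_mul_pow_le_of_le_sq (M := M) (c := #{p ∈ Q | p ≤ Nat.sqrt N}) hK hN hNK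
      hM hM' ?_ (hbound.trans (Nat.mul_le_mul_left _ ?_))
    · have hcard := card_le_primeCounting' (Q := {p ∈ Q | p ≤ Nat.sqrt N})
        (fun p hp => hQp p (mem_filter.1 hp).1) fun p hp => Nat.lt_succ_iff.2 (mem_filter.1 hp).2
      exact (Nat.mul_le_mul_left 3 hcard).trans (three_mul_primeCounting'_le _)
    · exact (prod_pow_log_le_prod_mul_pow_card (by omega) hQp).trans
        (Nat.mul_le_mul_right _ (prod_primes_le_four_pow hQp hQM))
  · refine not_four_mul_pow_le_of_sq_le (by omega) hNK ?_ hbound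
    have hcard := card_le_primeCounting' (s := 2 * K + 34) hQp fun p hp => by
      have := hQM p hp
      omega
    have hhalf := two_mul_primeCounting'_le hK
    calc (∏ p ∈ Q, p ^ Nat.log p N) ^ 2 ≤ (N ^ #Q) ^ 2 :=
          Nat.pow_le_pow_left (prod_pow_log_le_pow_card (by omega) Q) 2
      _ = N ^ (#Q * 2) := (pow_mul N _ 2).symm
      _ ≤ N ^ K := Nat.pow_le_pow_right (by omega) (by omega)

theorem exists_large_prime_dvd_of_large {K t : ℕ} (hK : 2500 ≤ K) (ht : K + 17 ≤ t) :
    ∃ i < K, ∃ p, p.Prime ∧ 2 * K + 33 < p ∧ p ∣ 2 * t + 1 + 2 * i := by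
  by_contra! hsmooth
  obtain ⟨m, rfl⟩ : ∃ m, K = m + 1 := ⟨K - 1, by omega⟩
  set N := 2 * (t + m) + 1
  set M := min (2 * (m + 1) + 33) (N / 3)
  set Q := {p ∈ range (M + 1) | p.Prime}
  have hQp : ∀ p ∈ Q, p.Prime := fun p hp => (mem_filter.1 hp).2
  have hQM : ∀ p ∈ Q, p ≤ M := fun p hp => Nat.lt_succ_iff.1 (mem_range.1 (mem_filter.1 hp).1)
  have hdvd : ∀ i ∈ range (m + 1), ∀ p, p.Prime → p ∣ 2 * t + 1 + 2 * i → p ∈ Q := by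
    intro i hi p hp hdvd
    rw [mem_range] at hi
    have hle := not_lt.1 fun hlt => hsmooth i hi p hp hlt hdvd
    -- The cofactor of `p` in the odd number `2 * t + 1 + 2 * i > p` is odd, hence at least `3`.
    obtain ⟨q, hq⟩ := hdvd
    have hq₃ : 3 ≤ q := by
      by_contra! hlt
      interval_cases q <;> omega
    have hmul := Nat.mul_le_mul_left p hq₃
    refine mem_filter.2 ⟨mem_range.2 (Nat.lt_succ_iff.2 (le_min hle ?_)), hp⟩
    omega
  have hwindow := prod_window_mul_two_pow_le_prod_pow_log hQp hdvd
  rw [← prod_range_reflect, prod_congr rfl fun i hi => show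
    2 * t + 1 + 2 * (m + 1 - 1 - i) = N - 2 * i by rw [mem_range] at hi; omega] at hwindow
  exact not_four_mul_pow_le_prod_pow_log hK (by omega) (by omega) (by omega) hQp hQM
    (four_mul_pow_le_of_prod_le (by omega) (by omega) hwindow)

/-! ### Large primes in short windows -/

/-- Sieve test: `m` is divisible by none of the odd primes below `37`. -/
def isSifted (m : ℕ) : Bool := Nat.beq (Nat.gcd m smallPrimes.prod) 1

theorem mem_smallPrimes_or_isSifted {p : ℕ} (hp : p.Prime) :
    p ∈ smallPrimes ∨ isSifted p = true := by
  refine or_iff_not_imp_right.2 fun hsift => ?_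
  have hdvd : p ∣ smallPrimes.prod := by
    by_contra hndvd
    rw [isSifted, Nat.beq_eq] at hsift
    exact hsift (hp.coprime_iff_not_dvd.2 hndvd)
  obtain ⟨q, hq, hpq⟩ := (Prime.dvd_prod_iff hp.prime).1 hdvd
  rwa [(Nat.prime_dvd_prime_iff_eq hp (prime_of_mem_smallPrimes hq)).1 hpq]

theorem prime_of_isSifted {m : ℕ} (h : isSifted m = true) (hodd : Odd m) (hone : m ≠ 1)
    (hlt : m < 37 ^ 2) : m.Prime := by
  by_contra hnp
  have hmin : m.minFac < 37 :=
    lt_of_pow_lt_pow_left₀ 2 (by norm_num) ((Nat.minFac_sq_le_self hodd.pos hnp).trans_lt hlt)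
  have hmem := mem_smallPrimes (Nat.minFac_prime hone)
    (hodd.of_dvd_nat m.minFac_dvd) hmin
  have hdvd := Nat.dvd_gcd m.minFac_dvd (List.dvd_prod hmem)
  rw [Nat.eq_of_beq_eq_true h, Nat.dvd_one, Nat.minFac_eq_one_iff] at hdvd
  exact hone hdvd

/-- The odd primes up to `2 * k`. -/
def oddPrimes (k : ℕ) : Finset ℕ := {p ∈ range (2 * k + 1) | p.Prime ∧ Odd p}

theorem card_oddPrimes_succ_le (k : ℕ) : #(oddPrimes (k + 1)) ≤ #(oddPrimes k) +
    if smallPrimes.any (Nat.beq (2 * k + 1)) || isSifted (2 * k + 1) then 1 else 0 := by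
  by_cases hp : (2 * k + 1).Prime
  · have htest : (smallPrimes.any (Nat.beq (2 * k + 1)) || isSifted (2 * k + 1)) = true := by
      rw [Bool.or_eq_true, List.any_eq_true]
      exact (mem_smallPrimes_or_isSifted hp).imp_left fun h => ⟨_, h, Nat.beq_refl _⟩
    have hsub : oddPrimes (k + 1) ⊆ insert (2 * k + 1) (oddPrimes k) := fun p h => by
      simp only [oddPrimes, mem_filter, mem_range, mem_insert] at h ⊢
      obtain ⟨r, hr⟩ := h.2.2
      rcases eq_or_ne p (2 * k + 1) with heq | hne
      · exact Or.inl heq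
      · exact Or.inr ⟨by omega, h.2⟩
    rw [if_pos htest]
    exact (card_le_card hsub).trans (card_insert_le _ _)
  · refine (card_le_card fun p h => ?_).trans (Nat.le_add_right _ _)
    simp only [oddPrimes, mem_filter, mem_range] at h ⊢
    obtain ⟨r, hr⟩ := h.2.2
    have hne : p ≠ 2 * k + 1 := fun heq => hp (heq ▸ h.2.1)
    exact ⟨by omega, h.2⟩

/-- Applies `f` to `x`; matching on `x` makes the kernel evaluate it first. -/
def force {α : Type} (x : ℕ) (f : ℕ → α) : α :=
  match x with
  | 0 => f 0
  | m + 1 => f (m + 1)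

theorem force_eq {α : Type} (x : ℕ) (f : ℕ → α) : force x f = f x := by
  cases x <;> rfl

/-- Checks `j! < (3 j) ^ (j - #(oddPrimes j)) * 2 ^ (j - 1)` for `k ≤ j < k + d`, given `F = k!` and
an upper bound `c` for `#(oddPrimes k)`. -/
def factorialLtLoop : (d k c F : ℕ) → Bool
  | 0, _, _, _ => true
  | d + 1, k, c, F =>
    Nat.blt F ((3 * k) ^ (k - c) * 2 ^ (k - 1)) &&
      force (c + if smallPrimes.any (Nat.beq (2 * k + 1)) || isSifted (2 * k + 1) then 1 else 0)
        fun c' => force (F * (k + 1)) fun F' => factorialLtLoop d (k + 1) c' F'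

theorem factorial_lt_of_loop {d k c j : ℕ} (h : factorialLtLoop d k c k.factorial = true)
    (hc : #(oddPrimes k) ≤ c) (hk : 0 < k) (hj : k ≤ j) (hjd : j < k + d) :
    j.factorial < (3 * j) ^ (j - #(oddPrimes j)) * 2 ^ (j - 1) := by
  induction d generalizing k c with
  | zero => omega
  | succ d ih =>
    simp only [factorialLtLoop, force_eq, Bool.and_eq_true, Nat.blt_eq] at h
    rcases hj.eq_or_lt with rfl | hlt
    · exact h.1.trans_le (Nat.mul_le_mul_right _ (Nat.pow_le_pow_right (by omega) (by omega)))
    · refine ih ?_ ((card_oddPrimes_succ_le k).trans (Nat.add_le_add_right hc _)) k.succ_pos hlt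
        (by omega)
      rw [Nat.factorial_succ, mul_comm (k + 1)]
      exact h.2

theorem factorial_lt_of_le_of_lt {k : ℕ} (hk : 17 ≤ k) (hk' : k < 2520) :
    k.factorial < (3 * k) ^ (k - #(oddPrimes k)) * 2 ^ (k - 1) := by
  have hcheck : factorialLtLoop 2503 17 10 (Nat.factorial 17) = true := by decide +kernel
  exact factorial_lt_of_loop hcheck (by decide +kernel) (by norm_num) hk hk'

theorem lt_three_mul_of_primes_le {k c : ℕ} (hk : 17 ≤ k) (hk' : k < 2520) (hc : Odd c)
    (H : ∀ i < k, ∀ p, p.Prime → p ∣ c + 2 * i → p ≤ 2 * k) : c < 3 * k := by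
  by_contra! hle
  have hQ : ∀ i ∈ range (k - 1 + 1), ∀ p, p.Prime → p ∣ c + 2 * i → p ∈ oddPrimes k := by
    intro i hi p hp hdvd
    rw [mem_range] at hi
    refine mem_filter.2 ⟨mem_range.2 (Nat.lt_succ_iff.2 (H i (by omega) p hp hdvd)), hp, ?_⟩
    exact (hc.add_even (even_two_mul i)).of_dvd_nat hdvd
  have hremoval := pow_sub_card_mul_two_pow_le hc hQ
  rw [show k - 1 + 1 = k by omega] at hremoval
  have hmono := Nat.mul_le_mul_right (2 ^ (k - 1))
    (Nat.pow_le_pow_left hle (k - #(oddPrimes k)))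
  exact absurd (factorial_lt_of_le_of_lt hk hk') (hmono.trans hremoval).not_gt

theorem exists_isSifted_window : ∀ a < 83, ∀ b < (a + 51) / 2, (a = 0 → 2 ≤ b) →
    ((List.range (a + 17)).any fun i =>
      Nat.blt (2 * (a + 17)) (2 * a + 1 + 2 * b + 2 * i) &&
        isSifted (2 * a + 1 + 2 * b + 2 * i)) = true := by
  have hcheck : ((List.range 83).all fun a => (List.range ((a + 51) / 2)).all fun b =>
      (Nat.beq a 0 && Nat.blt b 2) || (List.range (a + 17)).any fun i =>
        Nat.blt (2 * (a + 17)) (2 * a + 1 + 2 * b + 2 * i) &&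
          isSifted (2 * a + 1 + 2 * b + 2 * i)) = true := by decide +kernel
  intro a ha b hb hex
  have hwindow := List.all_eq_true.1 (List.all_eq_true.1 hcheck a (List.mem_range.2 ha)) b
    (List.mem_range.2 hb)
  refine (Bool.or_eq_true _ _ ▸ hwindow).resolve_left fun h => ?_
  rw [Bool.and_eq_true, Nat.beq_eq, Nat.blt_eq] at h
  exact (hex h.1).not_gt h.2

theorem exists_prime_window_of_lt_hundred {k c : ℕ} (hk : 17 ≤ k) (hk' : k < 100) (hc : Odd c)
    (hck : 2 * k ≤ c + 33) (hck' : c < 3 * k) (hex : k = 17 → 3 < c) :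
    ∃ i < k, 2 * k < c + 2 * i ∧ (c + 2 * i).Prime := by
  obtain ⟨a, rfl⟩ : ∃ a, k = a + 17 := ⟨k - 17, by omega⟩
  obtain ⟨b, rfl⟩ : ∃ b, c = 2 * a + 1 + 2 * b := by
    obtain ⟨r, rfl⟩ := hc
    exact ⟨r - a, by omega⟩
  obtain ⟨i, hi, htest⟩ := List.any_eq_true.1
    (exists_isSifted_window a (by omega) b (by omega) (by omega))
  rw [Bool.and_eq_true, Nat.blt_eq] at htest
  rw [List.mem_range] at hi
  exact ⟨i, hi, htest.1, prime_of_isSifted htest.2 (hc.add_even (even_two_mul i)) (by omega)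
    (by omega)⟩

theorem exists_prime_three_mul_le {k : ℕ} (hk : 100 ≤ k) (hk' : k < 2520) :
    ∃ q, q.Prime ∧ 3 * k ≤ q ∧ q + 35 ≤ 4 * k := by
  rcases Nat.lt_or_ge k 120 with h | h; · exact ⟨359, by norm_num, by omega, by omega⟩
  rcases Nat.lt_or_ge k 148 with h | h; · exact ⟨443, by norm_num, by omega, by omega⟩
  rcases Nat.lt_or_ge k 186 with h | h; · exact ⟨557, by norm_num, by omega, by omega⟩
  rcases Nat.lt_or_ge k 237 with h | h; · exact ⟨709, by norm_num, by omega, by omega⟩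
  rcases Nat.lt_or_ge k 304 with h | h; · exact ⟨911, by norm_num, by omega, by omega⟩
  rcases Nat.lt_or_ge k 393 with h | h; · exact ⟨1181, by norm_num, by omega, by omega⟩
  rcases Nat.lt_or_ge k 511 with h | h; · exact ⟨1531, by norm_num, by omega, by omega⟩
  rcases Nat.lt_or_ge k 668 with h | h; · exact ⟨2003, by norm_num, by omega, by omega⟩
  rcases Nat.lt_or_ge k 878 with h | h; · exact ⟨2633, by norm_num, by omega, by omega⟩
  rcases Nat.lt_or_ge k 1157 with h | h; · exact ⟨3469, by norm_num, by omega, by omega⟩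
  rcases Nat.lt_or_ge k 1531 with h | h; · exact ⟨4591, by norm_num, by omega, by omega⟩
  rcases Nat.lt_or_ge k 2030 with h | h; · exact ⟨6089, by norm_num, by omega, by omega⟩
  exact ⟨8081, by norm_num, by omega, by omega⟩

theorem exists_large_prime_dvd_window {k c : ℕ} (hk : 17 ≤ k) (hc : Odd c) (hck : 2 * k ≤ c + 33)
    (hex : k = 17 → 3 < c) : ∃ i < k, ∃ p, p.Prime ∧ 2 * k < p ∧ p ∣ c + 2 * i := by
  rcases Nat.lt_or_ge k 2520 with hlt | hge
  · by_contra! hsmooth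
    have hc₃ : c < 3 * k := lt_three_mul_of_primes_le hk hlt hc fun i hi p hp hdvd =>
      not_lt.1 fun h => hsmooth i hi p hp h hdvd
    rcases Nat.lt_or_ge k 100 with h100 | h100
    · obtain ⟨i, hi, hgt, hp⟩ := exists_prime_window_of_lt_hundred hk h100 hc hck hc₃ hex
      exact hsmooth i hi _ hp hgt dvd_rfl
    · obtain ⟨q, hq, hle, hge⟩ := exists_prime_three_mul_le h100 hlt
      obtain ⟨r, hr⟩ := hq.odd_of_ne_two (by omega)
      obtain ⟨s, hs⟩ := hc
      exact hsmooth (r - s) (by omega) q hq (by omega)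
        (by rw [show c + 2 * (r - s) = q by omega])
  · -- The first `17` terms are dropped so that all remaining terms exceed `2 * k`.
    obtain ⟨r, rfl⟩ := hc
    obtain ⟨i, hi, p, hp, hgt, hdvd⟩ :=
      exists_large_prime_dvd_of_large (K := k - 17) (t := r + 17) (by omega) (by omega)
    obtain ⟨s, rfl⟩ := hp.odd_of_ne_two (by omega)
    refine ⟨i + 17, by omega, 2 * s + 1, hp, by omega, ?_⟩
    rwa [show 2 * r + 1 + 2 * (i + 17) = 2 * (r + 17) + 1 + 2 * i by ring]

/-! ### Smooth windows -/

theorem exists_prod_erase_ordProj_le {p N e : ℕ} (hp : p.Prime) {I : Finset ℕ} (hI : I.Nonempty)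
    (hN : ∀ o ∈ I, o ≤ N) (he : ∀ o ∈ I, o < 2 ^ e) :
    ∃ o₀ ∈ I, ∏ o ∈ I.erase o₀, p ^ (N - o).factorization p ≤
      ∏ o ∈ I.erase o₀, Nat.gcd (Nat.dist o o₀) (p ^ e) := by
  obtain ⟨o₀, ho₀, hdvd⟩ := exists_forall_ordProj_dvd_sub p hI (N - ·)
  refine ⟨o₀, ho₀, prod_le_prod' fun o ho => ?_⟩
  obtain ⟨hne, ho⟩ := mem_erase.1 ho
  have hdist : p ^ (N - o).factorization p ∣ Nat.dist o o₀ := by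
    have hsub : (((N - o : ℕ) : ℤ) - (N - o₀ : ℕ)).natAbs = Nat.dist o o₀ := by
      have := hN o ho
      have := hN o₀ ho₀
      unfold Nat.dist
      omega
    rw [← hsub, ← Int.natCast_dvd]
    exact hdvd o ho
  have hpos : 0 < Nat.dist o o₀ := Nat.dist_pos_of_ne hne
  have hlt : Nat.dist o o₀ < 2 ^ e := by
    have := he o ho
    have := he o₀ ho₀
    unfold Nat.dist
    omega
  have hle : (N - o).factorization p ≤ e :=
    (Nat.pow_le_pow_iff_right one_lt_two).1 (((Nat.pow_le_pow_left hp.two_le _).trans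
      (Nat.le_of_dvd hpos hdist)).trans hlt.le)
  exact Nat.le_of_dvd (Nat.gcd_pos_of_pos_left _ hpos) (Nat.dvd_gcd hdist (pow_dvd_pow p hle))

theorem pow_sub_card_le_prod_removal {N m e : ℕ} {I Q : Finset ℕ} {M : ℕ → ℕ} (hm : 0 < m)
    (hI : I.Nonempty) (hmN : ∀ o ∈ I, m + o ≤ N) (he : ∀ o ∈ I, o < 2 ^ e)
    (hQ : ∀ o ∈ I, ∀ p, p.Prime → p ∣ N - o → p ∈ Q) (hprime : ∀ p ∈ Q, p.Prime)
    (hM : ∀ p ∈ Q, ∀ o₀ ∈ I, ∏ o ∈ I.erase o₀, Nat.gcd (Nat.dist o o₀) (p ^ e) ≤ M p) :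
    m ^ (#I - #Q) ≤ ∏ p ∈ Q, M p := by
  have hindex : ∀ p, ∃ o₀ ∈ I, p.Prime → ∏ o ∈ I.erase o₀, p ^ (N - o).factorization p ≤
      ∏ o ∈ I.erase o₀, Nat.gcd (Nat.dist o o₀) (p ^ e) := fun p => by
    by_cases hp : p.Prime
    · obtain ⟨o₀, ho₀, hle⟩ := exists_prod_erase_ordProj_le hp hI
        (fun o ho => (Nat.le_add_left _ _).trans (hmN o ho)) he
      exact ⟨o₀, ho₀, fun _ => hle⟩
    · exact hI.imp fun o ho => ⟨ho, fun h => absurd h hp⟩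
  choose o₀ ho₀ hle using hindex
  set R := I \ Q.image o₀ with hR
  have hcard : #I - #Q ≤ #R :=
    (Nat.sub_le_sub_left card_image_le _).trans (le_card_sdiff (Q.image o₀) I)
  have hRI : R ⊆ I := sdiff_subset
  calc m ^ (#I - #Q) ≤ m ^ #R := Nat.pow_le_pow_right hm hcard
    _ = ∏ _o ∈ R, m := (prod_const m).symm
    _ ≤ ∏ o ∈ R, (N - o) := prod_le_prod' fun o ho => Nat.le_sub_of_add_le (hmN o (hRI ho))
    _ = ∏ o ∈ R, ∏ p ∈ Q, p ^ (N - o).factorization p := prod_congr rfl fun o ho => by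
      have hne : N - o ≠ 0 := (hm.trans_le (Nat.le_sub_of_add_le (hmN o (hRI ho)))).ne'
      rw [← Finsupp.prod_of_support_subset _ _ _ fun _ _ => pow_zero _,
        Nat.prod_factorization_pow_eq_self hne]
      intro p hp
      exact hQ o (hRI ho) p (Nat.prime_of_mem_primeFactors hp) (Nat.dvd_of_mem_primeFactors hp)
    _ = ∏ p ∈ Q, ∏ o ∈ R, p ^ (N - o).factorization p := prod_comm
    _ ≤ ∏ p ∈ Q, M p := prod_le_prod' fun p hp => by
      refine le_trans ?_ ((hle p (hprime p hp)).trans (hM p hp _ (ho₀ p)))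
      refine prod_le_prod_of_subset_of_one_le' (fun o ho => ?_) fun o _ _ =>
        Nat.one_le_pow _ _ (hprime p hp).pos
      rw [hR, mem_sdiff] at ho
      exact mem_erase.2 ⟨fun h => ho.2 (h ▸ mem_image_of_mem o₀ hp), ho.1⟩

theorem dvd_prod_pow_of_lt_two_pow {x e : ℕ} {B : List ℕ} (hx : x ≠ 0) (hlt : x < 2 ^ e)
    (hB : ∀ p, p.Prime → p ∣ x → p ∈ B) : x ∣ B.prod ^ e := by
  rcases eq_or_ne B.prod 0 with hzero | hne
  · have he : e ≠ 0 := by rintro rfl; omega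
    rw [hzero, zero_pow he]
    exact dvd_zero x
  refine (Nat.factorization_prime_le_iff_dvd hx (pow_ne_zero e hne)).1 fun p hp => ?_
  by_cases hdvd : p ∣ x
  · have hpos := (hp.dvd_iff_one_le_factorization hne).1 (List.dvd_prod (hB p hp hdvd))
    have hle : x.factorization p ≤ e :=
      Nat.factorization_le_of_le_pow (hlt.le.trans (Nat.pow_le_pow_left hp.two_le e))
    rw [Nat.factorization_pow, Finsupp.smul_apply, smul_eq_mul]
    exact hle.trans (Nat.le_mul_of_pos_right e hpos)
  · rw [Nat.factorization_eq_zero_of_not_dvd hdvd]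
    exact Nat.zero_le _

/-- The numbers `o` for which `2 * n - o` is one of `2 * (n - l)` and `oddTerm (-U) (n - l)` with
`l < k`. -/
def offsets (U k : ℕ) : List ℕ :=
  (List.range k).map (2 * ·) ++ (List.range k).map fun l => 2 * l + (2 * U - 1)

theorem mem_offsets {U k o : ℕ} :
    o ∈ offsets U k ↔ ∃ l < k, o = 2 * l ∨ o = 2 * l + (2 * U - 1) := by
  simp only [offsets, List.mem_append, List.mem_map, List.mem_range, ← exists_or, ← and_or_left,
    eq_comm (a := o)]

theorem length_offsets (U k : ℕ) : (offsets U k).length = 2 * k := by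
  simp [offsets, two_mul]

theorem nodup_offsets {U : ℕ} (hU : 1 ≤ U) (k : ℕ) : (offsets U k).Nodup := by
  refine List.Nodup.append (List.nodup_range.map fun a b h => ?_)
    (List.nodup_range.map fun a b h => ?_) ?_
  · simpa using h
  · simpa using h
  · simp only [List.Disjoint, List.mem_map, List.mem_range]
    rintro o ⟨a, -, rfl⟩ ⟨b, -, hb⟩
    omega

theorem ModelFactorization.dvd_coeff_zero_of_dvd_dist {U n k p o : ℕ} {g h : ℤ[X]}
    (F : ModelFactorization (-U) n k g h) (hU : 1 ≤ U) (hkn : 2 * k ≤ n) (hp : p.Prime)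
    (hodd : Odd p) (ho : o ∈ offsets U k) (hdvd : p ∣ Nat.dist (2 * n) o) :
    (p : ℤ) ∣ g.coeff 0 := by
  have : Fact p.Prime := ⟨hp⟩
  obtain ⟨l, hl, rfl | rfl⟩ := mem_offsets.1 ho
  · refine F.dvd_of_dvd_term hodd hl (Or.inl ?_)
    rw [show Nat.dist (2 * n) (2 * l) = 2 * (n - l) by unfold Nat.dist; omega] at hdvd
    exact (Nat.Coprime.symm (Nat.coprime_two_left.2 hodd)).dvd_of_dvd_mul_left hdvd
  · refine F.dvd_of_dvd_term hodd hl (Or.inr ?_)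
    rw [Int.natCast_dvd, natAbs_oddTerm]
    rwa [show Nat.dist (2 * n) (2 * l + (2 * U - 1)) = absOddTerm U (n - l) by
      unfold Nat.dist absOddTerm; omega] at hdvd

/-- The largest product `∏ o ≠ o₀, gcd |o - o₀| (p ^ 7)` over `o₀ ∈ os`; the division removes the
factor of `o = o₀`. -/
def removalBound (p : ℕ) (os : List ℕ) : ℕ :=
  force (p ^ 7) fun q => os.foldr (fun o₀ b => force b fun b =>
    force (os.foldr (fun o => Nat.mul (Nat.gcd (Nat.dist o o₀) q)) 1) (max b)) 0 / q

theorem prod_erase_le_removalBound {p o₀ : ℕ} {os : List ℕ} (hp : 0 < p) (hos : os.Nodup)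
    (ho₀ : o₀ ∈ os) : ∏ o ∈ os.toFinset.erase o₀, Nat.gcd (Nat.dist o o₀) (p ^ 7) ≤
      removalBound p os := by
  have hmax : ∀ l : List ℕ, o₀ ∈ l → (os.map fun o => Nat.gcd (Nat.dist o o₀) (p ^ 7)).prod ≤
      l.foldr (fun o₀ b => force b fun b =>
        force (os.foldr (fun o => Nat.mul (Nat.gcd (Nat.dist o o₀) (p ^ 7))) 1) (max b)) 0 := by
    intro l hl
    induction l with
    | nil => simp at hl
    | cons a l ih =>
      rw [List.foldr_cons, force_eq, force_eq]
      rcases List.mem_cons.1 hl with rfl | hl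
      · rw [List.prod_eq_foldr, List.foldr_map]
        exact le_max_right _ _
      · exact (ih hl).trans (le_max_left _ _)
  rw [removalBound, force_eq, Nat.le_div_iff_mul_le (pow_pos hp 7)]
  refine le_of_eq_of_le ?_ (hmax os ho₀)
  rw [← List.prod_toFinset _ hos, ← prod_erase_mul _ _ (List.mem_toFinset.2 ho₀), Nat.dist_self,
    Nat.gcd_zero_left]

/-- Conjunction of `P` over the `n` with `a ≤ n < a + 2 ^ d`, except on dyadic subintervals of
length at least two where `T` holds at the left end. -/
def dyadicAll (P T : ℕ → Bool) : ℕ → ℕ → Bool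
  | 0, a => P a
  | d + 1, a => T a || (dyadicAll P T d a && force (a + 2 ^ d) (dyadicAll P T d))

theorem or_of_dyadicAll {P T : ℕ → Bool} (hT : ∀ m n, m ≤ n → T m = true → T n = true) {d a n : ℕ}
    (h : dyadicAll P T d a = true) (han : a ≤ n) (hn : n < a + 2 ^ d) :
    T n = true ∨ P n = true := by
  induction d generalizing a with
  | zero =>
    obtain rfl : n = a := by omega
    exact Or.inr h
  | succ d ih =>
    rw [dyadicAll, force_eq, Bool.or_eq_true, Bool.and_eq_true] at h
    rcases h with h | ⟨hlow, hhigh⟩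
    · exact Or.inl (hT _ _ han h)
    · rcases Nat.lt_or_ge n (a + 2 ^ d) with hlt | hge
      · exact ih hlow han hlt
      · exact ih hhigh hge (by rw [add_assoc, ← two_mul, ← pow_succ']; exact hn)

/-- Whether `n` is so large that the primes `2 :: B` cannot account for all the terms, where `D`
bounds the product of the terms kept by Erdős's argument and `r` is their number; the arithmetic
is not written with type class operations, which the kernel evaluates more slowly. -/
def exceedsRemoval (U k D r n : ℕ) : Bool :=
  Nat.blt D (Nat.pow (Nat.sub (Nat.mul 2 n) (2 * (U + k) - 1)) r) && Nat.ble (U + k) n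

theorem exceedsRemoval_eq_true_iff {U k D r n : ℕ} : exceedsRemoval U k D r n = true ↔
    D < (2 * n - (2 * (U + k) - 1)) ^ r ∧ U + k ≤ n := by
  rw [exceedsRemoval, Bool.and_eq_true, Nat.blt_eq, Nat.ble_eq]
  rfl

theorem exceedsRemoval_mono {U k D r m n : ℕ} (hmn : m ≤ n) (h : exceedsRemoval U k D r m = true) :
    exceedsRemoval U k D r n = true := by
  rw [exceedsRemoval_eq_true_iff] at h ⊢
  exact ⟨h.1.trans_le (Nat.pow_le_pow_left (by omega) _), h.2.trans hmn⟩

/-- Whether `n` or some `2 * n - o` with `o ∈ os` does not divide `K`, or `n` is excluded by a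
Newton edge or listed in `ex`; `n` comes first because it decides most cases. -/
def windowExcluded (U k K : ℕ) (os ex : List ℕ) (n : ℕ) : Bool :=
  Nat.blt 0 (Nat.mod K n) || (os.any (fun o => Nat.blt 0 (K % Nat.dist (2 * n) o)) ||
    (edgeExcluded U n k || ex.any (Nat.beq n)))

/-- Checks that for `n ∉ ex` the constant coefficient of a factor of degree `k` of `model (-U) n`
has a prime factor outside `B`. -/
def smoothCheck (U k : ℕ) (B ex : List ℕ) : Bool :=
  force ((2 :: B).map fun p => removalBound p (offsets U k)).prod fun D =>
    force (2 * k - (2 :: B).length) fun r => force ((2 :: B).prod ^ 20) fun K =>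
      exceedsRemoval U k D r (2 * k + 2 ^ 17) &&
        dyadicAll (windowExcluded U k K (offsets U k) ex) (exceedsRemoval U k D r) 17 (2 * k)

section SmoothWindow

variable {U n k : ℕ} {B ex : List ℕ} {g h : ℤ[X]}

theorem not_exceedsRemoval (hU₁ : 1 ≤ U) (hU : U ≤ 18) (hk₁ : 1 ≤ k) (hk : k ≤ 16)
    (hB : (2 :: B).Nodup) (hprime : ∀ p ∈ 2 :: B, p.Prime)
    (hsmooth : ∀ o ∈ offsets U k, ∀ p, p.Prime → p ∣ Nat.dist (2 * n) o → p ∈ 2 :: B) :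
    exceedsRemoval U k ((2 :: B).map fun p => removalBound p (offsets U k)).prod
      (2 * k - (2 :: B).length) n = false := by
  rw [← Bool.not_eq_true, exceedsRemoval_eq_true_iff, and_comm, not_and, not_lt]
  intro hn
  have hbounds : ∀ o ∈ (offsets U k).toFinset,
      2 * n - (2 * (U + k) - 1) + o ≤ 2 * n ∧ o < 2 ^ 7 := by
    intro o ho
    obtain ⟨l, hl, rfl | rfl⟩ := mem_offsets.1 (List.mem_toFinset.1 ho) <;> omega
  have hcard : #(offsets U k).toFinset = 2 * k := by
    rw [List.toFinset_card_of_nodup (nodup_offsets hU₁ k), length_offsets]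
  have key := pow_sub_card_le_prod_removal (N := 2 * n) (Q := (2 :: B).toFinset)
    (M := fun p => removalBound p (offsets U k)) (by omega : 0 < 2 * n - (2 * (U + k) - 1))
    (card_pos.1 (by omega)) (fun o ho => (hbounds o ho).1) (fun o ho => (hbounds o ho).2)
    (fun o ho p hp hdvd => List.mem_toFinset.2 (hsmooth o (List.mem_toFinset.1 ho) p hp (by
      rwa [Nat.dist_eq_sub_of_le_right (by have := hbounds o ho; omega)])))
    (fun p hp => hprime p (List.mem_toFinset.1 hp))
    fun p hp o₀ ho₀ => prod_erase_le_removalBound (hprime p (List.mem_toFinset.1 hp)).pos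
      (nodup_offsets hU₁ k) (List.mem_toFinset.1 ho₀)
  rwa [hcard, List.toFinset_card_of_nodup hB, List.prod_toFinset _ hB] at key

theorem ModelFactorization.mem_of_windowExcluded (F : ModelFactorization (-U) n k g h)
    (hU₁ : 1 ≤ U) (hU : U ≤ 18) (hk₁ : 1 ≤ k) (hkn : 2 * k ≤ n) (hn : n < 2 ^ 18)
    (hsmooth : ∀ o ∈ offsets U k, ∀ p, p.Prime → p ∣ Nat.dist (2 * n) o → p ∈ 2 :: B)
    (H : windowExcluded U k ((2 :: B).prod ^ 20) (offsets U k) ex n = true) : n ∈ ex := by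
  have hterm : ∀ o ∈ offsets U k, Nat.dist (2 * n) o ∣ (2 :: B).prod ^ 20 := by
    intro o ho
    have hne : Nat.dist (2 * n) o ≠ 0 ∧ Nat.dist (2 * n) o < 2 ^ 20 := by
      obtain ⟨l, hl, rfl | rfl⟩ := mem_offsets.1 ho <;> unfold Nat.dist <;> omega
    exact dvd_prod_pow_of_lt_two_pow hne.1 hne.2 (hsmooth o ho)
  have hn : n ∣ (2 :: B).prod ^ 20 :=
    (Dvd.intro_left 2 (Nat.dist_zero_right _).symm).trans
      (hterm 0 (mem_offsets.2 ⟨0, hk₁, .inl rfl⟩))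
  rw [windowExcluded, Bool.or_eq_true, Bool.or_eq_true, Bool.or_eq_true, F.not_edgeExcluded] at H
  rcases H with H | H | H | H
  · rw [Nat.blt_eq] at H
    exact absurd (Nat.mod_eq_zero_of_dvd hn) H.ne'
  · obtain ⟨o, ho, hmod⟩ := List.any_eq_true.1 H
    rw [Nat.blt_eq] at hmod
    exact absurd (Nat.mod_eq_zero_of_dvd (hterm o ho)) hmod.ne'
  · cases H
  · obtain ⟨m, hm, heq⟩ := List.any_eq_true.1 H
    rwa [Nat.eq_of_beq_eq_true heq]

theorem ModelFactorization.mem_of_smoothCheck (F : ModelFactorization (-U) n k g h)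
    (hU₁ : 1 ≤ U) (hU : U ≤ 18) (hk₁ : 1 ≤ k) (hk : k ≤ 16) (hkn : 2 * k ≤ n)
    (hB : (2 :: B).Nodup) (hprime : ∀ p ∈ 2 :: B, p.Prime)
    (hg : ∀ p : ℕ, p.Prime → (p : ℤ) ∣ g.coeff 0 → p ∈ B) (H : smoothCheck U k B ex = true) :
    n ∈ ex := by
  have hsmooth : ∀ o ∈ offsets U k, ∀ p, p.Prime → p ∣ Nat.dist (2 * n) o → p ∈ 2 :: B := by
    intro o ho p hp hdvd
    rcases hp.eq_two_or_odd' with rfl | hodd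
    · exact List.mem_cons_self
    · exact List.mem_cons_of_mem _ (hg p hp (F.dvd_coeff_zero_of_dvd_dist hU₁ hkn hp hodd ho hdvd))
  have hnot := not_exceedsRemoval hU₁ hU hk₁ hk hB hprime hsmooth
  rw [smoothCheck, force_eq, force_eq, force_eq, Bool.and_eq_true] at H
  have hlt : n < 2 * k + 2 ^ 17 := by
    by_contra! hge
    exact Bool.false_ne_true (hnot.symm.trans (exceedsRemoval_mono hge H.1))
  refine F.mem_of_windowExcluded hU₁ hU hk₁ hkn (by omega) hsmooth
    ((or_of_dyadicAll (fun _ _ => exceedsRemoval_mono) H.2 hkn hlt).resolve_left ?_)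
  exact ne_true_of_eq_false hnot

end SmoothWindow

/-! ### Reduction modulo an auxiliary prime -/

/-- The reduction of `model u n` modulo `q`. -/
noncomputable def modelMod (q : ℕ) (u : ℤ) (n : ℕ) : (ZMod q)[X] :=
  (model u n).map (Int.castRingHom (ZMod q))

section ModelMod

variable {q : ℕ}

theorem coeff_modelMod (q : ℕ) (u : ℤ) (n j : ℕ) :
    (modelMod q u n).coeff j = (modelCoeff u n j : ZMod q) := by
  rw [modelMod, coeff_map, coeff_model, eq_intCast]

theorem modelMod_zero (q : ℕ) (u : ℤ) : modelMod q u 0 = 1 := by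
  rw [modelMod, model_zero, Polynomial.map_one]

theorem modelMod_succ (q : ℕ) (u : ℤ) (n : ℕ) :
    modelMod q u (n + 1) = (C ((4 * n + 3 + 2 * u : ℤ) : ZMod q) + X) * modelMod q u n
      - C ((2 * n * oddTerm u n : ℤ) : ZMod q) * modelMod q u (n - 1) := by
  have hint : model u (n + 1) = (C (4 * n + 3 + 2 * u) + X) * model u n
      - C (2 * n * oddTerm u n) * model u (n - 1) := by
    rcases n with _ | n
    · rw [model_zero, model_one, oddTerm]
      simp only [Nat.cast_zero, mul_zero, zero_mul, zero_add, mul_one, C_0, sub_zero]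
      ring_nf
    · rw [model_recurrence, add_tsub_cancel_right]
      push_cast
      ring_nf
  simp only [modelMod, hint, Polynomial.map_sub, Polynomial.map_mul, Polynomial.map_add, map_C,
    map_X, Int.coe_castRingHom]

variable [hq : Fact q.Prime]

theorem modelMod_self (hodd : Odd q) (u : ℤ) : modelMod q u q = X ^ q := by
  ext j
  rw [coeff_modelMod, coeff_X_pow]
  rcases lt_trichotomy j q with h | rfl | h
  · rw [if_neg h.ne, ZMod.intCast_zmod_eq_zero_iff_dvd]
    rcases Nat.eq_zero_or_pos j with rfl | hj
    · obtain ⟨i, hi, hdvd⟩ := exists_dvd_oddTerm hodd u 0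
      exact (hdvd.trans (dvd_prod_of_mem _ (by simpa using hi))).mul_left _
    · exact (mod_cast hq.out.dvd_choose_self hj.ne' h : (q : ℤ) ∣ _).mul_right _
  · rw [modelCoeff_self, if_pos rfl, Int.cast_one]
  · rw [modelCoeff_eq_zero_of_lt h, if_neg h.ne', Int.cast_zero]

theorem modelMod_add (hodd : Odd q) (u : ℤ) (n : ℕ) :
    modelMod q u (n + q) = X ^ q * modelMod q u n := by
  induction n using Nat.strong_induction_on with
  | _ n ih =>
    rcases n with _ | n
    · rw [zero_add, modelMod_self hodd, modelMod_zero, mul_one]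
    have hpred : ((2 * n * oddTerm u n : ℤ) : ZMod q) = 0 ∨
        modelMod q u (n + q - 1) = X ^ q * modelMod q u (n - 1) := by
      rcases n with _ | n
      · simp
      · exact Or.inr (by
          rw [show n + 1 + q - 1 = n + q by omega, ih n (by omega), add_tsub_cancel_right])
    have hlin : ((4 * (n + q : ℕ) + 3 + 2 * u : ℤ) : ZMod q) = (4 * n + 3 + 2 * u : ℤ) := by
      push_cast
      simp
    have hconst : ((2 * (n + q : ℕ) * oddTerm u (n + q) : ℤ) : ZMod q) =
        (2 * n * oddTerm u n : ℤ) := by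
      unfold oddTerm
      push_cast
      simp
    rw [add_right_comm, modelMod_succ, modelMod_succ, ih n (by omega), hlin, hconst]
    rcases hpred with h | h <;> rw [h]
    · simp only [C_0]; ring
    · ring

theorem dvd_modelMod_mod (hodd : Odd q) {u : ℤ} {n : ℕ} {f : (ZMod q)[X]} (hf : f.coeff 0 ≠ 0)
    (h : f ∣ modelMod q u n) : f ∣ modelMod q u (n % q) := by
  have hcop : IsCoprime f (X ^ q) := by
    refine IsCoprime.pow_right ?_
    rwa [isCoprime_comm, irreducible_X.coprime_iff_not_dvd, X_dvd_iff]
  rw [← Nat.mod_add_div' n q] at h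
  generalize n / q = m at h
  induction m with
  | zero => simpa using h
  | succ m ih =>
    rw [add_mul, one_mul, ← add_assoc, modelMod_add hodd] at h
    exact ih (hcop.dvd_of_dvd_mul_left h)

end ModelMod

section OfDigits

theorem degree_ofDigits_X_lt {R : Type*} [Semiring R] (l : List ℕ) :
    (Nat.ofDigits (X : R[X]) l).degree < l.length := by
  rw [degree_lt_iff_coeff_zero]
  induction l with
  | nil => simp [Nat.ofDigits]
  | cons a l ih =>
    intro m hm
    rcases m with _ | m
    · simp at hm
    · rw [Nat.ofDigits, coeff_add, coeff_X_mul, ih m (by simpa using hm), ← C_eq_natCast,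
        coeff_C_succ, add_zero]

theorem exists_ofDigits_X_eq {q : ℕ} [NeZero q] {k : ℕ} {f : (ZMod q)[X]} (hf : f.degree < k) :
    ∃ l : List ℕ, l.length = k ∧ (∀ a ∈ l, a < q) ∧ Nat.ofDigits X l = f := by
  induction k generalizing f with
  | zero =>
    rw [Nat.cast_zero, Nat.WithBot.lt_zero_iff, degree_eq_bot] at hf
    exact ⟨[], rfl, by simp, by rw [hf, Nat.ofDigits]⟩
  | succ k ih =>
    have hdeg : f.divX.degree < k := by
      rw [degree_lt_iff_coeff_zero] at hf ⊢
      exact fun m hm => by rw [coeff_divX]; exact hf _ (by omega)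
    obtain ⟨l, rfl, hlt, hl⟩ := ih hdeg
    refine ⟨(f.coeff 0).val :: l, rfl, List.forall_mem_cons.2 ⟨ZMod.val_lt _, hlt⟩, ?_⟩
    rw [Nat.ofDigits, hl, ← C_eq_natCast, ZMod.natCast_zmod_val, add_comm]
    exact X_mul_divX_add f

end OfDigits

/-- The coefficients of `prev + (A + X) v + B w` modulo the monic polynomial `X ^ k - r`, where `v`,
`w` and `r` are lists of `k` coefficients and `top` is the leading coefficient of `v`. -/
def recurrenceStep (q A B top : ℕ) : List ℕ → List ℕ → List ℕ → ℕ → List ℕ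
  | c :: r, a :: v, b :: w, prev =>
    force ((A * a + prev + top * c + B * b) % q) fun x => x :: recurrenceStep q A B top r v w a
  | _, _, _, _ => []

/-- For `v` and `w` the remainders of `modelMod q (-U) s` and `modelMod q (-U) (s - 1)` modulo the
monic polynomial `X ^ k - r`, checks that `X ^ k - r` divides none of the next `fuel` polynomials
`modelMod q (-U) i`, except when `ok i`. -/
def residuesOk (U q : ℕ) (r : List ℕ) (ok : ℕ → Bool) : ℕ → ℕ → List ℕ → List ℕ → Bool
  | 0, _, _, _ => true
  | fuel + 1, s, v, w =>
    (v.any (fun a => Nat.blt 0 (a % q)) || ok s) &&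
      force ((4 * s + 3 + 2 * U * (q - 1)) % q) fun A =>
      force ((q - 1) * (2 * s * (2 * s + 1 + 2 * U * (q - 1))) % q) fun B =>
      force (v.getLastD 0) fun top =>
      force (s + 1) fun s =>
      residuesOk U q r ok fuel s (recurrenceStep q A B top r v w 0) v

/-- Conjunction of `P` over the lists of length `m` with entries less than `q`. -/
def allDigits (q : ℕ) : ℕ → (List ℕ → Bool) → Bool
  | 0, P => P []
  | m + 1, P => (List.range q).all fun x => allDigits q m fun l => P (x :: l)

/-- Whether `q` divides `oddTerm (-U) (s - l)` for some `l < k`. -/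
def hasSmallTerm (U q k s : ℕ) : Bool :=
  (List.range k).any fun l => Nat.ble l s && Nat.beq (absOddTerm U (s - l) % q) 0

/-- The least `f ≤ m` such that `P` holds on `[f, m)`. -/
def trimRange (P : ℕ → Bool) : ℕ → ℕ
  | 0 => 0
  | m + 1 => bif P m then trimRange P m else m + 1

/-- Checks that a factor of degree `m + 1` of `model (-U) n` whose constant coefficient is congruent
to `-d` modulo `q`, but not to `0`, can only exist if `ok (n % q)`. -/
def residueCheck (U m q d : ℕ) (ok : ℕ → Bool) : Bool :=
  force (trimRange (fun s => ok s || hasSmallTerm U q (m + 1) s) q) fun f =>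
    allDigits q m fun t =>
      residuesOk U q (d :: t) (fun s => ok s || hasSmallTerm U q (m + 1) s) f 0
        (1 :: List.replicate m 0) (0 :: List.replicate m 0)

theorem of_trimRange_le {P : ℕ → Bool} {m s : ℕ} (h : trimRange P m ≤ s) (hs : s < m) :
    P s = true := by
  induction m with
  | zero => omega
  | succ m ih =>
    rw [trimRange] at h
    rcases hP : P m
    · rw [hP, cond_false] at h
      omega
    · rw [hP, cond_true] at h
      rcases (Nat.lt_succ_iff.1 hs).lt_or_eq with hlt | rfl
      · exact ih h hlt
      · exact hP

theorem of_allDigits {q m : ℕ} {P : List ℕ → Bool} (h : allDigits q m P = true) {l : List ℕ}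
    (hl : l.length = m) (hlt : ∀ x ∈ l, x < q) : P l = true := by
  induction m generalizing P l with
  | zero => rwa [List.length_eq_zero_iff.1 hl]
  | succ m ih =>
    obtain _ | ⟨a, l⟩ := l
    · cases hl
    · rw [List.forall_mem_cons] at hlt
      exact ih (List.all_eq_true.1 h a (List.mem_range.2 hlt.1)) (Nat.succ.inj hl) hlt.2

theorem length_recurrenceStep (q A B top : ℕ) {r v w : List ℕ} (prev : ℕ)
    (hv : v.length = r.length) (hw : w.length = r.length) :
    (recurrenceStep q A B top r v w prev).length = r.length := by
  induction r generalizing v w prev with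
  | nil => simp only [recurrenceStep, List.length_nil]
  | cons c r ih =>
    obtain _ | ⟨a, v⟩ := v
    · cases hv
    obtain _ | ⟨b, w⟩ := w
    · cases hw
    rw [recurrenceStep, force_eq, List.length_cons, List.length_cons,
      ih a (Nat.succ.inj hv) (Nat.succ.inj hw)]

theorem ofDigits_recurrenceStep (q A B top : ℕ) {r v w : List ℕ} (prev : ℕ)
    (hv : v.length = r.length) (hw : w.length = r.length) :
    Nat.ofDigits (X : (ZMod q)[X]) (recurrenceStep q A B top r v w prev)
        + X ^ r.length * ((v.getLastD prev : ℕ) : (ZMod q)[X])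
      = (prev : (ZMod q)[X]) + ((A : (ZMod q)[X]) + X) * Nat.ofDigits X v
        + (top : (ZMod q)[X]) * Nat.ofDigits X r + (B : (ZMod q)[X]) * Nat.ofDigits X w := by
  induction r generalizing v w prev with
  | nil =>
    rw [List.length_nil, List.length_eq_zero_iff] at hv hw
    simp [hv, hw, recurrenceStep, Nat.ofDigits]
  | cons c r ih =>
    obtain _ | ⟨a, v⟩ := v
    · cases hv
    obtain _ | ⟨b, w⟩ := w
    · cases hw
    have hmod (x : ℕ) : ((x % q : ℕ) : (ZMod q)[X]) = x := by
      rw [← C_eq_natCast, ZMod.natCast_mod, C_eq_natCast]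
    rw [recurrenceStep, force_eq]
    simp only [Nat.ofDigits, List.getLastD_cons,
      List.length_cons, hmod, pow_succ]
    push_cast
    linear_combination X * ih a (Nat.succ.inj hv) (Nat.succ.inj hw)

theorem ofDigits_X_ne_zero {q : ℕ} [Fact q.Prime] {l : List ℕ}
    (h : l.any (fun a => Nat.blt 0 (a % q)) = true) : Nat.ofDigits (X : (ZMod q)[X]) l ≠ 0 := by
  induction l with
  | nil => cases h
  | cons a l ih =>
    intro hzero
    have ha : (a : ZMod q) = 0 := by
      simpa [Nat.ofDigits] using congrArg (coeff · 0) hzero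
    rw [List.any_cons, Nat.mod_eq_zero_of_dvd ((ZMod.natCast_eq_zero_iff a q).1 ha)] at h
    rw [Nat.ofDigits, ← C_eq_natCast, ha, C_0, zero_add, mul_eq_zero] at hzero
    exact ih h (hzero.resolve_left X_ne_zero)

section ResidueCheck

variable {U q : ℕ} [hq : Fact q.Prime]

theorem dvd_modelMod_succ_sub {s : ℕ} {r v w : List ℕ} (hv : v.length = r.length)
    (hw : w.length = r.length)
    (hdvd : (X ^ r.length - Nat.ofDigits X r : (ZMod q)[X]) ∣
      modelMod q (-U) s - Nat.ofDigits X v)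
    (hdvd' : s = 0 ∨ (X ^ r.length - Nat.ofDigits X r : (ZMod q)[X]) ∣
      modelMod q (-U) (s - 1) - Nat.ofDigits X w) :
    (X ^ r.length - Nat.ofDigits X r : (ZMod q)[X]) ∣ modelMod q (-U) (s + 1) -
      Nat.ofDigits X (recurrenceStep q ((4 * s + 3 + 2 * U * (q - 1)) % q)
        ((q - 1) * (2 * s * (2 * s + 1 + 2 * U * (q - 1))) % q) (v.getLastD 0) r v w 0) := by
  have hneg : ((q - 1 : ℕ) : ZMod q) = -1 := by simp [Nat.cast_sub hq.out.one_le]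
  have hA : (((4 * s + 3 + 2 * U * (q - 1)) % q : ℕ) : (ZMod q)[X]) =
      C ((4 * s + 3 + 2 * (-U) : ℤ) : ZMod q) := by
    rw [← C_eq_natCast, ZMod.natCast_mod, C_inj]
    push_cast
    rw [hneg]
    ring
  have hB : (((q - 1) * (2 * s * (2 * s + 1 + 2 * U * (q - 1))) % q : ℕ) : (ZMod q)[X]) =
      -C ((2 * s * oddTerm (-U) s : ℤ) : ZMod q) := by
    rw [← C_eq_natCast, ZMod.natCast_mod, ← C_neg, C_inj, oddTerm]
    push_cast
    rw [hneg]
    ring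
  have hstep := ofDigits_recurrenceStep q ((4 * s + 3 + 2 * U * (q - 1)) % q)
    ((q - 1) * (2 * s * (2 * s + 1 + 2 * U * (q - 1))) % q) (v.getLastD 0) 0 hv hw
  rw [hA, hB] at hstep
  obtain ⟨a, ha⟩ := hdvd
  have hprev : (X ^ r.length - Nat.ofDigits X r : (ZMod q)[X]) ∣
      C ((2 * s * oddTerm (-U) s : ℤ) : ZMod q) *
        (modelMod q (-U) (s - 1) - Nat.ofDigits X w) := by
    rcases hdvd' with rfl | hdvd'
    · simp
    · exact hdvd'.mul_left _
  obtain ⟨b, hb⟩ := hprev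
  refine ⟨(C ((4 * s + 3 + 2 * (-U) : ℤ) : ZMod q) + X) * a - b +
    ((v.getLastD 0 : ℕ) : (ZMod q)[X]), ?_⟩
  rw [modelMod_succ]
  rw [Nat.cast_zero] at hstep
  linear_combination (C ((4 * s + 3 + 2 * (-U) : ℤ) : ZMod q) + X) * ha - hb - hstep

theorem of_residuesOk {r v w : List ℕ} {ok : ℕ → Bool} {fuel s i : ℕ}
    (h : residuesOk U q r ok fuel s v w = true) (hv : v.length = r.length)
    (hw : w.length = r.length)
    (hdvd : (X ^ r.length - Nat.ofDigits X r : (ZMod q)[X]) ∣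
      modelMod q (-U) s - Nat.ofDigits X v)
    (hdvd' : s = 0 ∨ (X ^ r.length - Nat.ofDigits X r : (ZMod q)[X]) ∣
      modelMod q (-U) (s - 1) - Nat.ofDigits X w)
    (hsi : s ≤ i) (hi : i < s + fuel)
    (hmodel : (X ^ r.length - Nat.ofDigits X r : (ZMod q)[X]) ∣ modelMod q (-U) i) :
    ok i = true := by
  induction fuel generalizing s v w with
  | zero => omega
  | succ fuel ih =>
    rw [residuesOk, force_eq, force_eq, force_eq, force_eq, Bool.and_eq_true, Bool.or_eq_true] at h
    rcases hsi.lt_or_eq with hlt | rfl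
    · exact ih h.2 (length_recurrenceStep q _ _ _ _ hv hw) hv
        (dvd_modelMod_succ_sub hv hw hdvd hdvd') (Or.inr hdvd) hlt (by omega)
    · refine h.1.resolve_left fun hany => ofDigits_X_ne_zero hany ?_
      have hdeg : (X ^ r.length - Nat.ofDigits X r : (ZMod q)[X]).degree = v.length := by
        rw [degree_sub_eq_left_of_degree_lt] <;> rw [degree_X_pow]
        · rw [hv]
        · exact degree_ofDigits_X_lt r
      exact eq_zero_of_dvd_of_degree_lt (by simpa using dvd_sub hmodel hdvd)
        (hdeg ▸ degree_ofDigits_X_lt v)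

theorem ModelFactorization.hasSmallTerm_eq_false {n k : ℕ} {g h : ℤ[X]}
    (F : ModelFactorization (-U) n k g h) (hodd : Odd q) (hg : ¬ (q : ℤ) ∣ g.coeff 0) :
    hasSmallTerm U q k (n % q) = false := by
  rw [← Bool.not_eq_true]
  intro hterm
  obtain ⟨l, hl, hdvd⟩ := List.any_eq_true.1 hterm
  rw [Bool.and_eq_true, Nat.ble_eq, Nat.beq_eq] at hdvd
  refine hg (F.dvd_of_dvd_term hodd (List.mem_range.1 hl) (Or.inr ?_))
  have hshift : oddTerm (-U) (n - l) = oddTerm (-U) (n % q - l) + q * (2 * (n / q : ℕ)) := by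
    rw [oddTerm, oddTerm, show n - l = (n % q - l) + q * (n / q) by
      have := Nat.mod_add_div n q; omega]
    push_cast
    ring
  rw [hshift]
  refine dvd_add (Int.natCast_dvd.2 ?_) (dvd_mul_right _ _)
  rw [natAbs_oddTerm]
  exact Nat.dvd_of_mod_eq_zero hdvd.2

theorem exists_map_eq_X_pow_sub_ofDigits {g : ℤ[X]} {m d : ℕ} (hg : g.Monic)
    (hdeg : g.natDegree = m + 1) (hd : (q : ℤ) ∣ g.coeff 0 + d) :
    ∃ t : List ℕ, t.length = m ∧ (∀ a ∈ t, a < q) ∧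
      g.map (Int.castRingHom (ZMod q)) = X ^ (m + 1) - Nat.ofDigits X (d :: t) := by
  have hmonic := hg.map (Int.castRingHom (ZMod q))
  have hdegree : (g.map (Int.castRingHom (ZMod q))).degree = (m + 1 : ℕ) := by
    rw [hg.degree_map, degree_eq_natDegree hg.ne_zero, hdeg]
  have hlt : (X ^ (m + 1) - g.map (Int.castRingHom (ZMod q))).degree <
      ((m + 1 : ℕ) : WithBot ℕ) := by
    rw [← hdegree]
    refine degree_sub_lt_right (by rw [hdegree, degree_X_pow]) hmonic.ne_zero ?_
    rw [hmonic.leadingCoeff, leadingCoeff_X_pow]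
  obtain ⟨l, hlen, hlq, hl⟩ := exists_ofDigits_X_eq hlt
  obtain _ | ⟨a, t⟩ := l
  · cases hlen
  have had : (a : ZMod q) = d := by
    have hzero : (g.coeff 0 : ZMod q) + d = 0 :=
      mod_cast (ZMod.intCast_zmod_eq_zero_iff_dvd _ _).2 hd
    have hcoeff : (a : ZMod q) = -(g.coeff 0 : ZMod q) := by
      simpa [Nat.ofDigits, coeff_X_pow] using congrArg (coeff · 0) hl
    linear_combination hcoeff - hzero
  refine ⟨t, Nat.succ.inj hlen, fun x hx => hlq x (List.mem_cons_of_mem _ hx), ?_⟩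
  rw [Nat.ofDigits, ← C_eq_natCast, ← had, C_eq_natCast, ← Nat.ofDigits, hl, sub_sub_cancel]

theorem ofDigits_replicate_zero_eq_zero {R : Type*} [Semiring R] (b : R) (m : ℕ) :
    Nat.ofDigits b (List.replicate m 0) = 0 := by
  induction m with
  | zero => rfl
  | succ m ih => rw [List.replicate_succ, Nat.ofDigits, ih, Nat.cast_zero, mul_zero, add_zero]

theorem ModelFactorization.ok_of_residueCheck {n m d : ℕ} {g h : ℤ[X]} {ok : ℕ → Bool}
    (F : ModelFactorization (-U) n (m + 1) g h) (hodd : Odd q) (hd : (q : ℤ) ∣ g.coeff 0 + d)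
    (hg : ¬ (q : ℤ) ∣ g.coeff 0) (H : residueCheck U m q d ok = true) : ok (n % q) = true := by
  obtain ⟨t, ht, hlt, hmap⟩ := exists_map_eq_X_pow_sub_ofDigits F.monic_left F.natDegree_left hd
  have hcoeff : (g.map (Int.castRingHom (ZMod q))).coeff 0 ≠ 0 := by
    rwa [coeff_map, eq_intCast, Ne, ZMod.intCast_zmod_eq_zero_iff_dvd]
  have hdvd : g.map (Int.castRingHom (ZMod q)) ∣ modelMod q (-U) (n % q) :=
    dvd_modelMod_mod hodd hcoeff ⟨h.map _, by rw [modelMod, ← F.mul_eq, Polynomial.map_mul]⟩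
  have hlen : (d :: t).length = m + 1 := by rw [List.length_cons, ht]
  have hzeros : Nat.ofDigits (X : (ZMod q)[X]) (1 :: List.replicate m 0) = 1 := by
    rw [Nat.ofDigits, ofDigits_replicate_zero_eq_zero, Nat.cast_one, mul_zero, add_zero]
  rw [residueCheck, force_eq] at H
  have key : (ok (n % q) || hasSmallTerm U q (m + 1) (n % q)) = true := by
    rcases le_or_gt (trimRange (fun s => ok s || hasSmallTerm U q (m + 1) s) q) (n % q) with
      hle | hgt
    · exact of_trimRange_le hle (Nat.mod_lt _ hq.out.pos)
    · exact of_residuesOk (of_allDigits H ht hlt) (by simp [ht]) (by simp [ht])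
        (by rw [modelMod_zero, hzeros, sub_self]; exact dvd_zero _) (Or.inl rfl) (Nat.zero_le _)
        (by rwa [zero_add]) (by rwa [hlen, ← hmap])
  rwa [F.hasSmallTerm_eq_false hodd hg, Bool.or_false] at key

end ResidueCheck

/-! ### Enumeration of the constant coefficients -/

/-- The bound `e` on the valuation at `p` of the constant coefficient of a factor, certified by
`linearBound` with slope `a / b`. -/
structure ValBound where
  /-- The prime. -/
  p : ℕ
  /-- The bound. -/
  e : ℕ
  /-- The numerator of the slope. -/
  a : ℕ
  /-- The denominator of the slope. -/
  b : ℕ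

/-- Checks `ModelFactorization.padicValInt_le_of_linearBound` for `t` in degree `k`. -/
def ValBound.isValid (t : ValBound) (U k : ℕ) : Bool :=
  Nat.blt (t.a * k) (t.b * (t.e + 1)) && linearBound U t.p t.a t.b (t.b * (t.e + 1)) (t.a * k)

/-- The products of powers of the primes of `L` that respect the bounds of `L` and have at least `m`
prime factors. -/
def candidates : List ValBound → ℕ → List ℕ
  | [], m => bif Nat.beq m 0 then [1] else []
  | t :: L, m => candidates L m ++
    (List.range t.e).flatMap fun i => (candidates L (m - 1)).map fun y => t.p ^ (i + 1) * y

theorem pow_mul_mem_candidates {t : ValBound} {L : List ValBound} {m y i : ℕ} (hi : i < t.e)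
    (hy : y ∈ candidates L (m - 1)) : t.p ^ (i + 1) * y ∈ candidates (t :: L) m :=
  List.mem_append_right _
    (List.mem_flatMap.2 ⟨i, List.mem_range.2 hi, List.mem_map.2 ⟨y, hy, rfl⟩⟩)

theorem mem_candidates {L : List ValBound} (hL : (L.map ValBound.p).Nodup)
    (hprime : ∀ t ∈ L, t.p.Prime) {x m : ℕ} (hx : x ≠ 0)
    (hmem : ∀ p, p.Prime → p ∣ x → p ∈ L.map ValBound.p)
    (hval : ∀ t ∈ L, x.factorization t.p ≤ t.e) (hm : m ≤ (L.map ValBound.p).countP (· ∣ x)) :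
    x ∈ candidates L m := by
  induction L generalizing x m with
  | nil =>
    obtain rfl : x = 1 := by
      by_contra hne
      obtain ⟨p, hp, hdvd⟩ := Nat.exists_prime_and_dvd hne
      cases hmem p hp hdvd
    obtain rfl : m = 0 := Nat.le_zero.1 hm
    exact List.mem_singleton_self 1
  | cons t L ih =>
    obtain ⟨htL, hL⟩ := List.nodup_cons.1 hL
    rw [List.forall_mem_cons] at hprime hval
    rw [List.map_cons, List.countP_cons] at hm
    by_cases hdvd : t.p ∣ x
    · have hpos := hprime.1.factorization_pos_of_dvd hx hdvd
      have hdvd_ordCompl : ∀ q ∈ L.map ValBound.p, q ∣ x → q ∣ ordCompl[t.p] x := by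
        rintro _ hq hqx
        obtain ⟨s, hs, rfl⟩ := List.mem_map.1 hq
        refine Nat.dvd_ordCompl_of_dvd_not_dvd hqx fun hts => htL ?_
        rwa [(Nat.prime_dvd_prime_iff_eq hprime.1 (hprime.2 s hs)).1 hts]
      rw [← Nat.ordProj_mul_ordCompl_eq_self x t.p,
        show x.factorization t.p = x.factorization t.p - 1 + 1 by omega]
      refine pow_mul_mem_candidates (by omega) ?_
      rw [Nat.sub_add_cancel hpos]
      refine ih hL hprime.2 (Nat.ordCompl_pos t.p hx).ne' (fun p hp hpx => ?_) (fun s hs => ?_) ?_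
      · refine (List.mem_cons.1 (hmem p hp (hpx.trans (Nat.ordCompl_dvd x t.p)))).resolve_left ?_
        rintro rfl
        exact Nat.not_dvd_ordCompl hp hx hpx
      · exact ((Nat.factorization_le_iff_dvd (Nat.ordCompl_pos t.p hx).ne' hx).2
          (Nat.ordCompl_dvd x t.p) s.p).trans (hval.2 s hs)
      · have hmono := List.countP_mono_left (p := (· ∣ x)) (q := (· ∣ ordCompl[t.p] x))
          fun q hq hqx => decide_eq_true (hdvd_ordCompl q hq (of_decide_eq_true hqx))
        rw [if_pos (decide_eq_true hdvd)] at hm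
        omega
    · refine List.mem_append_left _ (ih hL hprime.2 hx (fun p hp hpx => ?_) hval.2 ?_)
      · exact (List.mem_cons.1 (hmem p hp hpx)).resolve_left (by rintro rfl; exact hdvd hpx)
      · simpa [hdvd] using hm

/-- Checks by reduction modulo `q` that a factor of degree `k` of `model (-U) n` with constant
coefficient `z` can only exist if `ok (n % q)`. -/
def residueExcludes (U k : ℕ) (z : ℤ) (q : ℕ) (ok : ℕ → Bool) : Bool :=
  smallPrimes.any (Nat.beq q) &&
    force (-z % q).toNat fun d => Nat.blt 0 d && residueCheck U (k - 1) q d ok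

/-- Checks that a factor of degree `k` of `model (-U) n` whose constant coefficient is divisible by
at least `m` bad primes has its constant coefficient in `ex`, unless `ok q (n % q)` for some
`q ∈ qs`. -/
def constantCheck (U k m : ℕ) (bs : List ValBound) (qs : List ℕ) (ex : List ℤ)
    (ok : ℕ → ℕ → Bool) : Bool :=
  decide (bs.map ValBound.p = badPrimes U k) && bs.all (fun t => t.isValid U k) &&
    (candidates bs m).all fun x => force x fun x => [(x : ℤ), -x].all fun z =>
      decide (z ∈ ex) || qs.any fun q => residueExcludes U k z q (ok q)

theorem badPrimes_sublist (U k : ℕ) : (badPrimes U k).Sublist smallPrimes :=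
  List.filter_sublist.map fun i => smallPrimes.getD i 0

theorem nodup_two_cons_smallPrimes : (2 :: smallPrimes).Nodup := by decide

theorem odd_of_mem_smallPrimes {p : ℕ} (hp : p ∈ smallPrimes) : Odd p :=
  (prime_of_mem_smallPrimes hp).odd_of_ne_two fun htwo =>
    (List.nodup_cons.1 nodup_two_cons_smallPrimes).1 (htwo ▸ hp)

namespace ModelFactorization

variable {U n k : ℕ} {g h : ℤ[X]}

theorem ok_of_residueExcludes {q : ℕ} {ok : ℕ → Bool} (F : ModelFactorization (-U) n k g h)
    (hk : 1 ≤ k) (H : residueExcludes U k (g.coeff 0) q ok = true) : ok (n % q) = true := by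
  simp only [residueExcludes, force_eq, Bool.and_eq_true, List.any_eq_true, Nat.beq_eq,
    Nat.blt_eq] at H
  obtain ⟨⟨p, hp, rfl⟩, hpos, hcheck⟩ := H
  have hq : Fact q.Prime := ⟨prime_of_mem_smallPrimes hp⟩
  have hmod : ((-g.coeff 0 % q).toNat : ℤ) = -g.coeff 0 % q :=
    Int.toNat_of_nonneg (Int.emod_nonneg _ (mod_cast hq.out.ne_zero))
  obtain ⟨k, rfl⟩ := Nat.exists_eq_add_of_le' hk
  refine F.ok_of_residueCheck (odd_of_mem_smallPrimes hp) ?_ (fun hdvd => ?_) hcheck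
  · rw [hmod, Int.emod_def, add_sub, add_neg_cancel, zero_sub]
    exact (dvd_mul_right _ _).neg_right
  · rw [Int.emod_eq_zero_of_dvd hdvd.neg_right, Int.toNat_zero] at hpos
    exact absurd hpos (lt_irrefl 0)

theorem natAbs_mem_candidates {m : ℕ} {bs : List ValBound} (F : ModelFactorization (-U) n k g h)
    (hU₁ : 2 ≤ U) (hU : U ≤ 18) (hk₁ : 1 ≤ k) (hk : k ≤ 16)
    (hm : m ≤ (badPrimes U k).countP (· ∣ (g.coeff 0).natAbs))
    (hbs : bs.map ValBound.p = badPrimes U k) (hvalid : ∀ t ∈ bs, t.isValid U k = true) :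
    (g.coeff 0).natAbs ∈ candidates bs m := by
  have hsmall : ∀ t ∈ bs, t.p ∈ smallPrimes := fun t ht =>
    (badPrimes_sublist U k).subset (hbs ▸ List.mem_map_of_mem ht)
  have hprime : ∀ t ∈ bs, t.p.Prime := fun t ht => prime_of_mem_smallPrimes (hsmall t ht)
  refine mem_candidates (hbs ▸ (List.nodup_cons.1 nodup_two_cons_smallPrimes).2.sublist
    (badPrimes_sublist U k)) hprime
    (Int.natAbs_ne_zero.2 F.coeff_zero_left_ne_zero) (fun p hp hdvd => ?_) (fun t ht => ?_)
    (hbs ▸ hm)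
  · have hp : Fact p.Prime := ⟨hp⟩
    exact hbs ▸ F.mem_badPrimes hU₁ hU hk₁ hk (Int.natCast_dvd.2 hdvd)
  · have hp : Fact t.p.Prime := ⟨hprime t ht⟩
    have ht' := hvalid t ht
    rw [ValBound.isValid, Bool.and_eq_true, Nat.blt_eq] at ht'
    rw [Nat.factorization_def _ hp.out]
    exact F.padicValInt_le_of_linearBound (odd_of_mem_smallPrimes (hsmall t ht)) (by omega)
      (by omega) ht'.1 ht'.2

theorem of_constantCheck {m : ℕ} {bs : List ValBound} {qs : List ℕ} {ex : List ℤ}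
    {ok : ℕ → ℕ → Bool} (F : ModelFactorization (-U) n k g h) (hU₁ : 2 ≤ U) (hU : U ≤ 18)
    (hk₁ : 1 ≤ k) (hk : k ≤ 16) (hm : m ≤ (badPrimes U k).countP (· ∣ (g.coeff 0).natAbs))
    (H : constantCheck U k m bs qs ex ok = true) :
    g.coeff 0 ∈ ex ∨ ∃ q ∈ qs, ok q (n % q) = true := by
  rw [constantCheck, Bool.and_eq_true, Bool.and_eq_true, decide_eq_true_eq, List.all_eq_true,
    List.all_eq_true] at H
  obtain ⟨⟨hbs, hvalid⟩, hall⟩ := H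
  have hcand := hall _ (F.natAbs_mem_candidates hU₁ hU hk₁ hk hm hbs hvalid)
  rw [force_eq, List.all_eq_true] at hcand
  have hz := hcand (g.coeff 0) (by simpa using Int.natAbs_eq (g.coeff 0))
  rw [Bool.or_eq_true, decide_eq_true_eq, List.any_eq_true] at hz
  exact hz.imp_right fun ⟨q, hq, hexcl⟩ => ⟨q, hq, F.ok_of_residueExcludes hk₁ hexcl⟩

end ModelFactorization

/-! ### Factors of degree at least three -/

theorem prime_of_mem_two_cons {S : List ℕ} (hS : S.Sublist smallPrimes) :
    ∀ p ∈ 2 :: S, p.Prime :=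
  List.forall_mem_cons.2 ⟨Nat.prime_two, fun _ hp => prime_of_mem_smallPrimes (hS.subset hp)⟩

/-- Checks `smoothCheck` for all sets of at most `m` bad primes. -/
def fewPrimesCheck (U k m : ℕ) (ex : List ℕ) : Bool :=
  ((badPrimes U k).sublists.filter fun S => Nat.ble S.length m).all fun S => smoothCheck U k S ex

theorem smoothCheck_badPrimes : ((List.range 17).all fun u => (List.range 14).all fun i =>
    (Nat.beq u 16 && Nat.beq i 0) || (Nat.beq u 11 && Nat.beq i 1) ||
      smoothCheck (u + 2) (i + 3) (badPrimes (u + 2) (i + 3)) []) = true := by decide +kernel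

set_option maxRecDepth 10000 in
theorem fewPrimesCheck_eighteen_three : fewPrimesCheck 18 3 4 [] = true := by decide +kernel

set_option maxRecDepth 10000 in
theorem fewPrimesCheck_thirteen_four : fewPrimesCheck 13 4 5 [] = true := by decide +kernel

theorem constantCheck_eighteen_three : constantCheck 18 3 5
    [⟨3, 3, 1, 1⟩, ⟨5, 1, 1, 2⟩, ⟨11, 1, 1, 3⟩, ⟨29, 1, 1, 2⟩, ⟨31, 1, 1, 2⟩] [7, 13, 17] []
    (fun _ _ => false) = true := by decide +kernel

theorem constantCheck_thirteen_four : constantCheck 13 4 6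
    [⟨3, 2, 2, 3⟩, ⟨5, 1, 1, 3⟩, ⟨7, 1, 1, 3⟩, ⟨17, 1, 1, 3⟩, ⟨19, 1, 1, 3⟩, ⟨23, 1, 1, 4⟩] [11] []
    (fun _ _ => false) = true := by decide +kernel

theorem edgeExcluded_seventeen : (edgeExcluded 18 34 17 && edgeExcluded 18 35 17 &&
    edgeExcluded 17 34 17) = true := by decide +kernel

namespace ModelFactorization

variable {U n k : ℕ} {g h : ℤ[X]}

theorem mem_of_smoothCheck_badPrimes {ex : List ℕ} (F : ModelFactorization (-U) n k g h)
    (hU₁ : 2 ≤ U) (hU : U ≤ 18) (hk₁ : 1 ≤ k) (hk : k ≤ 16) (hkn : 2 * k ≤ n)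
    (H : smoothCheck U k (badPrimes U k) ex = true) : n ∈ ex := by
  refine F.mem_of_smoothCheck (by omega) hU hk₁ hk hkn
    (nodup_two_cons_smallPrimes.sublist ((badPrimes_sublist U k).cons_cons 2))
    (prime_of_mem_two_cons (badPrimes_sublist U k)) (fun p hp hdvd => ?_) H
  have hp : Fact p.Prime := ⟨hp⟩
  exact F.mem_badPrimes hU₁ hU hk₁ hk hdvd

theorem mem_or_lt_countP_of_fewPrimesCheck {m : ℕ} {ex : List ℕ}
    (F : ModelFactorization (-U) n k g h) (hU₁ : 2 ≤ U) (hU : U ≤ 18) (hk₁ : 1 ≤ k) (hk : k ≤ 16)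
    (hkn : 2 * k ≤ n) (H : fewPrimesCheck U k m ex = true) :
    n ∈ ex ∨ m < (badPrimes U k).countP (· ∣ (g.coeff 0).natAbs) := by
  refine or_iff_not_imp_right.2 fun hm => ?_
  rw [not_lt, List.countP_eq_length_filter] at hm
  have hsub : ((badPrimes U k).filter (· ∣ (g.coeff 0).natAbs)).Sublist (badPrimes U k) :=
    List.filter_sublist
  have hsub' := hsub.trans (badPrimes_sublist U k)
  refine F.mem_of_smoothCheck (by omega) hU hk₁ hk hkn
    (nodup_two_cons_smallPrimes.sublist (hsub'.cons_cons 2)) (prime_of_mem_two_cons hsub')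
    (fun p hp hdvd => ?_) (List.all_eq_true.1 H _ (List.mem_filter.2
      ⟨List.mem_sublists.2 hsub, Nat.ble_eq_true_of_le hm⟩))
  have hp : Fact p.Prime := ⟨hp⟩
  exact List.mem_filter.2 ⟨F.mem_badPrimes hU₁ hU hk₁ hk hdvd,
    decide_eq_true (Int.natCast_dvd.1 hdvd)⟩

theorem false_of_constantCheck {m : ℕ} {bs : List ValBound} {qs : List ℕ}
    (F : ModelFactorization (-U) n k g h) (hU₁ : 2 ≤ U) (hU : U ≤ 18) (hk₁ : 1 ≤ k) (hk : k ≤ 16)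
    (hkn : 2 * k ≤ n) (H : fewPrimesCheck U k m [] = true)
    (H' : constantCheck U k (m + 1) bs qs [] (fun _ _ => false) = true) : False := by
  have hm := (F.mem_or_lt_countP_of_fewPrimesCheck hU₁ hU hk₁ hk hkn H).resolve_left
    List.not_mem_nil
  obtain hmem | ⟨_, _, hfalse⟩ := F.of_constantCheck hU₁ hU hk₁ hk hm H'
  · exact List.not_mem_nil hmem
  · cases hfalse

theorem degree_notMem_Icc (F : ModelFactorization (-U) n k g h) (hU₁ : 2 ≤ U) (hU : U ≤ 18)
    (hkn : 2 * k ≤ n) : k ∉ Set.Icc 3 16 := by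
  rintro ⟨hk₁, hk⟩
  obtain ⟨u, rfl⟩ := Nat.exists_eq_add_of_le' hU₁
  obtain ⟨i, rfl⟩ := Nat.exists_eq_add_of_le' hk₁
  have H := List.all_eq_true.1 (List.all_eq_true.1 smoothCheck_badPrimes u
    (List.mem_range.2 (by omega))) i (List.mem_range.2 (by omega))
  simp only [Bool.or_eq_true, Bool.and_eq_true, Nat.beq_eq] at H
  obtain (⟨rfl, rfl⟩ | ⟨rfl, rfl⟩) | H := H
  · exact F.false_of_constantCheck hU₁ hU (by omega) hk hkn fewPrimesCheck_eighteen_three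
      constantCheck_eighteen_three
  · exact F.false_of_constantCheck hU₁ hU (by omega) hk hkn fewPrimesCheck_thirteen_four
      constantCheck_thirteen_four
  · exact List.not_mem_nil (F.mem_of_smoothCheck_badPrimes hU₁ hU (by omega) hk hkn H)

theorem degree_lt_seventeen (F : ModelFactorization (-U) n k g h) (hU₁ : 2 ≤ U) (hU : U ≤ 18)
    (hkn : 2 * k ≤ n) : k < 17 := by
  by_contra! hk
  obtain ⟨c, hc⟩ : ∃ c : ℕ, c + 2 * k + 2 * U = 2 * n + 3 :=
    ⟨2 * n + 3 - 2 * k - 2 * U, by omega⟩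
  by_cases hex : k = 17 ∧ c ≤ 3
  · obtain ⟨rfl, hc₃⟩ := hex
    have H := edgeExcluded_seventeen
    simp only [Bool.and_eq_true] at H
    have hUn : (U = 18 ∧ n = 34) ∨ (U = 18 ∧ n = 35) ∨ (U = 17 ∧ n = 34) := by omega
    obtain ⟨rfl, rfl⟩ | ⟨rfl, rfl⟩ | ⟨rfl, rfl⟩ := hUn <;> simp [F.not_edgeExcluded] at H
  · obtain ⟨i, hi, p, hp, hkp, hdvd⟩ := exists_large_prime_dvd_window hk
      (Nat.odd_iff.2 (by omega)) (by omega) (by omega : k = 17 → 3 < c)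
    have : Fact p.Prime := ⟨hp⟩
    have hodd : Odd p := hp.odd_of_ne_two (by omega)
    have hterm : oddTerm (-U) (n - (k - 1 - i)) = (c + 2 * i : ℕ) := by
      rw [oddTerm]
      omega
    exact F.not_dvd_of_large hodd (by omega) (by omega) (by omega) (by omega)
      (F.dvd_of_dvd_term hodd (by omega : k - 1 - i < k)
        (Or.inr (hterm ▸ Int.natCast_dvd_natCast.2 hdvd)))

end ModelFactorization

/-! ### Factors of degree one -/

theorem eval_model_recurrence (u : ℤ) (n : ℕ) (x : ℤ) : (model u (n + 2)).eval x =
    (4 * (n + 2) - 1 + 2 * u + x) * (model u (n + 1)).eval x -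
      2 * (n + 1) * oddTerm u (n + 1) * (model u n).eval x := by
  rw [model_recurrence]
  simp only [eval_sub, eval_mul, eval_add, eval_C, eval_X]

theorem eval_model_growth {U : ℕ} (hU : 2 ≤ U) (n : ℕ) :
    0 ≤ (model (-U) (n + 1)).eval (2 * U - 3 : ℤ) ∧
    0 < (model (-U) (n + 2)).eval (2 * U - 3 : ℤ) ∧
    oddTerm (-U) (n + 2) * (model (-U) (n + 1)).eval (2 * U - 3 : ℤ) ≤
      (model (-U) (n + 2)).eval (2 * U - 3 : ℤ) := by
  induction n with
  | zero =>
    have hone : (model (-U) 1).eval (2 * U - 3 : ℤ) = 0 := by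
      rw [model_one, eval_add, eval_C, eval_X, oddTerm]
      push_cast
      ring
    have htwo : (model (-U) 2).eval (2 * U - 3 : ℤ) = 2 * (2 * U - 3) := by
      rw [eval_model_recurrence (-U) 0, zero_add, hone, model_zero, eval_one, oddTerm]
      push_cast
      ring
    rw [zero_add, zero_add, hone, htwo, mul_zero]
    exact ⟨le_rfl, by linarith, by linarith⟩
  | succ n ih =>
    obtain ⟨-, hpos, hgrowth⟩ := ih
    have hstep : 2 * (n + 2) * (model (-U) (n + 2)).eval (2 * U - 3 : ℤ) ≤
        (model (-U) (n + 3)).eval (2 * U - 3 : ℤ) := by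
      rw [eval_model_recurrence (-U) (n + 1)]
      push_cast
      linarith [mul_le_mul_of_nonneg_left hgrowth (by positivity : (0 : ℤ) ≤ 2 * (n + 2))]
    refine ⟨hpos.le, hstep.trans_lt' (by positivity), hstep.trans' ?_⟩
    refine mul_le_mul_of_nonneg_right ?_ hpos.le
    rw [oddTerm]
    push_cast
    linarith

/-- For each `U` between `2` and `18`, bounds on the valuations of the constant coefficient of a
linear factor. -/
def linearBounds : List (List ValBound) := [
  [], [⟨3, 1, 1, 1⟩], [⟨5, 1, 1, 1⟩], [⟨7, 1, 1, 1⟩], [⟨3, 2, 1, 1⟩],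
  [⟨3, 1, 1, 1⟩, ⟨11, 1, 1, 1⟩], [⟨13, 1, 1, 1⟩], [⟨3, 1, 1, 1⟩, ⟨5, 1, 1, 1⟩], [⟨17, 1, 1, 1⟩],
  [⟨19, 1, 1, 1⟩], [⟨3, 1, 1, 1⟩, ⟨7, 1, 1, 1⟩], [⟨23, 1, 1, 1⟩], [⟨5, 2, 1, 1⟩],
  [⟨3, 3, 1, 1⟩, ⟨5, 1, 1, 1⟩], [⟨3, 1, 3, 2⟩, ⟨29, 1, 1, 1⟩], [⟨3, 1, 1, 1⟩, ⟨31, 1, 1, 1⟩],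
  [⟨3, 1, 1, 1⟩, ⟨11, 1, 1, 1⟩]]

theorem constantCheck_one : ((List.range 17).all fun u => constantCheck (u + 2) 1 0
    (linearBounds.getD u []) [3, 5, 7, 11, 13, 17, 19, 23, 29] [-(2 * u + 1)]
    fun _ _ => false) = true := by decide +kernel

theorem ModelFactorization.degree_ne_one {U n k : ℕ} {g h : ℤ[X]}
    (F : ModelFactorization (-U) n k g h) (hU₁ : 2 ≤ U) (hU : U ≤ 18) (hn : 2 ≤ n) : k ≠ 1 := by
  rintro rfl
  obtain ⟨u, rfl⟩ := Nat.exists_eq_add_of_le' hU₁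
  obtain ⟨m, rfl⟩ := Nat.exists_eq_add_of_le' hn
  have hcoeff : g.coeff 0 = -(2 * u + 1) := by
    obtain hmem | ⟨_, _, hfalse⟩ := F.of_constantCheck hU₁ hU le_rfl (by omega) (Nat.zero_le _)
      (List.all_eq_true.1 constantCheck_one u (List.mem_range.2 (by omega)))
    · exact List.mem_singleton.1 hmem
    · cases hfalse
  have hroot : g.eval (2 * (u + 2 : ℕ) - 3 : ℤ) = 0 := by
    rw [F.monic_left.eq_X_add_C F.natDegree_left, hcoeff, eval_add, eval_X, eval_C]
    push_cast
    ring
  have hpos := (eval_model_growth hU₁ m).2.1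
  rw [← F.mul_eq, eval_mul, hroot, zero_mul] at hpos
  exact lt_irrefl 0 hpos

/-! ### Factors of degree two -/

theorem pow_pow_eq_one_iff_even {R : Type*} [Monoid R] [HasDistribNeg R] (hne : (-1 : R) ≠ 1)
    {a : R} {e : ℕ} (ha : a ^ e = -1) (y : ℕ) : (a ^ y) ^ e = 1 ↔ Even y := by
  rw [pow_right_comm, ha, neg_one_pow_eq_one_iff_even hne]

theorem even_of_cast_eq_two {n q e : ℕ} (hne : (-1 : ZMod q) ≠ 1) (htwo : (2 : ZMod q) ^ e = -1)
    (hthree : (3 : ZMod q) ^ e = 1) (hn : n ≠ 0) (hmod : (n : ZMod q) = 2)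
    (hdvd : ∀ p, p.Prime → p ∣ n → p = 2 ∨ p = 3) : Even n := by
  by_contra hodd
  have hpow : n = 3 ^ n.primeFactorsList.length :=
    Nat.eq_prime_pow_of_unique_prime_dvd hn fun hp hpn => (hdvd _ hp hpn).resolve_left <| by
      rintro rfl
      exact hodd (even_iff_two_dvd.2 hpn)
  rw [hpow, Nat.cast_pow, Nat.cast_ofNat] at hmod
  rw [← hmod, pow_right_comm, hthree, one_pow] at htwo
  exact hne htwo.symm

theorem exists_eq_two_pow_of_cast_eq_two {n q e : ℕ} (hne : (-1 : ZMod q) ≠ 1)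
    (htwo : (2 : ZMod q) ^ e = -1) (hn : n ≠ 0) (hmod : (n : ZMod q) = 2) (hndvd : ¬ 3 ∣ n)
    (hdvd : ∀ p, p.Prime → p ∣ n → p = 2 ∨ p = 3) : ∃ b, n = 2 ^ (2 * b + 1) := by
  have hpow : n = 2 ^ n.primeFactorsList.length :=
    Nat.eq_prime_pow_of_unique_prime_dvd hn fun hp hpn => (hdvd _ hp hpn).resolve_right <| by
      rintro rfl
      exact hndvd hpn
  rw [hpow, Nat.cast_pow, Nat.cast_ofNat] at hmod
  have hodd : Odd n.primeFactorsList.length := by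
    rw [← Nat.not_even_iff_odd, ← pow_pow_eq_one_iff_even hne htwo, hmod, htwo]
    exact hne
  obtain ⟨b, hb⟩ := hodd
  exact ⟨b, hb ▸ hpow⟩

theorem exists_eq_sq_add_one_of_cast_eq_two {n s q e : ℕ} (hne : (-1 : ZMod q) ≠ 1)
    (hs : (s : ZMod q) ^ e = -1) (hn : 2 ≤ n) (hmod : (n : ZMod q) = 2)
    (hdvd : ∀ p, p.Prime → p ∣ n - 1 → p = s) : ∃ z, n = z ^ 2 + 1 := by
  have hpow : n - 1 = s ^ (n - 1).primeFactorsList.length :=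
    Nat.eq_prime_pow_of_unique_prime_dvd (by omega) fun hp hpn => hdvd _ hp hpn
  have hone : ((n - 1 : ℕ) : ZMod q) = 1 := by
    rw [Nat.cast_sub (by omega), hmod]
    norm_num
  have heven : Even (n - 1).primeFactorsList.length := by
    rw [← pow_pow_eq_one_iff_even hne hs, ← Nat.cast_pow, ← hpow, hone, one_pow]
  obtain ⟨y, hy⟩ := heven
  refine ⟨s ^ y, ?_⟩
  rw [← pow_mul, mul_two, ← hy, ← hpow]
  omega

theorem not_three_dvd_sq_add_one (z : ℕ) : ¬ 3 ∣ z ^ 2 + 1 := by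
  rw [← ZMod.natCast_eq_zero_iff]
  push_cast
  generalize (z : ZMod 3) = x
  revert x
  decide

theorem not_four_dvd_sq_add_one (z : ℕ) : ¬ 4 ∣ z ^ 2 + 1 := by
  rw [← ZMod.natCast_eq_zero_iff]
  push_cast
  generalize (z : ZMod 4) = x
  revert x
  decide

theorem two_pow_odd_mod_three (b : ℕ) : 2 ^ (2 * b + 1) % 3 = 2 := by
  rw [pow_succ, pow_mul, Nat.mul_mod, Nat.pow_mod]
  norm_num

theorem not_smooth_of_cast_eq_two {n s q e q' e' : ℕ} (hne : (-1 : ZMod q) ≠ 1)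
    (htwo : (2 : ZMod q) ^ e = -1) (hthree : (3 : ZMod q) ^ e = 1) (hne' : (-1 : ZMod q') ≠ 1)
    (hs : (s : ZMod q') ^ e' = -1) (hn : 4 ≤ n) (hmod : (n : ZMod q) = 2)
    (hmod' : (n : ZMod q') = 2) (hdvd : ∀ p, p.Prime → p ∣ n → p = 2 ∨ p = 3) :
    ¬ ∀ p, p.Prime → p ∣ n - 1 → p = 2 ∨ p = 3 ∨ p = s := by
  intro hdvd'
  have heven := even_iff_two_dvd.1
    (even_of_cast_eq_two hne htwo hthree (by omega) hmod hdvd)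
  have hsq (hthree : ¬ 3 ∣ n - 1) : ∃ z, n = z ^ 2 + 1 := by
    refine exists_eq_sq_add_one_of_cast_eq_two hne' hs (by omega) hmod' fun p hp hpn => ?_
    obtain rfl | rfl | hps := hdvd' p hp hpn
    · omega
    · exact absurd hpn hthree
    · exact hps
  by_cases h3 : 3 ∣ n
  · obtain ⟨z, rfl⟩ := hsq (by omega)
    exact not_three_dvd_sq_add_one z h3
  · obtain ⟨b, rfl⟩ := exists_eq_two_pow_of_cast_eq_two hne htwo (by omega) hmod h3 hdvd
    have hmod₃ := two_pow_odd_mod_three b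
    obtain ⟨z, hz⟩ := hsq (by omega)
    refine not_four_dvd_sq_add_one z (hz ▸ ?_)
    refine pow_dvd_pow 2 (m := 2) (by_contra fun hb => ?_)
    obtain rfl : b = 0 := by omega
    norm_num at hn

theorem dvd_choose_two {p n : ℕ} (hodd : Odd p) (hdvd : p ∣ n ∨ p ∣ n - 1) :
    p ∣ n.choose 2 := by
  have hmul : p ∣ 2 * n.choose 2 := by
    rw [Nat.choose_two_right, Nat.mul_div_cancel' n.even_mul_pred_self.two_dvd]
    exact hdvd.elim (·.mul_right _) (·.mul_left _)
  exact ((Nat.coprime_two_right.2 hodd).dvd_mul_left).1 hmul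

theorem ModelFactorization.not_dvd_of_dvd_or_dvd_sub_one {U n p : ℕ} [Fact p.Prime] {g h : ℤ[X]}
    (F : ModelFactorization (-U) n 2 g h) (hodd : Odd p) (hU₁ : 1 ≤ U) (hU : U ≤ 50)
    (H : linearBound U p 6 20 15 0 = true)
    (hdvd : p ∣ n ∨ p ∣ n - 1 ∧ termVal (-U) p 1 = 0) : ¬ (p : ℤ) ∣ g.coeff 0 := by
  refine F.not_dvd_of_mul_termVal_lt_add (by omega) fun j hj hjn => ?_
  have hbound := mul_termVal_add_lt_of_linearBound hodd hU₁ hU H hj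
  have hchoose : p ∣ n.choose j → 1 ≤ padicValNat p (n.choose j) :=
    one_le_padicValNat_of_dvd (Nat.choose_pos hjn).ne'
  obtain rfl | rfl | hj₃ : j = 1 ∨ j = 2 ∨ 3 ≤ j := by omega
  · obtain hn | ⟨-, hzero⟩ := hdvd
    · have := hchoose (n.choose_one_right.symm ▸ hn)
      omega
    · omega
  · have := hchoose (dvd_choose_two hodd (hdvd.imp_right And.left))
    omega
  · omega

/-- For each `U` between `2` and `18`, bounds on the valuations of the constant coefficient of a
quadratic factor. -/
def quadraticBounds : List (List ValBound) := [
  [⟨3, 1, 2, 3⟩], [⟨3, 1, 2, 3⟩], [⟨3, 1, 2, 3⟩, ⟨5, 1, 1, 2⟩],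
  [⟨3, 1, 2, 3⟩, ⟨5, 1, 1, 2⟩, ⟨7, 1, 1, 2⟩], [⟨3, 2, 2, 3⟩, ⟨7, 1, 1, 2⟩],
  [⟨3, 2, 2, 3⟩, ⟨11, 1, 1, 2⟩], [⟨3, 1, 2, 3⟩, ⟨11, 1, 1, 2⟩, ⟨13, 1, 1, 2⟩],
  [⟨3, 1, 2, 3⟩, ⟨5, 1, 1, 2⟩, ⟨13, 1, 1, 2⟩], [⟨3, 1, 2, 3⟩, ⟨5, 1, 1, 2⟩, ⟨17, 1, 1, 2⟩],
  [⟨3, 1, 2, 3⟩, ⟨17, 1, 1, 2⟩, ⟨19, 1, 1, 2⟩], [⟨3, 1, 2, 3⟩, ⟨7, 1, 1, 2⟩, ⟨19, 1, 1, 2⟩],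
  [⟨3, 1, 2, 3⟩, ⟨7, 1, 1, 2⟩, ⟨23, 1, 1, 2⟩], [⟨3, 1, 2, 3⟩, ⟨5, 2, 1, 2⟩, ⟨23, 1, 1, 2⟩],
  [⟨3, 3, 2, 3⟩, ⟨5, 2, 1, 1⟩], [⟨3, 3, 1, 1⟩, ⟨5, 1, 1, 2⟩, ⟨29, 1, 1, 2⟩],
  [⟨3, 2, 1, 1⟩, ⟨5, 1, 1, 2⟩, ⟨29, 1, 1, 2⟩, ⟨31, 1, 1, 2⟩],
  [⟨3, 2, 1, 1⟩, ⟨11, 1, 1, 2⟩, ⟨31, 1, 1, 2⟩]]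

/-- The pairs `(U, n)` for which `smoothCheck` does not exclude a quadratic factor of `model (-U) n`
with at most two bad primes dividing its constant coefficient. -/
def quadraticExceptions : List (ℕ × ℕ) := [(15, 16), (16, 16), (17, 4), (17, 16)]

theorem fewPrimesCheck_two : ((List.range 17).all fun u => fewPrimesCheck (u + 2) 2 2
    ((quadraticExceptions.filter fun t => Nat.beq t.1 (u + 2)).map Prod.snd)) = true := by
  decide +kernel

theorem constantCheck_quadraticExceptions : (quadraticExceptions.all fun t =>
    constantCheck t.1 2 0 (quadraticBounds.getD (t.1 - 2) []) [7, 11, 13] []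
      fun q r => !Nat.beq r (t.2 % q)) = true := by decide +kernel

/-- A certificate that `model (-U) n` has no quadratic factor with constant coefficient
`3 * s * t`. By Newton polygons `s` does not divide `n` and `t` does not divide `n * (n - 1)`,
so that `2` and `3` are the only primes dividing `n`, and `2`, `3` and `s` the only ones dividing
`n - 1`. Reduction modulo `q` and `q'` shows that `n` is congruent to `2` modulo both, which the
orders of `2` and `3` modulo `q` and of `s` modulo `q'` contradict. -/
structure QuadraticCert where
  /-- Minus the parameter of the model. -/
  U : ℕ
  /-- The prime that may divide `n - 1`. -/
  s : ℕ
  /-- The prime dividing neither `n` nor `n - 1`. -/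
  t : ℕ
  /-- The modulus for the powers of `2` and `3`. -/
  q : ℕ
  /-- The exponent with `2 ^ e = -1` and `3 ^ e = 1` modulo `q`. -/
  e : ℕ
  /-- The modulus for the powers of `s`. -/
  q' : ℕ
  /-- The exponent with `s ^ e' = -1` modulo `q'`. -/
  e' : ℕ

/-- Checks the conditions described at `QuadraticCert`; slope `6 / 20` suits all certificates. -/
def QuadraticCert.isValid (C : QuadraticCert) : Bool :=
  [C.s, C.t].all (fun p => decide (p ∈ smallPrimes) && linearBound C.U p 6 20 15 0) &&
  Nat.beq (evalTermVal C.U C.t 1) 0 &&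
  [C.q, C.q'].all (fun q => residueExcludes C.U 2 (3 * C.s * C.t : ℕ) q fun r => Nat.beq r 2) &&
  decide ((-1 : ZMod C.q) ≠ 1 ∧ (2 : ZMod C.q) ^ C.e = -1 ∧ (3 : ZMod C.q) ^ C.e = 1 ∧
    (-1 : ZMod C.q') ≠ 1 ∧ (C.s : ZMod C.q') ^ C.e' = -1)

namespace ModelFactorization

variable {U n k : ℕ} {g h : ℤ[X]}

theorem eq_two_or_dvd_of_dvd_sub (F : ModelFactorization (-U) n k g h) {p l : ℕ} (hp : p.Prime)
    (hl : l < k) (hdvd : p ∣ n - l) : p = 2 ∨ (p : ℤ) ∣ g.coeff 0 :=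
  have : Fact p.Prime := ⟨hp⟩
  hp.eq_two_or_odd'.imp_right fun hodd => F.dvd_of_dvd_term hodd hl (Or.inl hdvd)

theorem cast_eq_two_of_residueExcludes (F : ModelFactorization (-U) n k g h) (hk : 1 ≤ k) {q : ℕ}
    (H : residueExcludes U k (g.coeff 0) q (fun r => Nat.beq r 2) = true) : (n : ZMod q) = 2 := by
  have hmod := F.ok_of_residueExcludes hk H
  rw [Nat.beq_eq] at hmod
  rw [← ZMod.natCast_mod, hmod, Nat.cast_ofNat]

theorem not_isValid {C : QuadraticCert} (F : ModelFactorization (-C.U) n 2 g h) (hU₁ : 1 ≤ C.U)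
    (hU : C.U ≤ 50) (hn : 4 ≤ n) (hcoeff : g.coeff 0 = (3 * C.s * C.t : ℕ)) :
    ¬ C.isValid = true := by
  intro H
  simp only [QuadraticCert.isValid, List.all_cons, List.all_nil, Bool.and_true, Bool.and_eq_true,
    decide_eq_true_eq, Nat.beq_eq, ← hcoeff] at H
  obtain ⟨⟨⟨⟨⟨hs, hsbound⟩, ht, htbound⟩, hzero⟩, hq, hq'⟩, hne, htwo, hthree, hne', hpow⟩ := H
  have hsprime : Fact C.s.Prime := ⟨prime_of_mem_smallPrimes hs⟩
  have htprime : Fact C.t.Prime := ⟨prime_of_mem_smallPrimes ht⟩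
  rw [evalTermVal_eq C.t hU (by omega)] at hzero
  have hsn (hdvd : C.s ∣ n) : False :=
    F.not_dvd_of_dvd_or_dvd_sub_one (odd_of_mem_smallPrimes hs) hU₁ hU hsbound (Or.inl hdvd)
      (hcoeff ▸ Int.natCast_dvd_natCast.2 ((dvd_mul_left _ _).mul_right _))
  have htn (hdvd : C.t ∣ n ∨ C.t ∣ n - 1) : False :=
    F.not_dvd_of_dvd_or_dvd_sub_one (odd_of_mem_smallPrimes ht) hU₁ hU htbound
      (hdvd.imp_right fun hdvd => ⟨hdvd, hzero⟩)
      (hcoeff ▸ Int.natCast_dvd_natCast.2 (dvd_mul_left _ _))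
  have hdvd {p l : ℕ} (hp : p.Prime) (hl : l < 2) (hpn : p ∣ n - l) :
      p = 2 ∨ (p = 3 ∨ p = C.s) ∨ p = C.t := by
    have := F.eq_two_or_dvd_of_dvd_sub hp hl hpn
    rwa [hcoeff, Int.natCast_dvd_natCast, hp.dvd_mul, hp.dvd_mul,
      Nat.prime_dvd_prime_iff_eq hp Nat.prime_three, Nat.prime_dvd_prime_iff_eq hp hsprime.out,
      Nat.prime_dvd_prime_iff_eq hp htprime.out] at this
  refine not_smooth_of_cast_eq_two hne htwo hthree hne' hpow hn
    (F.cast_eq_two_of_residueExcludes (by omega) hq)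
    (F.cast_eq_two_of_residueExcludes (by omega) hq') (fun p hp hpn => ?_) fun p hp hpn => ?_
  · obtain htwo | (hthree | rfl) | rfl := hdvd (l := 0) hp (by omega) hpn
    exacts [Or.inl htwo, Or.inr hthree, (hsn hpn).elim, (htn (Or.inl hpn)).elim]
  · obtain htwo | hpst | rfl := hdvd (l := 1) hp (by omega) hpn
    exacts [Or.inl htwo, Or.inr hpst, (htn (Or.inr hpn)).elim]

end ModelFactorization

/-- The certificates for all constant coefficients of quadratic factors that survive
`constantCheck`. -/
def quadraticCerts : List QuadraticCert := [⟨9, 5, 13, 11, 5, 7, 3⟩, ⟨10, 17, 5, 11, 5, 11, 5⟩,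
  ⟨12, 7, 19, 11, 5, 11, 5⟩, ⟨13, 23, 7, 11, 5, 5, 2⟩, ⟨18, 11, 31, 13, 6, 13, 6⟩]

theorem isValid_quadraticCerts : (quadraticCerts.all QuadraticCert.isValid) = true := by
  decide +kernel

theorem constantCheck_two : ((List.range 17).all fun u => constantCheck (u + 2) 2 3
    (quadraticBounds.getD u []) [3, 5, 7, 11, 13, 17, 19]
    ((quadraticCerts.filter fun C => Nat.beq C.U (u + 2)).map fun C => (3 * C.s * C.t : ℕ))
    fun _ _ => false) = true := by decide +kernel

namespace ModelFactorization

variable {U n : ℕ} {g h : ℤ[X]}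

theorem notMem_quadraticExceptions (F : ModelFactorization (-U) n 2 g h) (hU₁ : 2 ≤ U)
    (hU : U ≤ 18) : (U, n) ∉ quadraticExceptions := by
  intro hmem
  have H := List.all_eq_true.1 constantCheck_quadraticExceptions _ hmem
  obtain hnil | ⟨q, -, hq⟩ := F.of_constantCheck hU₁ hU (by omega) (by omega) (Nat.zero_le _) H
  · exact List.not_mem_nil hnil
  · rw [Nat.beq_refl] at hq
    cases hq

theorem two_lt_countP_badPrimes (F : ModelFactorization (-U) n 2 g h) (hU₁ : 2 ≤ U)
    (hU : U ≤ 18) (hn : 4 ≤ n) : 2 < (badPrimes U 2).countP (· ∣ (g.coeff 0).natAbs) := by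
  have H := List.all_eq_true.1 fewPrimesCheck_two (U - 2) (List.mem_range.2 (by omega))
  rw [Nat.sub_add_cancel hU₁] at H
  refine (F.mem_or_lt_countP_of_fewPrimesCheck hU₁ hU (by omega) (by omega) hn H).resolve_left
    fun hmem => ?_
  obtain ⟨⟨V, m⟩, ht, rfl⟩ := List.mem_map.1 hmem
  obtain ⟨hVm, hV⟩ := List.mem_filter.1 ht
  obtain rfl : V = U := Nat.eq_of_beq_eq_true hV
  exact F.notMem_quadraticExceptions hU₁ hU hVm

theorem degree_ne_two {k : ℕ} (F : ModelFactorization (-U) n k g h) (hU₁ : 2 ≤ U) (hU : U ≤ 18)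
    (hkn : 2 * k ≤ n) : k ≠ 2 := by
  rintro rfl
  have H := List.all_eq_true.1 constantCheck_two (U - 2) (List.mem_range.2 (by omega))
  rw [Nat.sub_add_cancel hU₁] at H
  obtain hmem | ⟨_, _, hfalse⟩ := F.of_constantCheck hU₁ hU (by omega) (by omega)
    (F.two_lt_countP_badPrimes hU₁ hU hkn) H
  · obtain ⟨C, hCmem, hcoeff⟩ := List.mem_map.1 hmem
    obtain ⟨hC, hCU⟩ := List.mem_filter.1 hCmem
    obtain rfl : C.U = U := Nat.eq_of_beq_eq_true hCU
    exact F.not_isValid (by omega) (by omega) hkn hcoeff.symm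
      (List.all_eq_true.1 isValid_quadraticCerts C hC)
  · cases hfalse

end ModelFactorization

/-- For every integer `-18 ≤ u ≤ -2` and every `n ≥ 1`, the generalised Laguerre polynomial
`L_n^{(u+1/2)}(x)` is irreducible over `ℚ`. -/
theorem laguerre_irreducible (u : ℤ) (hu1 : -18 ≤ u) (hu2 : u ≤ -2) (n : ℕ) (hn : 1 ≤ n) :
    Irreducible (laguerre n u) := by
  obtain ⟨U, rfl⟩ : ∃ U : ℕ, u = -U := ⟨u.natAbs, by omega⟩
  have hU₁ : 2 ≤ U := by omega
  have hU : U ≤ 18 := by omega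
  refine laguerre_irreducible_of_model
    (irreducible_model_of_forall_not_factorization hn fun k g h hk hkn F => ?_)
  have hlt : k < 17 := F.degree_lt_seventeen hU₁ hU hkn
  have hmem : k ∉ Set.Icc 3 16 := F.degree_notMem_Icc hU₁ hU hkn
  have hone : k ≠ 1 := F.degree_ne_one hU₁ hU (by omega)
  have htwo : k ≠ 2 := F.degree_ne_two hU₁ hU hkn
  rw [Set.mem_Icc] at hmem
  omega
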